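/- arXiv:math/0702156 — 5 statements merged into one kernel-verified Lean document; each statement's English description precedes it below -/
import Mathlib

section
/- Let p ≥ 7 be an odd integer and let b be a real number with 0 < b < b₀. Suppose u is real-analytic on a neighborhood of ρ = 1 and satisfies the self-similar profile equation (1−ρ²)u''(ρ) + (2/ρ − (2+2α)ρ)u'(ρ) − α(α+1)u(ρ) + u(ρ)^p = 0 there (for ρ ≠ 1), with u(1) = b. Then u extends to a solution of the equation defined for all ρ ≥ 1, and this extension satisfies 0 < u(ρ) < b₀ for every ρ > 1. -/
open Set Real Filter

/-- The exponent `α = 2/(p-1)`. -/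
noncomputable def alphaP (p : ℕ) : ℝ := 2 / ((p : ℝ) - 1)

/-- `b₀ = (2(p+1)/(p-1)²)^(1/(p-1))`, the constant solution. -/
noncomputable def bZero (p : ℕ) : ℝ :=
  (2 * ((p : ℝ) + 1) / ((p : ℝ) - 1) ^ 2) ^ ((1 : ℝ) / ((p : ℝ) - 1))

/-- `b∞ = (2(p-3)/(p-1)²)^(1/(p-1))`. -/
noncomputable def bInfty (p : ℕ) : ℝ :=
  (2 * ((p : ℝ) - 3) / ((p : ℝ) - 1) ^ 2) ^ ((1 : ℝ) / ((p : ℝ) - 1))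

/-- The singular static solution `u∞(ρ) = b∞ ρ^(-α)`. -/
noncomputable def uInfty (p : ℕ) (ρ : ℝ) : ℝ := bInfty p * ρ ^ (-(alphaP p))

/-- The self-similar profile equation
`(1-ρ²)u'' + (2/ρ - (2+2α)ρ)u' - α(α+1)u + u^p = 0` at the point `ρ`. -/
def ProfileEq (p : ℕ) (u : ℝ → ℝ) (ρ : ℝ) : Prop :=
  (1 - ρ ^ 2) * deriv (deriv u) ρ + (2 / ρ - (2 + 2 * alphaP p) * ρ) * deriv u ρ
    - alphaP p * (alphaP p + 1) * u ρ + u ρ ^ p = 0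

lemma global_ode {E : Type*} [NormedAddCommGroup E] [NormedSpace ℝ E] [CompleteSpace E]
    (F : ℝ → E → E) (a t0 : ℝ) (hat : a < t0)
    (hcont : ∀ x, ContinuousOn (fun t => F t x) (Ici a))
    (hbd : ∀ T, ∃ L : NNReal, ∀ t ∈ Icc a T, ∀ x, ‖F t x‖ ≤ L)
    (hlip : ∀ T, ∃ K : NNReal, ∀ t ∈ Icc a T, LipschitzWith K (F t)) (x0 : E) :
    ∃ X : ℝ → E, X t0 = x0 ∧ ∀ t, a < t → HasDerivAt X (F t (X t)) t := by
  have key : ∀ n : ℕ, ∃ X : ℝ → E, X t0 = x0 ∧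
      ∀ t ∈ Ioo a (t0 + n + 1), HasDerivAt X (F t (X t)) t := by
    intro n
    obtain ⟨L, hL⟩ := hbd (t0 + n + 1)
    obtain ⟨K, hK⟩ := hlip (t0 + n + 1)
    have hn : (0 : ℝ) ≤ n := Nat.cast_nonneg n
    have hmem : t0 ∈ Icc a (t0 + n + 1) := ⟨hat.le, by linarith⟩
    have hpl : IsPicardLindelof F (⟨t0, hmem⟩ : Icc a (t0 + n + 1)) x0
        (L * (max (t0 + n + 1 - t0) (t0 - a)).toNNReal) 0 L K := by
      refine ⟨fun t ht => (hK t ht).lipschitzOnWith,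
        fun x _ => (hcont x).mono Icc_subset_Ici_self, fun t ht x _ => hL t ht x, ?_⟩
      simp only [NNReal.coe_mul, NNReal.coe_zero, sub_zero]
      gcongr
      exact Real.le_coe_toNNReal _
    obtain ⟨X, hX0, hX⟩ := hpl.exists_eq_forall_mem_Icc_hasDerivWithinAt₀
    refine ⟨X, hX0, fun t ht => (hX t ⟨ht.1.le, ht.2.le⟩).hasDerivAt (Icc_mem_nhds ht.1 ht.2)⟩
  choose X hX0 hX using key
  have uniq : ∀ m n : ℕ, m ≤ n → EqOn (X m) (X n) (Ioo a (t0 + m + 1)) := by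
    intro m n hmn
    obtain ⟨K, hK⟩ := hlip (t0 + m + 1)
    have hm : (0 : ℝ) ≤ m := Nat.cast_nonneg m
    have hmn' : (m : ℝ) ≤ n := by exact_mod_cast hmn
    refine ODE_solution_unique_of_mem_Ioo (v := F) (s := fun _ => univ) (t₀ := t0) (K := K)
      (fun t ht => (hK t ⟨ht.1.le, ht.2.le⟩).lipschitzOnWith) ⟨hat, by linarith⟩
      (fun t ht => ⟨hX m t ht, mem_univ _⟩)
      (fun t ht => ⟨hX n t ⟨ht.1, by linarith [ht.2]⟩, mem_univ _⟩) (by rw [hX0, hX0])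
  let N : ℝ → ℕ := fun t => ⌈t - t0⌉₊
  have hN : ∀ t, t ≤ t0 + N t := fun t => by
    have := Nat.le_ceil (t - t0); simp only [N]; linarith
  refine ⟨fun t => X (N t) t, hX0 _, fun t ht => ?_⟩
  have hb : t < t0 + (N t : ℝ) + 1 := by linarith [hN t]
  have hev : (fun s => X (N s) s) =ᶠ[nhds t] X (N t) := by
    filter_upwards [Ioo_mem_nhds ht hb] with s hs
    rcases le_total (N s) (N t) with h | h
    · exact uniq _ _ h ⟨hs.1, by linarith [hN s]⟩
    · exact (uniq _ _ h ⟨hs.1, hs.2⟩).symm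
  exact (hX (N t) t ⟨ht, hb⟩).congr_of_eventuallyEq hev

def fieldF (P Q h g : ℝ → ℝ) (t : ℝ) (x : ℝ × ℝ) : ℝ × ℝ :=
  (h x.2, P t * h x.2 + Q t * g x.1)

lemma fieldF_lip (P Q h g : ℝ → ℝ) (a : ℝ) (hP : ContinuousOn P (Ici a))
    (hQ : ContinuousOn Q (Ici a)) (Kh Kg : ℝ)
    (hh : ∀ x y, |h x - h y| ≤ Kh * |x - y|) (hg : ∀ x y, |g x - g y| ≤ Kg * |x - y|) (T : ℝ) :
    ∃ K : NNReal, ∀ t ∈ Icc a T, LipschitzWith K (fieldF P Q h g t) := by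
  obtain ⟨MP, hMP⟩ := isCompact_Icc.exists_bound_of_continuousOn
    (hP.mono (Icc_subset_Ici_self : Icc a T ⊆ Ici a))
  obtain ⟨MQ, hMQ⟩ := isCompact_Icc.exists_bound_of_continuousOn
    (hQ.mono (Icc_subset_Ici_self : Icc a T ⊆ Ici a))
  have hKh : 0 ≤ Kh := by
    have := hh 1 0; simp at this; exact (abs_nonneg _).trans this
  have hKg : 0 ≤ Kg := by
    have := hg 1 0; simp at this; exact (abs_nonneg _).trans this
  refine ⟨(Kh + |MP| * Kh + |MQ| * Kg).toNNReal, fun t ht => ?_⟩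
  apply LipschitzWith.of_dist_le_mul
  intro x y
  have h0 : 0 ≤ Kh + |MP| * Kh + |MQ| * Kg := by positivity
  rw [Real.coe_toNNReal _ h0]
  have h1 : |x.1 - y.1| ≤ dist x y := by
    rw [← Real.dist_eq]; exact le_max_left _ _
  have h2 : |x.2 - y.2| ≤ dist x y := by
    rw [← Real.dist_eq]; exact le_max_right _ _
  have hd : 0 ≤ dist x y := dist_nonneg
  have e1 : |h x.2 - h y.2| ≤ Kh * dist x y := (hh _ _).trans (by gcongr)
  have e2 : |g x.1 - g y.1| ≤ Kg * dist x y := (hg _ _).trans (by gcongr)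
  have p1 : |P t| ≤ |MP| := (hMP t ht).trans (le_abs_self _)
  have p2 : |Q t| ≤ |MQ| := (hMQ t ht).trans (le_abs_self _)
  rw [Prod.dist_eq]
  refine max_le ?_ ?_
  · rw [Real.dist_eq]
    refine e1.trans ?_
    have : 0 ≤ (|MP| * Kh + |MQ| * Kg) * dist x y := by positivity
    linarith
  · rw [Real.dist_eq]
    have : (fieldF P Q h g t x).2 - (fieldF P Q h g t y).2
      = P t * (h x.2 - h y.2) + Q t * (g x.1 - g y.1) := by simp only [fieldF]; ring
    rw [this]
    have q1 : |P t * (h x.2 - h y.2)| ≤ |MP| * (Kh * dist x y) := by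
      rw [abs_mul]; gcongr
    have q2 : |Q t * (g x.1 - g y.1)| ≤ |MQ| * (Kg * dist x y) := by
      rw [abs_mul]; gcongr
    have q3 := abs_add_le (P t * (h x.2 - h y.2)) (Q t * (g x.1 - g y.1))
    have : 0 ≤ Kh * dist x y := by positivity
    linarith

lemma fieldF_bd (P Q h g : ℝ → ℝ) (a : ℝ) (hP : ContinuousOn P (Ici a))
    (hQ : ContinuousOn Q (Ici a)) (Kh Kg : ℝ)
    (hh : ∀ x, |h x| ≤ Kh) (hg : ∀ x, |g x| ≤ Kg) (T : ℝ) :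
    ∃ L : NNReal, ∀ t ∈ Icc a T, ∀ x, ‖fieldF P Q h g t x‖ ≤ L := by
  obtain ⟨MP, hMP⟩ := isCompact_Icc.exists_bound_of_continuousOn
    (hP.mono (Icc_subset_Ici_self : Icc a T ⊆ Ici a))
  obtain ⟨MQ, hMQ⟩ := isCompact_Icc.exists_bound_of_continuousOn
    (hQ.mono (Icc_subset_Ici_self : Icc a T ⊆ Ici a))
  have hKh : 0 ≤ Kh := (abs_nonneg _).trans (hh 0)
  have hKg : 0 ≤ Kg := (abs_nonneg _).trans (hg 0)
  refine ⟨(Kh + |MP| * Kh + |MQ| * Kg).toNNReal, fun t ht x => ?_⟩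
  have h0 : 0 ≤ Kh + |MP| * Kh + |MQ| * Kg := by positivity
  rw [Real.coe_toNNReal _ h0]
  have p1 : |P t| ≤ |MP| := (hMP t ht).trans (le_abs_self _)
  have p2 : |Q t| ≤ |MQ| := (hMQ t ht).trans (le_abs_self _)
  have r1 : 0 ≤ |MP| * Kh := by positivity
  have r2 : 0 ≤ |MQ| * Kg := by positivity
  refine max_le ?_ ?_
  · have := hh x.2
    simp only [fieldF, Real.norm_eq_abs]
    linarith
  · simp only [fieldF, Real.norm_eq_abs]
    have q1 : |P t * h x.2| ≤ |MP| * Kh := by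
      rw [abs_mul]; gcongr; exact hh _
    have q2 : |Q t * g x.1| ≤ |MQ| * Kg := by
      rw [abs_mul]; gcongr; exact hg _
    have q3 := abs_add_le (P t * h x.2) (Q t * g x.1)
    linarith

def clampR (m M x : ℝ) : ℝ := max m (min M x)

lemma clampR_lip (m M x y : ℝ) : |clampR m M x - clampR m M y| ≤ 1 * |x - y| := by
  unfold clampR
  rw [one_mul]
  refine (abs_max_sub_max_le_max _ _ _ _).trans ?_
  refine max_le (by simp) ((abs_min_sub_min_le_max _ _ _ _).trans (max_le (by simp) le_rfl))

lemma clampR_mem (m M x : ℝ) (h : m ≤ M) : m ≤ clampR m M x ∧ clampR m M x ≤ M :=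
  ⟨le_max_left _ _, max_le h (min_le_left _ _)⟩

lemma clampR_eq (m M x : ℝ) (h : m ≤ x) (h' : x ≤ M) : clampR m M x = x := by
  unfold clampR; rw [min_eq_right h', max_eq_right h]

lemma g_bounds (p : ℕ) (c B : ℝ) (hB : 0 ≤ B) :
    (∀ x y, |(-c * clampR 0 B x + clampR 0 B x ^ p) - (-c * clampR 0 B y + clampR 0 B y ^ p)|
      ≤ (|c| + p * B ^ (p - 1)) * |x - y|) ∧
    (∀ x, |-c * clampR 0 B x + clampR 0 B x ^ p| ≤ |c| * B + B ^ p) := by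
  constructor
  · intro x y
    have hx := clampR_mem 0 B x hB
    have hy := clampR_mem 0 B y hB
    have hl := clampR_lip 0 B x y
    rw [one_mul] at hl
    set X := clampR 0 B x
    set Y := clampR 0 B y
    have e : (-c * X + X ^ p) - (-c * Y + Y ^ p) = -c * (X - Y) + (X ^ p - Y ^ p) := by ring
    rw [e]
    have h1 : |-c * (X - Y)| ≤ |c| * |x - y| := by
      rw [abs_mul, abs_neg]; gcongr
    have h2 : |X ^ p - Y ^ p| ≤ |x - y| * p * B ^ (p - 1) := by
      refine (abs_pow_sub_pow_le X Y p).trans ?_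
      gcongr
      rw [abs_of_nonneg hx.1, abs_of_nonneg hy.1]
      exact max_le hx.2 hy.2
    have := abs_add_le (-c * (X - Y)) (X ^ p - Y ^ p)
    linarith
  · intro x
    have hx := clampR_mem 0 B x hB
    set X := clampR 0 B x
    have h1 : |-c * X| ≤ |c| * B := by
      rw [abs_mul, abs_neg, abs_of_nonneg hx.1]; gcongr; exact hx.2
    have h2 : |X ^ p| ≤ B ^ p := by
      rw [abs_of_nonneg (pow_nonneg hx.1 _)]; exact pow_le_pow_left₀ hx.1 hx.2 _
    have := abs_add_le (-c * X) (X ^ p)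
    linarith

lemma left_deriv_nonneg (y : ℝ → ℝ) (d s t : ℝ) (hst : s < t) (hd : HasDerivAt y d t)
    (h0 : y t = 0) (hy : ∀ x ∈ Ioo s t, y x ≤ 0) : 0 ≤ d := by
  have h1 := (hasDerivWithinAt_iff_tendsto_slope' (s := Iio t) (by simp)).1
    (hd.hasDerivWithinAt (s := Iio t))
  refine ge_of_tendsto h1 ?_
  filter_upwards [Ioo_mem_nhdsLT hst] with x hx
  rw [slope_def_field, h0, sub_zero]
  exact div_nonneg_of_nonpos (hy x hx) (by linarith [hx.2])

lemma limit_le (y : ℝ → ℝ) (s t : ℝ) (hst : s < t) (hc : ContinuousWithinAt y (Icc s t) t)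
    (hy : ∀ x ∈ Ico s t, y x ≤ 0) : y t ≤ 0 := by
  have h1 : Tendsto y (nhdsWithin t (Iio t)) (nhds (y t)) := by
    have h2 : Tendsto y (nhdsWithin t (Ioo s t)) (nhds (y t)) := hc.mono Ioo_subset_Icc_self
    rwa [nhdsWithin_Ioo_eq_nhdsLT hst] at h2
  refine le_of_tendsto h1 ?_
  filter_upwards [Ioo_mem_nhdsLT hst] with x hx
  exact hy x ⟨hx.1.le, hx.2⟩

lemma pow_lt_aux (p : ℕ) (hp : 2 ≤ p) (c B x : ℝ) (hB : B ^ (p - 1) = c) (hx : 0 < x)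
    (hxB : x < B) : -c * x + x ^ p < 0 := by
  have h1 : x ^ (p - 1) < B ^ (p - 1) := pow_lt_pow_left₀ hxB hx.le (by omega)
  have h2 : x ^ p = x ^ (p - 1) * x := by
    rw [← pow_succ]; congr 1; omega
  rw [h2, hB.symm]
  nlinarith

lemma trap (p : ℕ) (hp : 2 ≤ p) (α B : ℝ) (hα : 0 < α) (hα1 : α < 1)
    (hB : B ^ (p - 1) = α * (α + 1)) (s T : ℝ) (hs : 1 ≤ s) (u y : ℝ → ℝ)
    (hcu : ContinuousOn u (Ico s T)) (hcy : ContinuousOn y (Ico s T))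
    (hode : ∀ t ∈ Ioo s T, 0 ≤ u t → u t ≤ B → -B ≤ y t → y t ≤ 0 →
      HasDerivAt u (y t) t ∧ HasDerivAt y ((2 / t - (2 + 2 * α) * t) / (t ^ 2 - 1) * y t
        + 1 / (t ^ 2 - 1) * (-(α * (α + 1)) * u t + u t ^ p)) t)
    (h1 : 0 < u s) (h2 : u s < B) (h3 : y s < 0) (h4 : 0 < u s + s * y s) :
    ∀ t ∈ Ico s T, 0 < u t ∧ u t < B ∧ y t < 0 ∧ 0 < u t + t * y t := by
  intro t1 ht1
  by_contra hcon
  let R : Set ℝ := {t | t ∈ Icc s t1 ∧ (u t ≤ 0 ∨ B ≤ u t ∨ 0 ≤ y t ∨ u t + t * y t ≤ 0)}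
  have hsub : Icc s t1 ⊆ Ico s T := fun x hx => ⟨hx.1, hx.2.trans_lt ht1.2⟩
  have cu := hcu.mono hsub
  have cy := hcy.mono hsub
  have cw : ContinuousOn (fun t => u t + t * y t) (Icc s t1) := cu.add (continuousOn_id.mul cy)
  have hRc : IsClosed R := by
    have e : R = (Icc s t1 ∩ u ⁻¹' Iic 0) ∪ (Icc s t1 ∩ u ⁻¹' Ici B) ∪ (Icc s t1 ∩ y ⁻¹' Ici 0)
      ∪ (Icc s t1 ∩ (fun t => u t + t * y t) ⁻¹' Iic 0) := by
      ext x
      simp only [R, mem_ofPred_eq, mem_union, mem_inter_iff, mem_preimage, mem_Iic, mem_Ici]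
      tauto
    rw [e]
    exact (((cu.preimage_isClosed_of_isClosed isClosed_Icc isClosed_Iic).union
      (cu.preimage_isClosed_of_isClosed isClosed_Icc isClosed_Ici)).union
      (cy.preimage_isClosed_of_isClosed isClosed_Icc isClosed_Ici)).union
      (cw.preimage_isClosed_of_isClosed isClosed_Icc isClosed_Iic)
  have hRk : IsCompact R := isCompact_Icc.of_isClosed_subset hRc (fun x hx => hx.1)
  have hRn : R.Nonempty := by
    refine ⟨t1, ⟨ht1.1, le_rfl⟩, ?_⟩
    by_contra h
    push Not at h
    exact hcon h
  obtain ⟨t, htR, htl⟩ := hRk.exists_isLeast hRn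
  have hgood : ∀ x ∈ Ico s t, 0 < u x ∧ u x < B ∧ y x < 0 ∧ 0 < u x + x * y x := by
    intro x hx
    by_contra h
    have : x ∈ R := by
      refine ⟨⟨hx.1, hx.2.le.trans htR.1.2⟩, ?_⟩
      by_contra h'
      push Not at h'
      exact h h'
    exact absurd (htl this) (not_le.2 hx.2)
  have hst : s < t := by
    rcases htR.1.1.lt_or_eq with h | h
    · exact h
    · exfalso
      subst h
      rcases htR.2 with h | h | h | h <;> linarith
  have hsub2 : Icc s t ⊆ Icc s t1 := Icc_subset_Icc_right htR.1.2
  have htm : t ∈ Icc s t := ⟨hst.le, le_rfl⟩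
  have cu2 := cu.mono hsub2
  have cy2 := cy.mono hsub2
  have cw2 := cw.mono hsub2
  have l3 : y t ≤ 0 := limit_le y s t hst (cy2 t htm) (fun x hx => (hgood x hx).2.2.1.le)
  have l4 : 0 ≤ u t + t * y t := by
    have := limit_le (fun x => -(u x + x * y x)) s t hst (cw2.neg t htm)
      (fun x hx => by linarith [(hgood x hx).2.2.2])
    linarith
  have hode' : ∀ x ∈ Ioo s t, HasDerivAt u (y x) x := by
    intro x hx
    have hg := hgood x ⟨hx.1.le, hx.2⟩
    refine (hode x ⟨hx.1, (hx.2.trans_le htR.1.2).trans ht1.2⟩ hg.1.le hg.2.1.le ?_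
      hg.2.2.1.le).1
    nlinarith [hg.1, hg.2.1, hg.2.2.1, hg.2.2.2, hx.1]
  have m1 : u t ≤ u s := by
    have : AntitoneOn u (Icc s t) := by
      apply antitoneOn_of_deriv_nonpos (convex_Icc _ _) cu2
      · intro x hx
        rw [interior_Icc] at hx
        exact (hode' x hx).differentiableAt.differentiableWithinAt
      · intro x hx
        rw [interior_Icc] at hx
        rw [(hode' x hx).deriv]
        exact (hgood x ⟨hx.1.le, hx.2⟩).2.2.1.le
    exact this ⟨le_rfl, hst.le⟩ htm hst.le
  have m2 : s * u s ≤ t * u t := by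
    have hd : ∀ x ∈ Ioo s t, HasDerivAt (fun x => x * u x) (1 * u x + x * y x) x :=
      fun x hx => (hasDerivAt_id x).mul (hode' x hx)
    have cm : ContinuousOn (fun x => x * u x) (Icc s t) := continuousOn_id.mul cu2
    have : MonotoneOn (fun x => x * u x) (Icc s t) := by
      apply monotoneOn_of_deriv_nonneg (convex_Icc _ _) cm
      · intro x hx
        rw [interior_Icc] at hx
        exact (hd x hx).differentiableAt.differentiableWithinAt
      · intro x hx
        rw [interior_Icc] at hx
        rw [(hd x hx).deriv]
        linarith [(hgood x ⟨hx.1.le, hx.2⟩).2.2.2]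
    exact this ⟨le_rfl, hst.le⟩ htm hst.le
  have ht1' : 1 < t := hs.trans_lt hst
  have hut : 0 < u t := by
    have : 0 < t * u t := lt_of_lt_of_le (by positivity) m2
    exact pos_of_mul_pos_right this (by linarith)
  have hutB : u t < B := by linarith
  have hyB : -B ≤ y t := by nlinarith
  obtain ⟨d1, d2⟩ := hode t ⟨hst, htR.1.2.trans_lt ht1.2⟩ hut.le hutB.le hyB l3
  have hq : 0 < t ^ 2 - 1 := by nlinarith
  rcases htR.2 with h | h | h | h
  · linarith
  · linarith
  · have hy0 : y t = 0 := le_antisymm l3 h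
    have := left_deriv_nonneg y _ s t hst d2 hy0 (fun x hx => (hgood x ⟨hx.1.le, hx.2⟩).2.2.1.le)
    rw [hy0, mul_zero, zero_add] at this
    have hneg := pow_lt_aux p hp _ B (u t) hB hut hutB
    have : 1 / (t ^ 2 - 1) * (-(α * (α + 1)) * u t + u t ^ p) < 0 :=
      mul_neg_of_pos_of_neg (by positivity) hneg
    linarith
  · have hw0 : u t + t * y t = 0 := le_antisymm h l4
    have hd := (d1.add ((hasDerivAt_id t).mul d2)).neg
    have := left_deriv_nonneg _ _ s t hst hd (by simp [hw0])
      (fun x hx => by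
        have := (hgood x ⟨hx.1.le, hx.2⟩).2.2.2
        simp; linarith)
    have hy : y t = - u t / t := by field_simp; linarith
    have e : -(y t + (1 * y t + id t * ((2 / t - (2 + 2 * α) * t) / (t ^ 2 - 1) * y t
        + 1 / (t ^ 2 - 1) * (-(α * (α + 1)) * u t + u t ^ p))))
        = - (t / (t ^ 2 - 1) * (α * (1 - α) * u t + u t ^ p)) := by
      rw [hy]
      simp only [id]
      have := hq.ne'
      field_simp
      ring
    have hpos : 0 < t / (t ^ 2 - 1) * (α * (1 - α) * u t + u t ^ p) := by
      have : 0 < 1 - α := by linarith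
      positivity
    linarith

/-- **Proposition 2.** A solution analytic near `ρ = 1` with
`u(1) = b ∈ (0, b₀)` extends to a solution for all `ρ ≥ 1` satisfying `0 < u < b₀`
for `ρ > 1`. -/
theorem extension_beyond_light_cone (p : ℕ) (hp_odd : Odd p) (hp : 7 ≤ p)
    (b : ℝ) (hb0 : 0 < b) (hb : b < bZero p)
    (u : ℝ → ℝ) (ε : ℝ) (hε : 0 < ε)
    (hu : AnalyticOnNhd ℝ u (Ioo (1 - ε) (1 + ε)))
    (heq : ∀ ρ ∈ Ioo (1 - ε) (1 + ε), ρ ≠ 1 → ProfileEq p u ρ)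
    (hub : u 1 = b) :
    ∃ v : ℝ → ℝ, (∀ ρ ∈ Ioo (1 - ε) (1 + ε), v ρ = u ρ) ∧
      (∀ ρ : ℝ, 1 < ρ → DifferentiableAt ℝ v ρ ∧ DifferentiableAt ℝ (deriv v) ρ ∧
        ProfileEq p v ρ) ∧
      (∀ ρ : ℝ, 1 < ρ → 0 < v ρ ∧ v ρ < bZero p) := by
  have hp7 : (7 : ℝ) ≤ p := by exact_mod_cast hp
  have hα : 0 < alphaP p := div_pos (by norm_num) (by linarith)
  have hα1 : alphaP p < 1 := by
    unfold alphaP; rw [div_lt_one (by linarith)]; linarith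
  have hBpos : 0 < bZero p := hb0.trans hb
  have hB : bZero p ^ (p - 1) = alphaP p * (alphaP p + 1) := by
    unfold bZero alphaP
    have h1 : (p : ℝ) - 1 ≠ 0 := by linarith
    rw [← Real.rpow_natCast, ← Real.rpow_mul (by positivity), Nat.cast_sub (by omega),
      Nat.cast_one, one_div, inv_mul_cancel₀ h1, Real.rpow_one]
    field_simp
    ring
  generalize hBe : bZero p = B at *
  generalize hαe : alphaP p = α at *
  have hu' : AnalyticOnNhd ℝ (deriv u) (Ioo (1 - ε) (1 + ε)) := hu.deriv
  have hu'' : AnalyticOnNhd ℝ (deriv (deriv u)) (Ioo (1 - ε) (1 + ε)) := hu'.deriv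
  have h1mem : (1 : ℝ) ∈ Ioo (1 - ε) (1 + ε) := ⟨by linarith, by linarith⟩
  -- the equation at the light cone
  have hone : -(2 * α) * deriv u 1 - α * (α + 1) * b + b ^ p = 0 := by
    let Φ : ℝ → ℝ := fun ρ => (1 - ρ ^ 2) * deriv (deriv u) ρ
      + (2 / ρ - (2 + 2 * α) * ρ) * deriv u ρ - α * (α + 1) * u ρ + u ρ ^ p
    have hc : ContinuousAt Φ 1 := by
      have c0 := (hu 1 h1mem).continuousAt
      have c1 := (hu' 1 h1mem).continuousAt
      have c2 := (hu'' 1 h1mem).continuousAt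
      have c3 : ContinuousAt (fun ρ : ℝ => 2 / ρ - (2 + 2 * α) * ρ) 1 := by
        apply ContinuousAt.sub
        · exact continuousAt_const.div continuousAt_id (by simp)
        · fun_prop
      have c4 : ContinuousAt (fun ρ : ℝ => 1 - ρ ^ 2) 1 := by fun_prop
      exact (((c4.mul c2).add (c3.mul c1)).sub (continuousAt_const.mul c0)).add (c0.pow p)
    have hz : Φ =ᶠ[nhdsWithin 1 {1}ᶜ] fun _ => 0 := by
      filter_upwards [self_mem_nhdsWithin,
        mem_nhdsWithin_of_mem_nhds (Ioo_mem_nhds h1mem.1 h1mem.2)] with x hx hx2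
      have := heq x hx2 hx
      unfold ProfileEq at this
      rw [hαe] at this
      exact this
    have h0 : Φ 1 = 0 := by
      have l1 : Tendsto Φ (nhdsWithin 1 {1}ᶜ) (nhds (Φ 1)) := hc.tendsto.mono_left nhdsWithin_le_nhds
      exact tendsto_nhds_unique l1 ((tendsto_congr' hz).2 tendsto_const_nhds)
    simp only [Φ, hub] at h0
    linarith
  have hodeu : ∀ t ∈ Ioo 1 (1 + ε), HasDerivAt u (deriv u t) t ∧
      HasDerivAt (deriv u) ((2 / t - (2 + 2 * α) * t) / (t ^ 2 - 1) * deriv u t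
        + 1 / (t ^ 2 - 1) * (-(α * (α + 1)) * u t + u t ^ p)) t := by
    intro t ht
    have htm : t ∈ Ioo (1 - ε) (1 + ε) := ⟨by linarith [ht.1], ht.2⟩
    refine ⟨(hu t htm).differentiableAt.hasDerivAt, ?_⟩
    have h := heq t htm ht.1.ne'
    unfold ProfileEq at h
    rw [hαe] at h
    have e : (2 / t - (2 + 2 * α) * t) / (t ^ 2 - 1) * deriv u t
        + 1 / (t ^ 2 - 1) * (-(α * (α + 1)) * u t + u t ^ p) = deriv (deriv u) t := by
      have hq : t ^ 2 - 1 ≠ 0 := by nlinarith [ht.1]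
      rw [div_mul_eq_mul_div, one_div_mul_eq_div, ← add_div, div_eq_iff hq]
      linarith
    rw [e]
    exact (hu' t htm).differentiableAt.hasDerivAt
  have hsubI : Ico 1 (1 + ε) ⊆ Ioo (1 - ε) (1 + ε) := fun x hx => ⟨by linarith [hx.1], hx.2⟩
  have hy1 : deriv u 1 < 0 := by
    have := pow_lt_aux p (by omega) _ B b hB hb0 hb
    by_contra h
    push Not at h
    have : 0 ≤ 2 * α * deriv u 1 := by positivity
    linarith
  have hw1 : 0 < b + 1 * deriv u 1 := by
    have e : 2 * α * (b + 1 * deriv u 1) = α * (1 - α) * b + b ^ p := by linarith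
    have h1 : 0 < 1 - α := by linarith
    have : 0 < 2 * α * (b + 1 * deriv u 1) := by rw [e]; positivity
    exact pos_of_mul_pos_right this (by positivity)
  have trap1 := trap p (by omega) α B hα hα1 hB 1 (1 + ε) le_rfl u (deriv u)
    (fun x hx => (hu x (hsubI hx)).continuousAt.continuousWithinAt)
    (fun x hx => (hu' x (hsubI hx)).continuousAt.continuousWithinAt)
    (fun t ht _ _ _ _ => hodeu t ht) (by rw [hub]; exact hb0) (by rw [hub]; exact hb) hy1
    (by rw [hub]; exact hw1)
  -- the truncated system
  let P : ℝ → ℝ := fun t => (2 / t - (2 + 2 * α) * t) / (t ^ 2 - 1)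
  let Q : ℝ → ℝ := fun t => 1 / (t ^ 2 - 1)
  let h : ℝ → ℝ := clampR (-B) 0
  let g : ℝ → ℝ := fun x => -(α * (α + 1)) * clampR 0 B x + clampR 0 B x ^ p
  let a : ℝ := 1 + ε / 3
  let t0 : ℝ := 1 + ε / 2
  have ha : 1 < a := by simp only [a]; linarith
  have hat : a < t0 := by simp only [a, t0]; linarith
  have ht0 : t0 < 1 + ε := by simp only [t0]; linarith
  have hQc : ContinuousOn Q (Ici a) := by
    refine continuousOn_const.div (by fun_prop) ?_
    intro x hx
    have : a ≤ x := hx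
    nlinarith
  have hPc : ContinuousOn P (Ici a) := by
    refine ContinuousOn.div (ContinuousOn.sub (continuousOn_const.div continuousOn_id ?_)
      (by fun_prop)) (by fun_prop) ?_
    · intro x hx
      have : a ≤ x := hx
      linarith
    · intro x hx
      have : a ≤ x := hx
      nlinarith
  have hgb := g_bounds p (α * (α + 1)) B hBpos.le
  have hlip := fieldF_lip P Q h g a hPc hQc 1 _ (clampR_lip (-B) 0) hgb.1
  have hbd := fieldF_bd P Q h g a hPc hQc B _ (fun x => by
    have := clampR_mem (-B) 0 x (by linarith)
    exact abs_le.2 ⟨this.1, this.2.trans hBpos.le⟩) hgb.2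
  obtain ⟨X, hX0, hX⟩ := global_ode (fieldF P Q h g) a t0 hat
    (fun x => by
      unfold fieldF
      exact continuousOn_const.prodMk ((hPc.mul continuousOn_const).add
        (hQc.mul continuousOn_const))) hbd hlip (u t0, deriv u t0)
  have hF : ∀ t x y, 0 ≤ x → x ≤ B → -B ≤ y → y ≤ 0 → fieldF P Q h g t (x, y) =
      (y, (2 / t - (2 + 2 * α) * t) / (t ^ 2 - 1) * y
        + 1 / (t ^ 2 - 1) * (-(α * (α + 1)) * x + x ^ p)) := by
    intro t x y h1 h2 h3 h4
    simp only [fieldF, h, g, P, Q, clampR_eq _ _ _ h1 h2, clampR_eq _ _ _ h3 h4]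
  have huX : EqOn X (fun t => (u t, deriv u t)) (Ioo a (1 + ε)) := by
    obtain ⟨K, hK⟩ := hlip (1 + ε)
    refine ODE_solution_unique_of_mem_Ioo (v := fieldF P Q h g) (s := fun _ => univ) (t₀ := t0)
      (K := K) (fun t ht => (hK t ⟨ht.1.le, ht.2.le⟩).lipschitzOnWith) ⟨hat, ht0⟩
      (fun t ht => ⟨hX t ht.1, mem_univ _⟩) (fun t ht => ⟨?_, mem_univ _⟩) hX0
    have htt := trap1 t ⟨(ha.trans ht.1).le, ht.2⟩
    have h1t : 1 < t := ha.trans ht.1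
    rw [hF t _ _ htt.1.le htt.2.1.le (by nlinarith [htt.1, htt.2.1, htt.2.2.1, htt.2.2.2])
      htt.2.2.1.le]
    have := hodeu t ⟨h1t, ht.2⟩
    exact this.1.prodMk this.2
  have hX1 : ∀ t, a < t → HasDerivAt (fun t => (X t).1) (fieldF P Q h g t (X t)).1 t :=
    fun t ht => (hasFDerivAt_fst (𝕜 := ℝ) (p := X t)).comp_hasDerivAt t (hX t ht)
  have hX2 : ∀ t, a < t → HasDerivAt (fun t => (X t).2) (fieldF P Q h g t (X t)).2 t :=
    fun t ht => (hasFDerivAt_snd (𝕜 := ℝ) (p := X t)).comp_hasDerivAt t (hX t ht)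
  have hode2 : ∀ t, a < t → 0 ≤ (X t).1 → (X t).1 ≤ B → -B ≤ (X t).2 → (X t).2 ≤ 0 →
      HasDerivAt (fun t => (X t).1) ((X t).2) t ∧ HasDerivAt (fun t => (X t).2)
        ((2 / t - (2 + 2 * α) * t) / (t ^ 2 - 1) * (X t).2
        + 1 / (t ^ 2 - 1) * (-(α * (α + 1)) * (X t).1 + (X t).1 ^ p)) t := by
    intro t ht h1 h2 h3 h4
    have e := hF t (X t).1 (X t).2 h1 h2 h3 h4
    have d1 := hX1 t ht
    have d2 := hX2 t ht
    rw [Prod.mk.eta] at e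
    rw [e] at d1 d2
    exact ⟨d1, d2⟩
  have htr0 := trap1 t0 ⟨(ha.trans hat).le, ht0⟩
  have trap2 : ∀ t, t0 ≤ t → 0 < (X t).1 ∧ (X t).1 < B ∧ (X t).2 < 0 ∧
      0 < (X t).1 + t * (X t).2 := by
    intro t ht
    refine trap p (by omega) α B hα hα1 hB t0 (t + 1) (ha.trans hat).le (fun t => (X t).1)
      (fun t => (X t).2)
      (fun x hx => (hX1 x (hat.trans_le hx.1)).continuousAt.continuousWithinAt)
      (fun x hx => (hX2 x (hat.trans_le hx.1)).continuousAt.continuousWithinAt)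
      (fun x hx => hode2 x (hat.trans hx.1)) ?_ ?_ ?_ ?_ t ⟨ht, by linarith⟩
    all_goals simp only [hX0]
    exacts [htr0.1, htr0.2.1, htr0.2.2.1, htr0.2.2.2]
  -- the extension
  let v : ℝ → ℝ := fun t => if t < 1 + ε then u t else (X t).1
  have hvu : ∀ t, t < 1 + ε → v t = u t := fun t ht => if_pos ht
  have hvX : ∀ t, a < t → v t = (X t).1 := by
    intro t ht
    by_cases hlt : t < 1 + ε
    · rw [hvu t hlt, huX ⟨ht, hlt⟩]
    · exact if_neg hlt
  have fin : ∀ (w z : ℝ → ℝ) (c d : ℝ), c < d → 1 ≤ c → (∀ t ∈ Ioo c d, v t = w t) →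
      (∀ t ∈ Ioo c d, HasDerivAt w (z t) t ∧ HasDerivAt z
        ((2 / t - (2 + 2 * α) * t) / (t ^ 2 - 1) * z t
        + 1 / (t ^ 2 - 1) * (-(α * (α + 1)) * w t + w t ^ p)) t) →
      ∀ t ∈ Ioo c d, DifferentiableAt ℝ v t ∧ DifferentiableAt ℝ (deriv v) t ∧
        ProfileEq p v t := by
    intro w z c d hcd hc hvw hwz t ht
    have hdv : ∀ x ∈ Ioo c d, HasDerivAt v (z x) x := by
      intro x hx
      refine (hwz x hx).1.congr_of_eventuallyEq ?_
      filter_upwards [Ioo_mem_nhds hx.1 hx.2] with x' hx' using hvw x' hx'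
    have hddv : HasDerivAt (deriv v) ((2 / t - (2 + 2 * α) * t) / (t ^ 2 - 1) * z t
        + 1 / (t ^ 2 - 1) * (-(α * (α + 1)) * w t + w t ^ p)) t := by
      refine (hwz t ht).2.congr_of_eventuallyEq ?_
      filter_upwards [Ioo_mem_nhds ht.1 ht.2] with x' hx' using (hdv x' hx').deriv
    refine ⟨(hdv t ht).differentiableAt, hddv.differentiableAt, ?_⟩
    unfold ProfileEq
    rw [hαe, hddv.deriv, (hdv t ht).deriv, hvw t ht]
    have hq : t ^ 2 - 1 ≠ 0 := by nlinarith [ht.1]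
    have e : (2 / t - (2 + 2 * α) * t) / (t ^ 2 - 1) * z t
        + 1 / (t ^ 2 - 1) * (-(α * (α + 1)) * w t + w t ^ p)
        = ((2 / t - (2 + 2 * α) * t) * z t + (-(α * (α + 1)) * w t + w t ^ p)) / (t ^ 2 - 1) := by
      ring
    rw [e]
    generalize (2 / t - (2 + 2 * α) * t) * z t = A
    field_simp
    ring
  refine ⟨v, fun ρ hρ => hvu ρ hρ.2, ?_, ?_⟩
  · intro ρ hρ
    by_cases hlt : ρ < 1 + ε
    · exact fin u (deriv u) 1 (1 + ε) (by linarith) le_rfl (fun t ht => hvu t ht.2) hodeu ρ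
        ⟨hρ, hlt⟩
    · push Not at hlt
      refine fin (fun t => (X t).1) (fun t => (X t).2) t0 (ρ + 1) (by linarith)
        (ha.trans hat).le (fun t ht => hvX t (hat.trans ht.1)) (fun t ht => ?_) ρ
        ⟨by linarith, by linarith⟩
      have h2 := trap2 t ht.1.le
      have h1t : 1 < t := (ha.trans hat).trans ht.1
      exact hode2 t (hat.trans ht.1) h2.1.le h2.2.1.le
        (by nlinarith [h2.1, h2.2.1, h2.2.2.1, h2.2.2.2]) h2.2.2.1.le
  · intro ρ hρ
    by_cases hlt : ρ < 1 + ε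
    · rw [hvu ρ hlt]
      have := trap1 ρ ⟨hρ.le, hlt⟩
      exact ⟨this.1, this.2.1⟩
    · push Not at hlt
      rw [hvX ρ (by linarith)]
      have := trap2 ρ (by linarith)
      exact ⟨this.1, this.2.1⟩
end

section
/- Let p ≥ 7 be an odd integer, set d = (p−1)/p, and let c > b₀/d. Let u : [0,1] → ℝ be continuous, real-analytic at ρ = 0 with u(0) = c and u'(0) = 0, and satisfy the self-similar profile equation (1−ρ²)u''(ρ) + (2/ρ − (2+2α)ρ)u'(ρ) − α(α+1)u(ρ) + u(ρ)^p = 0 for all ρ ∈ (0,1). Then there exists ρ₁ with 0 < ρ₁ < (b∞/(d c))^{1/α} such that w(ρ₁) = 0 and 0 < ρ₁ · w'(ρ₁) < α, where w(ρ) = u(ρ)/(b∞ ρ^{−α}) − 1. -/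
open Set Real Filter

open Topology

lemma fcx_firstzero {h γ : ℝ → ℝ} {s t : ℝ} (hst : s ≤ t)
    (hd : ∀ x ∈ Icc s t, h x ≠ γ x → HasDerivAt h 0 x)
    (hγ : ∀ x ∈ Icc s t, ContinuousAt γ x)
    (HL : ∀ x ∈ Ioc s t, ∀ κ, (∀ y ∈ Ico s x, h y = κ) → h x = κ) :
    (h s = h t) ∨ ∃ a ∈ Icc s t, h s = γ a := by
  by_cases hne : ∃ x ∈ Icc s t, h x = γ x
  · right
    obtain ⟨x0, hx0, hx0e⟩ := hne
    set Z := {x | x ∈ Icc s t ∧ h x = γ x} with hZ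
    have hZne : Z.Nonempty := ⟨x0, hx0, hx0e⟩
    have hZb : BddBelow Z := ⟨s, fun x hx => hx.1.1⟩
    set a := sInf Z with ha
    have has : s ≤ a := le_csInf hZne fun x hx => hx.1.1
    have hat : a ≤ t := (csInf_le hZb ⟨hx0, hx0e⟩).trans hx0.2
    have haZ : h a = γ a := by
      by_contra hcon
      have h1 : ContinuousAt h a := (hd a ⟨has, hat⟩ hcon).continuousAt
      have h2 := hγ a ⟨has, hat⟩
      have h3 : ∀ᶠ y in 𝓝 a, h y ≠ γ y := by
        filter_upwards [(h1.sub h2).eventually_ne (sub_ne_zero.2 hcon)] with y hy e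
        exact hy (sub_eq_zero.2 e)
      have h4 : a ∈ closure Z := csInf_mem_closure hZne hZb
      rw [mem_closure_iff_frequently] at h4
      obtain ⟨y, hy1, hy2⟩ := (h4.and_eventually h3).exists
      exact hy2 hy1.2
    refine ⟨a, ⟨has, hat⟩, ?_⟩
    rcases has.eq_or_lt with e | hlt
    · rw [← e] at haZ; rw [← e]; exact haZ
    rw [← haZ]
    symm
    apply HL a ⟨hlt, hat⟩
    intro y hy
    have hder : ∀ x ∈ Icc s y, HasDerivAt h 0 x := by
      intro x hx
      have hxa : x < a := hx.2.trans_lt hy.2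
      refine hd x ⟨hx.1, hxa.le.trans hat⟩ fun hh => ?_
      exact absurd (csInf_le hZb (show x ∈ Z from ⟨⟨hx.1, hxa.le.trans hat⟩, hh⟩)) (not_le.2 hxa)
    exact constant_of_has_deriv_right_zero (fun x hx => (hder x hx).continuousAt.continuousWithinAt)
      (fun x hx => (hder x ⟨hx.1, hx.2.le⟩).hasDerivWithinAt) y ⟨hy.1, le_rfl⟩
  · left
    push Not at hne
    have hder : ∀ x ∈ Icc s t, HasDerivAt h 0 x := fun x hx => hd x hx (hne x hx)
    exact (constant_of_has_deriv_right_zero (fun x hx => (hder x hx).continuousAt.continuousWithinAt)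
      (fun x hx => (hder x ⟨hx.1, hx.2.le⟩).hasDerivWithinAt) t ⟨hst, le_rfl⟩).symm

lemma fcx_lastzero {h γ : ℝ → ℝ} {s t : ℝ} (hst : s ≤ t)
    (hd : ∀ x ∈ Icc s t, h x ≠ γ x → HasDerivAt h 0 x)
    (hγ : ∀ x ∈ Icc s t, ContinuousAt γ x)
    (HR : ∀ x ∈ Ico s t, ∀ κ, (∀ y ∈ Ioc x t, h y = κ) → h x = κ) :
    (h s = h t) ∨ ∃ a ∈ Icc s t, h t = γ a := by
  have key := fcx_firstzero (h := fun x => h (-x)) (γ := fun x => γ (-x)) (s := -t) (t := -s)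
    (by linarith) (by
      intro x hx hne
      have h1 := hd (-x) ⟨by linarith [hx.2], by linarith [hx.1]⟩ hne
      have h2 := HasDerivAt.comp x h1 (hasDerivAt_neg x)
      simpa [Function.comp_def] using h2) (by
      intro x hx
      have h1 := hγ (-x) ⟨by linarith [hx.2], by linarith [hx.1]⟩
      exact ContinuousAt.comp (f := fun x : ℝ => -x) h1 continuousAt_neg) (by
      intro x hx κ hy
      apply HR (-x) ⟨by linarith [hx.2], by linarith [hx.1]⟩ κ
      intro y hy'
      have := hy (-y) ⟨by linarith [hy'.2], by linarith [hy'.1]⟩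
      simpa using this)
  simp only [neg_neg] at key
  rcases key with k | ⟨a, ha, k⟩
  · left; exact k.symm
  · right; exact ⟨-a, ⟨by linarith [ha.2], by linarith [ha.1]⟩, k⟩

section
variable {h γ : ℝ → ℝ} {a b : ℝ}

lemma fcx_cont
    (hd : ∀ x ∈ Ioo a b, h x ≠ γ x → HasDerivAt h 0 x)
    (hγ : ∀ x ∈ Ioo a b, ContinuousAt γ x)
    (HL : ∀ s ∈ Ioo a b, ∀ x ∈ Ioo a b, s < x → ∀ κ, (∀ y ∈ Ico s x, h y = κ) → h x = κ)
    (HR : ∀ t ∈ Ioo a b, ∀ x ∈ Ioo a b, x < t → ∀ κ, (∀ y ∈ Ioc x t, h y = κ) → h x = κ) :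
    ∀ x ∈ Ioo a b, ContinuousAt h x := by
  intro x hx
  by_cases hne : h x = γ x
  · rw [Metric.continuousAt_iff]
    intro ε hε
    obtain ⟨δ, hδ, H⟩ := Metric.continuousAt_iff.1 (hγ x hx) ε hε
    obtain ⟨δ', hδ', H'⟩ := Metric.isOpen_iff.1 isOpen_Ioo x hx
    refine ⟨min δ δ', lt_min hδ hδ', ?_⟩
    intro y hy
    have hyI : y ∈ Ioo a b := H' (hy.trans_le (min_le_right _ _))
    have hyd : |y - x| < δ := hy.trans_le (min_le_left _ _)
    rw [abs_lt] at hyd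
    rcases le_total x y with hxy | hxy
    · have hsub : Icc x y ⊆ Ioo a b := fun z hz => ⟨hx.1.trans_le hz.1, hz.2.trans_lt hyI.2⟩
      rcases fcx_lastzero hxy (fun z hz => hd z (hsub hz)) (fun z hz => hγ z (hsub hz))
        (fun z hz => HR y hyI z (hsub ⟨hz.1, hz.2.le⟩) hz.2) with k | ⟨z, hz, k⟩
      · rw [k]; simpa using hε
      · rw [k, hne]; apply H; rw [Real.dist_eq, abs_lt]; constructor <;> linarith [hz.1, hz.2]
    · have hsub : Icc y x ⊆ Ioo a b := fun z hz => ⟨hyI.1.trans_le hz.1, hz.2.trans_lt hx.2⟩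
      rcases fcx_firstzero hxy (fun z hz => hd z (hsub hz)) (fun z hz => hγ z (hsub hz))
        (fun z hz => HL y hyI z (hsub ⟨hz.1.le, hz.2⟩) hz.1) with k | ⟨z, hz, k⟩
      · rw [k]; simpa using hε
      · rw [k, hne]; apply H; rw [Real.dist_eq, abs_lt]; constructor <;> linarith [hz.1, hz.2]
  · exact (hd x hx hne).continuousAt

lemma fcx_const
    (hd : ∀ x ∈ Ioo a b, h x ≠ γ x → HasDerivAt h 0 x)
    (hd0 : ∀ x ∈ Ioo a b, deriv h x = 0)
    (hγ : ContDiffOn ℝ 1 γ (Ioo a b))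
    (HL : ∀ s ∈ Ioo a b, ∀ x ∈ Ioo a b, s < x → ∀ κ, (∀ y ∈ Ico s x, h y = κ) → h x = κ)
    (HR : ∀ t ∈ Ioo a b, ∀ x ∈ Ioo a b, x < t → ∀ κ, (∀ y ∈ Ioc x t, h y = κ) → h x = κ) :
    ∀ s ∈ Ioo a b, ∀ t ∈ Ioo a b, s ≤ t → h s = h t := by
  intro s hs t ht hst
  have hsub : Icc s t ⊆ Ioo a b := fun z hz => ⟨hs.1.trans_le hz.1, hz.2.trans_lt ht.2⟩
  have hγc : ∀ x ∈ Ioo a b, ContinuousAt γ x := fun x hx =>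
    hγ.continuousOn.continuousAt (isOpen_Ioo.mem_nhds hx)
  obtain ⟨K, hK⟩ := (hγ.mono hsub).exists_lipschitzOnWith (by decide) (convex_Icc _ _) isCompact_Icc
  have key : ∀ x ∈ Icc s t, ∀ y ∈ Icc s t, x ≤ y → |h x - h y| ≤ K * (y - x) := by
    intro x hx y hy hxy
    have hsub' : Icc x y ⊆ Icc s t := fun z hz => ⟨hx.1.trans hz.1, hz.2.trans hy.2⟩
    have hKn : (0 : ℝ) ≤ K := K.2
    rcases fcx_firstzero hxy (fun z hz => hd z (hsub (hsub' hz)))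
      (fun z hz => hγc z (hsub (hsub' hz)))
      (fun z hz => HL x (hsub hx) z (hsub (hsub' ⟨hz.1.le, hz.2⟩)) hz.1) with k | ⟨z, hz, k⟩
    · rw [k]; simp; apply mul_nonneg hKn; linarith
    rcases fcx_lastzero hxy (fun z hz => hd z (hsub (hsub' hz)))
      (fun z hz => hγc z (hsub (hsub' hz)))
      (fun z hz => HR y (hsub hy) z (hsub (hsub' ⟨hz.1, hz.2.le⟩)) hz.2) with k' | ⟨z', hz', k'⟩
    · rw [k']; simp; apply mul_nonneg hKn; linarith
    rw [k, k']
    have := hK.dist_le_mul z (hsub' hz) z' (hsub' hz')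
    rw [Real.dist_eq, Real.dist_eq] at this
    refine this.trans (mul_le_mul_of_nonneg_left ?_ hKn)
    rw [abs_le]; constructor <;> linarith [hz.1, hz.2, hz'.1, hz'.2]
  have hL : LipschitzOnWith K h (uIcc s t) := by
    rw [uIcc_of_le hst]
    apply LipschitzOnWith.of_dist_le_mul
    intro x hx y hy
    rw [Real.dist_eq, Real.dist_eq]
    rcases le_total x y with hxy | hxy
    · rw [abs_sub_comm x y, abs_of_nonneg (sub_nonneg.2 hxy)]; exact key x hx y hy hxy
    · rw [abs_sub_comm, abs_of_nonneg (sub_nonneg.2 hxy)]; exact key y hy x hx hxy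
  have h1 := hL.absolutelyContinuousOnInterval.integral_deriv_eq_sub
  have h2 : ∫ (x : ℝ) in s..t, deriv h x = 0 := by
    rw [intervalIntegral.integral_congr (g := fun _ => (0 : ℝ))]
    · simp
    · intro x hx
      rw [uIcc_of_le hst] at hx
      exact hd0 x (hsub hx)
  linarith
end

lemma fcx_prim {φ : ℝ → ℝ} {a b : ℝ} (hab : a < b) (hφ : ContinuousOn φ (Ioo a b)) :
    ∃ P : ℝ → ℝ, ∀ x ∈ Ioo a b, HasDerivAt P (φ x) x := by
  refine ⟨fun x => ∫ y in ((a + b) / 2)..x, φ y, fun x hx => ?_⟩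
  have hm : (a + b) / 2 ∈ Ioo a b := ⟨by linarith, by linarith⟩
  apply intervalIntegral.integral_hasDerivAt_right
  · apply ContinuousOn.intervalIntegrable
    exact hφ.mono (ordConnected_Ioo.uIcc_subset hm hx)
  · exact hφ.stronglyMeasurableAtFilter isOpen_Ioo x hx
  · exact hφ.continuousAt (isOpen_Ioo.mem_nhds hx)

lemma fcx_diff {u : ℝ → ℝ} {a b : ℝ} {A B Φ : ℝ → ℝ}
    (hu : ContinuousOn u (Ioo a b)) (hΦ : ∀ x ∈ Ioo a b, 0 < Φ x)
    (heq : ∀ x ∈ Ioo a b, A x * deriv (deriv u) x + B x * deriv u x + Φ x = 0) :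
    ∀ x ∈ Ioo a b, DifferentiableAt ℝ u x := by
  intro x hx
  by_contra hnd
  have h0 := deriv_zero_of_not_differentiableAt hnd
  have h1 := heq x hx
  rw [h0] at h1
  have h2 : deriv (deriv u) x ≠ 0 := by
    intro h; rw [h] at h1; have := hΦ x hx; linarith
  have h3 := (differentiableAt_of_deriv_ne_zero h2).hasDerivAt
  have h4 : ∀ᶠ z in 𝓝[≠] x, deriv u z ≠ 0 := h3.eventually_ne h2
  have hc : Tendsto (deriv u) (𝓝 x) (𝓝 0) := by
    have := h3.continuousAt.tendsto; rwa [h0] at this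
  have huc : ContinuousAt u x := hu.continuousAt (isOpen_Ioo.mem_nhds hx)
  have hdo : DifferentiableOn ℝ u {z | deriv u z ≠ 0} := fun z hz =>
    (differentiableAt_of_deriv_ne_zero hz).differentiableWithinAt
  have hr : HasDerivWithinAt u 0 (Ici x) x :=
    hasDerivWithinAt_Ici_of_tendsto_deriv hdo huc.continuousWithinAt
      (nhdsWithin_mono x (fun y (hy : x < y) => hy.ne') h4) (hc.mono_left nhdsWithin_le_nhds)
  have hl : HasDerivWithinAt u 0 (Iic x) x :=
    hasDerivWithinAt_Iic_of_tendsto_deriv hdo huc.continuousWithinAt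
      (nhdsWithin_mono x (fun y (hy : y < x) => hy.ne) h4) (hc.mono_left nhdsWithin_le_nhds)
  have := hl.union hr
  rw [Iic_union_Ici, hasDerivWithinAt_univ] at this
  exact hnd this.differentiableAt

lemma fcx_reg {u : ℝ → ℝ} {a b : ℝ} {A B W F : ℝ → ℝ} (hab : a < b)
    (hu : ContinuousOn u (Ioo a b)) (hΦ : ∀ x ∈ Ioo a b, 0 < F (u x))
    (hF : ContDiff ℝ 1 F)
    (hA : ContDiffOn ℝ 1 A (Ioo a b)) (hB : ContDiffOn ℝ 1 B (Ioo a b))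
    (hW : ContDiffOn ℝ 1 W (Ioo a b))
    (hApos : ∀ x ∈ Ioo a b, 0 < A x) (hBpos : ∀ x ∈ Ioo a b, 0 < B x)
    (hWpos : ∀ x ∈ Ioo a b, 0 < W x)
    (hWd : ∀ x ∈ Ioo a b, HasDerivAt W (B x * W x / A x) x)
    (heq : ∀ x ∈ Ioo a b, A x * deriv (deriv u) x + B x * deriv u x + F (u x) = 0) :
    ∀ x ∈ Ioo a b, HasDerivAt (fun x => W x * deriv u x) (-(W x / A x * F (u x))) x := by
  have hdu := fcx_diff hu hΦ heq
  have hφc : ContinuousOn (fun x => W x / A x * F (u x)) (Ioo a b) :=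
    (hW.continuousOn.div hA.continuousOn fun x hx => (hApos x hx).ne').mul
      (hF.continuous.comp_continuousOn hu)
  obtain ⟨P, hP⟩ := fcx_prim hab hφc
  have hPc : ContinuousOn P (Ioo a b) := fun x hx => (hP x hx).continuousAt.continuousWithinAt
  set h : ℝ → ℝ := fun x => W x * deriv u x + P x with hh
  set γ : ℝ → ℝ := fun x => P x - W x * F (u x) / B x with hγdef
  -- deriv of h when v differentiable
  have hdv : ∀ x ∈ Ioo a b, DifferentiableAt ℝ (deriv u) x → HasDerivAt h 0 x := by
    intro x hx hv
    have h1 := ((hWd x hx).mul hv.hasDerivAt).add (hP x hx)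
    have e : B x * W x / A x * deriv u x + W x * deriv (deriv u) x + W x / A x * F (u x) = 0 := by
      have := heq x hx
      have hA0 := (hApos x hx).ne'
      field_simp
      linear_combination this * W x
    rw [e] at h1
    exact h1
  have hd : ∀ x ∈ Ioo a b, h x ≠ γ x → HasDerivAt h 0 x := by
    intro x hx hne
    apply hdv x hx
    by_contra hnd
    apply hne
    have h0 := deriv_zero_of_not_differentiableAt hnd
    have h1 := heq x hx
    rw [h0] at h1
    have hB0 := (hBpos x hx).ne'
    simp only [hh, hγdef]
    field_simp
    linear_combination h1 * W x
  have hd0 : ∀ x ∈ Ioo a b, deriv h x = 0 := by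
    intro x hx
    by_cases hv : DifferentiableAt ℝ (deriv u) x
    · exact (hdv x hx hv).deriv
    · apply deriv_zero_of_not_differentiableAt
      intro hc
      apply hv
      have h1 : DifferentiableAt ℝ (fun x => (h x - P x) / W x) x :=
        (hc.sub (hP x hx).differentiableAt).div (hWd x hx).differentiableAt (hWpos x hx).ne'
      refine h1.congr_of_eventuallyEq ?_
      filter_upwards [isOpen_Ioo.mem_nhds hx] with y hy
      have := (hWpos y hy).ne'
      simp only [hh]; field_simp; ring
  have hlim : ∀ x ∈ Ioo a b, ∀ κ, Tendsto (fun y => (κ - P y) / W y) (𝓝 x)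
      (𝓝 ((κ - P x) / W x)) := fun x hx κ =>
    ((tendsto_const_nhds.sub (hP x hx).continuousAt.tendsto).div
      (hWd x hx).continuousAt.tendsto (hWpos x hx).ne')
  have HL : ∀ s ∈ Ioo a b, ∀ x ∈ Ioo a b, s < x → ∀ κ, (∀ y ∈ Ico s x, h y = κ) → h x = κ := by
    intro s hs x hx hsx κ hκ
    have hsub : Ico s x ⊆ Ioo a b := fun z hz => ⟨hs.1.trans_le hz.1, hz.2.trans hx.2⟩
    have hmem : Ico s x ∈ 𝓝[<] x := Ico_mem_nhdsLT hsx
    have h1 : HasDerivWithinAt u ((κ - P x) / W x) (Iic x) x := by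
      apply hasDerivWithinAt_Iic_of_tendsto_deriv (s := Ico s x)
        (fun z hz => (hdu z (hsub hz)).differentiableWithinAt)
        (hdu x hx).continuousAt.continuousWithinAt hmem
      refine ((hlim x hx κ).mono_left nhdsWithin_le_nhds).congr' ?_
      filter_upwards [hmem] with y hy
      have := (hWpos y (hsub hy)).ne'
      rw [← hκ y hy]; simp only [hh]; field_simp; ring
    have h2 : deriv u x = (κ - P x) / W x :=
      (uniqueDiffWithinAt_Iic x).eq_deriv _ (hdu x hx).hasDerivAt.hasDerivWithinAt h1
    have := (hWpos x hx).ne'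
    simp only [hh]; rw [h2]; field_simp; ring
  have HR : ∀ t ∈ Ioo a b, ∀ x ∈ Ioo a b, x < t → ∀ κ, (∀ y ∈ Ioc x t, h y = κ) → h x = κ := by
    intro t ht x hx hsx κ hκ
    have hsub : Ioc x t ⊆ Ioo a b := fun z hz => ⟨hx.1.trans hz.1, hz.2.trans_lt ht.2⟩
    have hmem : Ioc x t ∈ 𝓝[>] x := Ioc_mem_nhdsGT hsx
    have h1 : HasDerivWithinAt u ((κ - P x) / W x) (Ici x) x := by
      apply hasDerivWithinAt_Ici_of_tendsto_deriv (s := Ioc x t)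
        (fun z hz => (hdu z (hsub hz)).differentiableWithinAt)
        (hdu x hx).continuousAt.continuousWithinAt hmem
      refine ((hlim x hx κ).mono_left nhdsWithin_le_nhds).congr' ?_
      filter_upwards [hmem] with y hy
      have := (hWpos y (hsub hy)).ne'
      rw [← hκ y hy]; simp only [hh]; field_simp; ring
    have h2 : deriv u x = (κ - P x) / W x :=
      (uniqueDiffWithinAt_Ici x).eq_deriv _ (hdu x hx).hasDerivAt.hasDerivWithinAt h1
    have := (hWpos x hx).ne'
    simp only [hh]; rw [h2]; field_simp; ring
  have hγc : ContinuousOn γ (Ioo a b) :=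
    hPc.sub ((hW.continuousOn.mul (hF.continuous.comp_continuousOn hu)).div hB.continuousOn
      fun x hx => (hBpos x hx).ne')
  have hhc := fcx_cont hd (fun x hx => hγc.continuousAt (isOpen_Ioo.mem_nhds hx)) HL HR
  have hc1 : ∀ f : ℝ → ℝ, (∀ x ∈ Ioo a b, DifferentiableAt ℝ f x) →
      ContinuousOn (deriv f) (Ioo a b) → ContDiffOn ℝ 1 f (Ioo a b) := by
    intro f h1 h2
    rw [contDiffOn_one_iff_derivWithin isOpen_Ioo.uniqueDiffOn]
    exact ⟨fun x hx => (h1 x hx).differentiableWithinAt,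
      h2.congr fun x hx => derivWithin_of_isOpen isOpen_Ioo hx⟩
  have hu1 : ContDiffOn ℝ 1 u (Ioo a b) := by
    apply hc1 u hdu
    have : ContinuousOn (fun x => (h x - P x) / W x) (Ioo a b) :=
      ContinuousOn.div (ContinuousOn.sub (fun x hx => (hhc x hx).continuousWithinAt) hPc)
        hW.continuousOn fun x hx => (hWpos x hx).ne'
    refine this.congr fun x hx => ?_
    have := (hWpos x hx).ne'
    simp only [hh]; field_simp; ring
  have hP1 : ContDiffOn ℝ 1 P (Ioo a b) :=
    hc1 P (fun x hx => (hP x hx).differentiableAt) (hφc.congr fun x hx => (hP x hx).deriv)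
  have hγ1 : ContDiffOn ℝ 1 γ (Ioo a b) :=
    hP1.sub ((hW.mul (hF.comp_contDiffOn hu1)).div hB fun x hx => (hBpos x hx).ne')
  have hconst := fcx_const hd hd0 hγ1 HL HR
  intro x hx
  have h1 : HasDerivAt (fun y => h x - P y) (-(W x / A x * F (u x))) x := (hP x hx).const_sub (h x)
  refine h1.congr_of_eventuallyEq ?_
  filter_upwards [isOpen_Ioo.mem_nhds hx] with y hy
  have : h y = h x := by
    rcases le_total x y with hxy | hxy
    · exact (hconst x hx y hy hxy).symm
    · exact hconst y hy x hx hxy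
  simp only [hh] at this ⊢; linarith

lemma fcx_sys {u F : ℝ → ℝ} {α r : ℝ} (hα : 0 < α) (hr : 0 < r) (hr2 : (1 + α) * r ^ 2 ≤ 1)
    (hu : ContinuousOn u (Ioo 0 r)) (hΦ : ∀ x ∈ Ioo 0 r, 0 < F (u x)) (hF : ContDiff ℝ 1 F)
    (heq : ∀ x ∈ Ioo 0 r, (1 - x ^ 2) * deriv (deriv u) x + (2 / x - (2 + 2 * α) * x) * deriv u x
      + F (u x) = 0) :
    ∀ x ∈ Ioo 0 r, DifferentiableAt ℝ u x ∧
      HasDerivAt (fun x => x ^ 2 * (1 - x ^ 2) ^ α * deriv u x)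
        (-(x ^ 2 * (1 - x ^ 2) ^ (α - 1) * F (u x))) x := by
  have hx2 : ∀ x ∈ Ioo 0 r, (1 + α) * x ^ 2 < 1 := by
    intro x hx
    have : x ^ 2 < r ^ 2 := by have := hx.1; have := hx.2; gcongr
    nlinarith
  have hA : ∀ x ∈ Ioo 0 r, 0 < 1 - x ^ 2 := by
    intro x hx; nlinarith [hx2 x hx, sq_nonneg x]
  have h1 := fcx_diff (A := fun x => 1 - x ^ 2) (B := fun x => 2 / x - (2 + 2 * α) * x)
    (Φ := fun x => F (u x)) hu hΦ heq
  have h2 := fcx_reg (A := fun x => 1 - x ^ 2) (B := fun x => 2 / x - (2 + 2 * α) * x)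
    (W := fun x => x ^ 2 * (1 - x ^ 2) ^ α) hr hu hΦ hF (by fun_prop)
    (by
      apply ContDiffOn.sub
      · exact contDiffOn_const.div contDiffOn_id fun x hx => hx.1.ne'
      · fun_prop)
    (by
      apply ContDiffOn.mul (by fun_prop)
      exact ContDiffOn.rpow_const_of_ne (by fun_prop) fun x hx => (hA x hx).ne')
    hA
    (by
      intro x hx
      have := hx2 x hx
      have := hx.1
      rw [sub_pos, lt_div_iff₀ hx.1]
      nlinarith)
    (fun x hx => mul_pos (pow_pos hx.1 2) (rpow_pos_of_pos (hA x hx) _))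
    (by
      intro x hx
      have hA0 := (hA x hx)
      have e1 : HasDerivAt (fun x : ℝ => 1 - x ^ 2) (-(2 * x)) x := by
        simpa using (hasDerivAt_pow 2 x).const_sub 1
      have e2 := (hasDerivAt_pow 2 x).mul (e1.rpow_const (p := α) (Or.inl hA0.ne'))
      refine e2.congr_deriv ?_
      have hx0 := hx.1.ne'
      have hA1 := hA0.ne'
      rw [rpow_sub_one hA1]
      simp
      field_simp
      ring) heq
  intro x hx
  refine ⟨h1 x hx, (h2 x hx).congr_deriv ?_⟩
  rw [rpow_sub_one (hA x hx).ne']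
  ring

lemma fcx_pos {V V' : ℝ → ℝ} {r : ℝ} (h0 : Tendsto V (𝓝[>] 0) (𝓝 0))
    (hc : ∀ x ∈ Ioc 0 r, ContinuousAt V x)
    (hd : ∀ x ∈ Ioo 0 r, HasDerivAt V (V' x) x) (hp : ∀ x ∈ Ioo 0 r, 0 < V' x) :
    ∀ x ∈ Ioc 0 r, 0 < V x := by
  have hm : StrictMonoOn V (Ioc 0 r) := by
    apply strictMonoOn_of_deriv_pos (convex_Ioc 0 r)
      (fun x hx => (hc x hx).continuousWithinAt)
    intro x hx
    rw [interior_Ioc] at hx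
    rw [(hd x hx).deriv]; exact hp x hx
  intro x hx
  have hx2 : x / 2 ∈ Ioc 0 r := ⟨by linarith [hx.1], by linarith [hx.1, hx.2]⟩
  have h1 : V (x / 2) < V x := hm hx2 hx (by linarith [hx.1])
  have h2 : 0 ≤ V (x / 2) := by
    apply le_of_tendsto h0
    filter_upwards [Ioo_mem_nhdsGT hx2.1] with y hy
    exact (hm ⟨hy.1, hy.2.le.trans hx2.2⟩ hx2 hy.2).le
  linarith

lemma fcx_hit {f : ℝ → ℝ} {R b : ℝ} (hR : 0 ≤ R) (hf : ContinuousOn f (Icc 0 R)) (h0 : f 0 < b)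
    (h1 : b ≤ f R) : ∃ r, 0 < r ∧ r ≤ R ∧ f r = b ∧ ∀ x ∈ Ico 0 r, f x < b := by
  set S := Icc 0 R ∩ f ⁻¹' (Ici b) with hS
  have hSc : IsClosed S := hf.preimage_isClosed_of_isClosed isClosed_Icc isClosed_Ici
  have hSne : S.Nonempty := ⟨R, ⟨hR, le_rfl⟩, h1⟩
  have hSb : BddBelow S := ⟨0, fun x hx => hx.1.1⟩
  have hm := hSc.csInf_mem hSne hSb
  set r := sInf S
  have hlt : ∀ x ∈ Ico 0 r, f x < b := by
    intro x hx
    by_contra hcon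
    exact absurd (csInf_le hSb (show x ∈ S from ⟨⟨hx.1, hx.2.le.trans hm.1.2⟩, not_lt.1 hcon⟩))
      (not_le.2 hx.2)
  have hr0 : 0 < r := by
    rcases hm.1.1.eq_or_lt with e | e
    · have := hm.2; rw [← e] at this; exact absurd h0 (not_lt.2 this)
    · exact e
  refine ⟨r, hr0, hm.1.2, le_antisymm ?_ hm.2, hlt⟩
  have hcw : ContinuousWithinAt f (Ico 0 r) r :=
    (hf r hm.1).mono fun x hx => ⟨hx.1, hx.2.le.trans hm.1.2⟩
  have hcl : r ∈ closure (Ico 0 r) := by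
    rw [closure_Ico hr0.ne]; exact ⟨hr0.le, le_rfl⟩
  have : (𝓝[Ico 0 r] r).NeBot := mem_closure_iff_nhdsWithin_neBot.1 hcl
  apply le_of_tendsto hcw
  filter_upwards [self_mem_nhdsWithin] with y hy using (hlt y hy).le

lemma fcx_above {u F : ℝ → ℝ} {α r e c k M : ℝ} (hr : 0 < r) (hr1 : r < 1)
    (hk : 0 < k) (hM : 0 < M)
    (hu : ContinuousOn u (Icc 0 r)) (hu0 : u 0 = c) (hd0 : Tendsto (deriv u) (𝓝 0) (𝓝 0))
    (hα : 0 < α)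
    (hD : ∀ x ∈ Ioo 0 r, DifferentiableAt ℝ u x ∧
      HasDerivAt (fun x => x ^ 2 * (1 - x ^ 2) ^ α * deriv u x)
        (-(x ^ 2 * (1 - x ^ 2) ^ (α - 1) * F (u x))) x)
    (hgt : ∀ x ∈ Ioo 0 r, e < u x)
    (hFpos : ∀ y, e < y → 0 < F y)
    (hchord : ∀ y, e < y → y ≤ c → F y ≤ F c + M * (y - c))
    (hin : ∀ x ∈ Ioo 0 r, F c - M * k * x ^ 2 < 2 * k * (3 - (3 + 2 * α) * x ^ 2))
    (hΨ : ∀ x ∈ Icc 0 r, 0 < F c - M * k * x ^ 2) :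
    (∀ x ∈ Ioo 0 r, deriv u x < 0) ∧ c - k * r ^ 2 < u r := by
  have hA : ∀ x ∈ Ioo 0 r, 0 < 1 - x ^ 2 := by
    intro x hx; nlinarith [hx.1, hx.2]
  have hWlim : Tendsto (fun x : ℝ => x ^ 2 * (1 - x ^ 2) ^ α) (𝓝 0) (𝓝 0) := by
    have : ContinuousAt (fun x : ℝ => x ^ 2 * (1 - x ^ 2) ^ α) 0 := by
      apply ContinuousAt.mul (by fun_prop)
      exact ContinuousAt.rpow_const (by fun_prop) (Or.inr hα.le)
    simpa [ContinuousAt] using this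
  have hNlim : Tendsto (fun x => x ^ 2 * (1 - x ^ 2) ^ α * deriv u x) (𝓝[>] 0) (𝓝 0) := by
    simpa using (hWlim.mul hd0).mono_left (nhdsWithin_le_nhds (s := Ioi 0))
  have hneg : ∀ x ∈ Ioo 0 r, deriv u x < 0 := by
    intro x hx
    have h1 := fcx_pos (r := x) (V := fun x => -(x ^ 2 * (1 - x ^ 2) ^ α * deriv u x))
      (V' := fun x => (x ^ 2 * (1 - x ^ 2) ^ (α - 1) * F (u x))) (by simpa using hNlim.neg)
      (fun y hy => (hD y ⟨hy.1, hy.2.trans_lt hx.2⟩).2.continuousAt.neg)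
      (fun y hy => (hD y ⟨hy.1, hy.2.trans hx.2⟩).2.neg.congr_deriv (by ring))
      (fun y hy => by
        have hy' : y ∈ Ioo 0 r := ⟨hy.1, hy.2.trans hx.2⟩
        exact mul_pos (mul_pos (pow_pos hy.1 2) (rpow_pos_of_pos (hA y hy') _))
          (hFpos _ (hgt y hy'))) x ⟨hx.1, le_rfl⟩
    have h2 : 0 < x ^ 2 * (1 - x ^ 2) ^ α :=
      mul_pos (pow_pos hx.1 2) (rpow_pos_of_pos (hA x hx) _)
    have h3 : 0 < (x ^ 2 * (1 - x ^ 2) ^ α) * (- deriv u x) := by simpa using h1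
    have := (pos_iff_pos_of_mul_pos h3).1 h2
    linarith
  refine ⟨hneg, ?_⟩
  have hle : ∀ x ∈ Ioo 0 r, u x ≤ c := by
    have : AntitoneOn u (Icc 0 r) := by
      apply antitoneOn_of_deriv_nonpos (convex_Icc 0 r) hu
      · intro x hx; rw [interior_Icc] at hx; exact (hD x hx).1.differentiableWithinAt
      · intro x hx; rw [interior_Icc] at hx; exact (hneg x hx).le
    intro x hx
    rw [← hu0]
    exact this ⟨le_rfl, hr.le⟩ ⟨hx.1.le, hx.2.le⟩ hx.1.le
  -- Z and Ψ
  have hZ : ∀ x ∈ Ioo 0 r, 0 < F c + M * (u x - c) := fun x hx =>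
    (hFpos _ (hgt x hx)).trans_le (hchord _ (hgt x hx) (hle x hx))
  set G : ℝ → ℝ := fun x => (x ^ 2 * (1 - x ^ 2) ^ α * deriv u x) * (F c - M * k * x ^ 2)
    + 2 * k * (x * (x ^ 2 * (1 - x ^ 2) ^ α)) * (F c + M * (u x - c)) with hG
  have hGd : ∀ x ∈ Ioo 0 r, HasDerivAt G (x ^ 2 * (1 - x ^ 2) ^ (α - 1) *
      (- F (u x) * (F c - M * k * x ^ 2)
        + 2 * k * (3 - (3 + 2 * α) * x ^ 2) * (F c + M * (u x - c)))) x := by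
    intro x hx
    have hA0 := hA x hx
    have e1 : HasDerivAt (fun x : ℝ => 1 - x ^ 2) (-(2 * x)) x := by
      simpa using (hasDerivAt_pow 2 x).const_sub 1
    have e2 : HasDerivAt (fun x : ℝ => F c - M * k * x ^ 2) (-(M * k * (2 * x))) x := by
      simpa using ((hasDerivAt_pow 2 x).const_mul (M * k)).const_sub (F c)
    have e3 := (((hasDerivAt_id x).mul ((hasDerivAt_pow 2 x).mul
      (e1.rpow_const (p := α) (Or.inl hA0.ne')))).const_mul (2 * k))
    have e4 : HasDerivAt (fun x => F c + M * (u x - c)) (M * deriv u x) x :=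
      (((hD x hx).1.hasDerivAt.sub_const c).const_mul M).const_add (F c)
    have e5 := ((hD x hx).2.mul e2).add (e3.mul e4)
    refine e5.congr_deriv ?_
    have hq : (1 - x ^ 2) ^ α = (1 - x ^ 2) ^ (α - 1) * (1 - x ^ 2) := by
      rw [rpow_sub_one hA0.ne']; field_simp
    simp only [Pi.mul_apply, id]
    rw [hq]
    push_cast
    ring
  have hGlim : Tendsto G (𝓝[>] 0) (𝓝 0) := by
    have huc : Tendsto u (𝓝[>] 0) (𝓝 c) := by
      have h1 := hu 0 ⟨le_rfl, hr.le⟩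
      rw [ContinuousWithinAt, hu0] at h1
      refine h1.mono_left ?_
      rw [← nhdsWithin_Ioo_eq_nhdsGT hr]
      exact nhdsWithin_mono _ Ioo_subset_Icc_self
    have i1 : Tendsto (fun x : ℝ => F c - M * k * x ^ 2) (𝓝[>] 0) (𝓝 (F c - M * k * 0 ^ 2)) :=
      (Continuous.tendsto (by fun_prop) 0).mono_left nhdsWithin_le_nhds
    have i2 : Tendsto (fun x : ℝ => x) (𝓝[>] 0) (𝓝 0) := tendsto_id.mono_left nhdsWithin_le_nhds
    have i3 := (((i2.mul (hWlim.mono_left (nhdsWithin_le_nhds (s := Ioi 0)))).const_mul (2 * k)).mul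
      (((huc.sub_const c).const_mul M).const_add (F c)))
    simpa using (hNlim.mul i1).add i3
  have hGpos : ∀ x ∈ Ioo 0 r, 0 < G x := by
    intro x hx
    refine fcx_pos (r := x) hGlim (fun y hy => (hGd y ⟨hy.1, hy.2.trans_lt hx.2⟩).continuousAt)
      (fun y hy => hGd y ⟨hy.1, hy.2.trans hx.2⟩) (fun y hy => ?_) x ⟨hx.1, le_rfl⟩
    have hy' : y ∈ Ioo 0 r := ⟨hy.1, hy.2.trans hx.2⟩
    apply mul_pos (mul_pos (pow_pos hy.1 2) (rpow_pos_of_pos (hA y hy') _))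
    have j1 := hΨ y ⟨hy'.1.le, hy'.2.le⟩
    have j2 := hin y hy'
    have j3 := hchord _ (hgt y hy') (hle y hy')
    have j4 := hZ y hy'
    have j5 := mul_lt_mul_of_pos_right j2 j4
    have j6 := mul_le_mul_of_nonneg_right j3 j1.le
    linarith
  have hratio : StrictMonoOn (fun x => (F c + M * (u x - c)) / (F c - M * k * x ^ 2)) (Icc 0 r) := by
    apply strictMonoOn_of_deriv_pos (convex_Icc 0 r)
    · apply ContinuousOn.div
      · exact continuousOn_const.add (continuousOn_const.mul (hu.sub continuousOn_const))
      · fun_prop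
      · intro x hx; exact (hΨ x hx).ne'
    · intro x hx
      rw [interior_Icc] at hx
      have e2 : HasDerivAt (fun x : ℝ => F c - M * k * x ^ 2) (-(M * k * (2 * x))) x := by
        simpa using ((hasDerivAt_pow 2 x).const_mul (M * k)).const_sub (F c)
      have e4 : HasDerivAt (fun x => F c + M * (u x - c)) (M * deriv u x) x :=
        (((hD x hx).1.hasDerivAt.sub_const c).const_mul M).const_add (F c)
      have hp := hΨ x ⟨hx.1.le, hx.2.le⟩
      have e6 := e4.div e2 hp.ne'
      have e7 : deriv (fun x => (F c + M * (u x - c)) / (F c - M * k * x ^ 2)) x = _ := e6.deriv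
      rw [e7]
      apply div_pos _ (pow_pos hp 2)
      have h2 : 0 < x ^ 2 * (1 - x ^ 2) ^ α :=
        mul_pos (pow_pos hx.1 2) (rpow_pos_of_pos (hA x hx) _)
      have h3 := mul_pos hM (hGpos x hx)
      have h4 : M * G x = (x ^ 2 * (1 - x ^ 2) ^ α) * (M * deriv u x * (F c - M * k * x ^ 2) -
        (F c + M * (u x - c)) * (-(M * k * (2 * x)))) := by simp only [hG]; ring
      rw [h4] at h3
      exact (pos_iff_pos_of_mul_pos h3).1 h2
  have hF := hratio ⟨le_rfl, hr.le⟩ ⟨hr.le, le_rfl⟩ hr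
  have hp := hΨ r ⟨hr.le, le_rfl⟩
  have hp0 := hΨ 0 ⟨le_rfl, hr.le⟩
  simp only [hu0] at hF
  rw [show (F c + M * (c - c)) / (F c - M * k * 0 ^ 2) = 1 by
    simp at hp0 ⊢; exact hp0.ne', one_lt_div hp] at hF
  have : M * (c - k * r ^ 2) < M * u r := by linarith
  exact lt_of_mul_lt_mul_left this hM.le

/-- numeric facts -/
lemma fcx_num {n : ℕ} (hn : 6 ≤ n) {α c e X B0 B : ℝ} (hα : α = 2 / n)
    (hB0 : B0 = α * (α + 1)) (hB : B = α * (1 - α)) (hc : 0 < c) (he : e = n / (n + 1) * c)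
    (heB : B0 < e ^ n) (hX : X * e ^ n = B) {F : ℝ → ℝ} (hF : F = fun y => y ^ (n + 1) - B0 * y) :
    ∃ k M : ℝ, 0 < k ∧ 0 < M ∧ c - k * X = e ∧ (∀ y, e ≤ y → 0 < F y) ∧
      (∀ y, e < y → y ≤ c → F y ≤ F c + M * (y - c)) ∧
      (∀ x, 0 < x → x ≤ X → F c - M * k * x < 2 * k * (3 - (3 + 2 * α) * x)) ∧
      (∀ x, x ≤ X → 0 < F c - M * k * x) := by
  have hnR : (6 : ℝ) ≤ n := by exact_mod_cast hn
  have hn0 : (0 : ℝ) < n := by linarith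
  have hα0 : 0 < α := by rw [hα]; positivity
  have hα1 : α ≤ 1 / 3 := by rw [hα, div_le_div_iff₀ hn0 (by norm_num)]; linarith
  have hαn : α * n = 2 := by rw [hα]; field_simp
  have hB0p : 0 < B0 := by rw [hB0]; positivity
  have hBp : 0 < B := by rw [hB]; apply mul_pos hα0; linarith
  have he0 : 0 < e := by rw [he]; positivity
  have hec : c - e = c / (n + 1) := by rw [he]; field_simp; ring
  have hec0 : 0 < c - e := by rw [hec]; positivity
  have hen : 0 < e ^ n := by positivity
  have hX0 : 0 < X := by
    have : 0 < X * e ^ n := by rw [hX]; exact hBp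
    exact (pos_iff_pos_of_mul_pos this).2 hen
  have hX1 : X < 1 := by
    by_contra hcon
    have h1 : B < B0 := by rw [hB, hB0]; nlinarith
    have h2 : 1 * e ^ n ≤ X * e ^ n := mul_le_mul_of_nonneg_right (not_lt.1 hcon) hen.le
    linarith
  have hFy : ∀ y, F y = y * (y ^ n - B0) := by intro y; rw [hF]; ring
  have hFpos : ∀ y, e ≤ y → 0 < F y := by
    intro y hy
    rw [hFy]
    have : e ^ n ≤ y ^ n := pow_le_pow_left₀ he0.le hy n
    apply mul_pos (he0.trans_le hy); linarith
  have hFlt : F e < F c := by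
    rw [hFy, hFy]
    have : e ^ n ≤ c ^ n := pow_le_pow_left₀ he0.le (by linarith) n
    apply mul_lt_mul (by linarith) (by linarith) (by linarith) (by linarith)
  have hk : 0 < (c - e) / X := by positivity
  have hM : 0 < (F c - F e) / (c - e) := div_pos (by linarith) hec0
  set k := (c - e) / X with hkd
  set M := (F c - F e) / (c - e) with hMd
  have hkX : k * X = c - e := by rw [hkd]; field_simp
  have hMe : M * (c - e) = F c - F e := by rw [hMd]; field_simp
  refine ⟨k, M, hk, hM, by linarith, hFpos, ?_, ?_, ?_⟩
  · intro y hy hyc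
    have hcv : ConvexOn ℝ (Ici 0) (fun x : ℝ => x ^ (n + 1)) := convexOn_pow (n + 1)
    have hconv := hcv.2 (show e ∈ Ici 0 from he0.le) (show c ∈ Ici 0 from hc.le)
      (show 0 ≤ (c - y) / (c - e) from div_nonneg (by linarith) hec0.le)
      (show 0 ≤ (y - e) / (c - e) from div_nonneg (by linarith) hec0.le)
      (by field_simp; ring)
    simp only [smul_eq_mul] at hconv
    rw [show (c - y) / (c - e) * e + (y - e) / (c - e) * c = y by field_simp; ring] at hconv
    have e1 : F y = y ^ (n + 1) - B0 * y := by rw [hF]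
    have e2 : F c + M * (y - c) = (c - y) / (c - e) * e ^ (n + 1) + (y - e) / (c - e) * c ^ (n + 1)
        - B0 * y := by
      rw [hMd, hF]; field_simp; ring
    rw [e1, e2]; linarith
  · -- endpoints
    have hL0 : F c < 6 * k := by
      have hd : (1 : ℝ) / 3 < (n / (n + 1) : ℝ) ^ n := by
        have h1 : (1 + 1 / n : ℝ) ^ n ≤ exp 1 := by
          have := add_one_le_exp (1 / n : ℝ)
          calc (1 + 1 / n : ℝ) ^ n ≤ (exp (1 / n)) ^ n := by
                apply pow_le_pow_left₀ (by positivity); linarith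
            _ = exp 1 := by rw [← exp_nat_mul]; congr 1; field_simp
        have h2 : (n / (n + 1) : ℝ) ^ n = ((1 + 1 / n : ℝ) ^ n)⁻¹ := by
          rw [← inv_pow]; congr 1; field_simp
        rw [h2, one_div]
        have h3 := exp_one_lt_d9
        apply inv_strictAnti₀ (by positivity); linarith
      have hen2 : e ^ n = (n / (n + 1) : ℝ) ^ n * c ^ n := by rw [he, mul_pow]
      have hcn : 0 < c ^ n := by positivity
      have hen3 : c ^ n < 3 * e ^ n := by
        rw [hen2]; nlinarith
      have hB1 : (n + 1) * B ≤ 2 := by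
        rw [hB]
        nlinarith [hαn]
      have h6 : F c < c * c ^ n := by
        rw [hFy]; apply mul_lt_mul_of_pos_left _ hc; linarith
      have h7 : k * ((n + 1) * B) = c * e ^ n := by
        rw [hkd, hec, ← hX]; field_simp
      have h8 : k * ((n + 1) * B) ≤ k * 2 := mul_le_mul_of_nonneg_left hB1 hk.le
      have h9 : c * c ^ n < c * (3 * e ^ n) := mul_lt_mul_of_pos_left hen3 hc
      linarith
    have hLX : F e < 2 * k * (3 - (3 + 2 * α) * X) := by
      have h1 : k * X * n = e := by rw [hkX, hec, he]; field_simp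
      have h2 : F e * X = e * (B - B0 * X) := by rw [hFy, ← hX]; ring
      have h3 : F e * X < 2 * k * (3 - (3 + 2 * α) * X) * X := by
        rw [h2, show 2 * k * (3 - (3 + 2 * α) * X) * X = (2 * (3 - (3 + 2 * α) * X)) * (k * X)
          by ring]
        rw [← h1, show k * X * n * (B - B0 * X) = (n * (B - B0 * X)) * (k * X) by ring]
        apply mul_lt_mul_of_pos_right _ (by positivity)
        have h4 : n * (B - B0 * X) = 2 * ((1 - α) - (1 + α) * X) := by
          rw [hB, hB0]; linear_combination ((1 - α) - (1 + α) * X) * hαn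
        rw [h4]
        nlinarith
      exact lt_of_mul_lt_mul_right h3 hX0.le
    intro x hx hxX
    have hMkX : M * (k * X) = F c - F e := by rw [hkX, hMe]
    have i1 : 0 ≤ (X - x) * (6 * k - F c) := mul_nonneg (by linarith) (by linarith)
    have i2 : 0 < x * (2 * k * (3 - (3 + 2 * α) * X) - F e) := mul_pos hx (by linarith)
    have i3 : (F c - M * k * x) * X < 2 * k * (3 - (3 + 2 * α) * x) * X := by
      have : M * k * x * X = (F c - F e) * x := by rw [← hMkX]; ring
      rw [sub_mul, this]
      linarith
    exact lt_of_mul_lt_mul_right i3 hX0.le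
  · intro x hx
    have hMkX : M * (k * X) = F c - F e := by rw [hkX, hMe]
    have := hFpos e le_rfl
    have h2 : M * k * x ≤ M * k * X := mul_le_mul_of_nonneg_left hx (by positivity)
    linarith

lemma fcx_cross {u : ℝ → ℝ} {n : ℕ} {α B b ρ R : ℝ} (hα0 : 0 < α) (hα1 : α < 1)
    (hαn : α * n = 2) (hB : B = α * (1 - α)) (hb : 0 < b) (hbn : b ^ n = B)
    (hρ : 0 < ρ) (hρR : ρ < R) (hR1 : R < 1)
    (hupos : ∀ x ∈ Ioo 0 R, 0 < u x)
    (hu : Tendsto u (𝓝[>] 0) (𝓝 (u 0))) (hd0 : Tendsto (deriv u) (𝓝 0) (𝓝 0))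
    (hD : ∀ x ∈ Ioo 0 R, DifferentiableAt ℝ u x ∧
      HasDerivAt (fun x => x ^ 2 * (1 - x ^ 2) ^ α * deriv u x)
        (-(x ^ 2 * (1 - x ^ 2) ^ (α - 1) * (u x ^ (n + 1) - α * (α + 1) * u x))) x)
    (hlt : ∀ x ∈ Ioo 0 ρ, u x * x ^ α < b) :
    0 < ρ * deriv u ρ + α * u ρ := by
  have hn0 : n ≠ 0 := by rintro rfl; simp at hαn
  have hA : ∀ x ∈ Ioo 0 R, 0 < 1 - x ^ 2 := by
    intro x hx; nlinarith [hx.1, hx.2]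
  set V : ℝ → ℝ := fun x => x ^ (-α) * (x ^ 2 * (1 - x ^ 2) ^ α * deriv u x)
    + α * (x ^ (1 - α) * (1 - x ^ 2) ^ α) * u x with hV
  have hVd : ∀ x ∈ Ioo 0 R, HasDerivAt V
      ((1 - x ^ 2) ^ (α - 1) * x ^ (-α) * u x * (B - u x ^ n * x ^ 2)) x := by
    intro x hx
    have hA0 := hA x hx
    have hx0 := hx.1
    have e1 : HasDerivAt (fun x : ℝ => 1 - x ^ 2) (-(2 * x)) x := by
      simpa using (hasDerivAt_pow 2 x).const_sub 1
    have e2 := e1.rpow_const (p := α) (Or.inl hA0.ne')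
    have e3 := hasDerivAt_rpow_const (x := x) (p := -α) (Or.inl hx0.ne')
    have e4 := hasDerivAt_rpow_const (x := x) (p := 1 - α) (Or.inl hx0.ne')
    have e5 := (e3.mul (hD x hx).2).add (((e4.mul e2).const_mul α).mul (hD x hx).1.hasDerivAt)
    refine e5.congr_deriv ?_
    have hq : (1 - x ^ 2) ^ α = (1 - x ^ 2) ^ (α - 1) * (1 - x ^ 2) := by
      rw [rpow_sub_one hA0.ne']; field_simp
    have hr1 : x ^ (-α) = x ^ (-α - 1) * x := by
      rw [rpow_sub_one hx0.ne']; field_simp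
    have hr2 : x ^ (1 - α) = x ^ (-α - 1) * x * x := by
      rw [← hr1, show 1 - α = -α + 1 by ring, rpow_add_one hx0.ne']
    have hr3 : x ^ (1 - α - 1) = x ^ (-α - 1) * x := by
      rw [← hr1]; congr 1; ring
    simp only [Pi.mul_apply]
    rw [hq, hr3, hr2, hr1, hB]
    ring
  have hVlim : Tendsto V (𝓝[>] 0) (𝓝 0) := by
    have c1 : Tendsto (fun x : ℝ => x ^ (2 - α) * (1 - x ^ 2) ^ α) (𝓝 0) (𝓝 0) := by
      have : ContinuousAt (fun x : ℝ => x ^ (2 - α) * (1 - x ^ 2) ^ α) 0 := by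
        apply ContinuousAt.mul
        · exact ContinuousAt.rpow_const (by fun_prop) (Or.inr (by linarith))
        · exact ContinuousAt.rpow_const (by fun_prop) (Or.inr hα0.le)
      simpa [ContinuousAt, zero_rpow (show 2 - α ≠ 0 by linarith)] using this
    have c2 : Tendsto (fun x : ℝ => x ^ (1 - α) * (1 - x ^ 2) ^ α) (𝓝 0) (𝓝 0) := by
      have : ContinuousAt (fun x : ℝ => x ^ (1 - α) * (1 - x ^ 2) ^ α) 0 := by
        apply ContinuousAt.mul
        · exact ContinuousAt.rpow_const (by fun_prop) (Or.inr (by linarith))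
        · exact ContinuousAt.rpow_const (by fun_prop) (Or.inr hα0.le)
      simpa [ContinuousAt, zero_rpow (show 1 - α ≠ 0 by linarith)] using this
    have c3 := ((c1.mul hd0).mono_left (nhdsWithin_le_nhds (s := Ioi 0))).add
      (((c2.mono_left (nhdsWithin_le_nhds (s := Ioi 0))).const_mul α).mul hu)
    simp only [mul_zero, zero_mul, add_zero] at c3
    refine c3.congr' ?_
    filter_upwards [self_mem_nhdsWithin] with x hx
    have hx0 : 0 < x := hx
    have : x ^ (2 - α) = x ^ (-α) * x ^ 2 := by
      rw [show 2 - α = -α + (2 : ℕ) by push_cast; ring, rpow_add_natCast hx0.ne']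
    simp only [hV]; rw [this]; ring
  have hpos := fcx_pos (r := ρ) hVlim
    (fun x hx => (hVd x ⟨hx.1, hx.2.trans_lt hρR⟩).continuousAt)
    (fun x hx => hVd x ⟨hx.1, hx.2.trans hρR⟩) (fun x hx => by
      have hx' : x ∈ Ioo 0 R := ⟨hx.1, hx.2.trans hρR⟩
      have hu0 := hupos x hx'
      apply mul_pos (mul_pos (mul_pos (rpow_pos_of_pos (hA x hx') _) (rpow_pos_of_pos hx.1 _)) hu0)
      have h1 : (u x * x ^ α) ^ n < b ^ n :=
        pow_lt_pow_left₀ (hlt x hx) (mul_pos hu0 (rpow_pos_of_pos hx.1 _)).le hn0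
      rw [hbn, mul_pow, ← rpow_mul_natCast hx.1.le, hαn] at h1
      have h2 : x ^ (2 : ℝ) = x ^ 2 := by norm_cast
      rw [h2] at h1
      linarith) ρ ⟨hρ, le_rfl⟩
  have h1 : V ρ = (ρ ^ (-α) * ρ * (1 - ρ ^ 2) ^ α) * (ρ * deriv u ρ + α * u ρ) := by
    simp only [hV]
    rw [show 1 - α = -α + 1 by ring, rpow_add_one hρ.ne']
    ring
  rw [h1] at hpos
  exact (pos_iff_pos_of_mul_pos hpos).1 (mul_pos (mul_pos (rpow_pos_of_pos hρ _) hρ)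
    (rpow_pos_of_pos (hA ρ ⟨hρ, hρR⟩) _))

/-- **Lemma 1.** With `d = (p-1)/p` and `c > b₀/d`, a solution regular at
`ρ = 0` with `u(0) = c`, `u'(0) = 0` has a first crossing `ρ₁ < (b∞/(dc))^(1/α)` of the
singular solution, where `w(ρ₁) = 0` and `0 < ρ₁ w'(ρ₁) < α` for `w = u/u∞ - 1`. -/
theorem first_crossing (p : ℕ) (hp_odd : Odd p) (hp : 7 ≤ p)
    (c : ℝ) (hc : bZero p / (((p : ℝ) - 1) / p) < c)
    (u : ℝ → ℝ) (hcont : ContinuousOn u (Icc 0 1))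
    (hu : AnalyticAt ℝ u 0) (hu0 : u 0 = c) (hd0 : deriv u 0 = 0)
    (heq : ∀ ρ ∈ Ioo (0 : ℝ) 1, ProfileEq p u ρ) :
    ∃ ρ₁ : ℝ, 0 < ρ₁ ∧
      ρ₁ < (bInfty p / ((((p : ℝ) - 1) / p) * c)) ^ (1 / alphaP p) ∧
      (fun ρ => u ρ / uInfty p ρ - 1) ρ₁ = 0 ∧
      0 < ρ₁ * deriv (fun ρ => u ρ / uInfty p ρ - 1) ρ₁ ∧
      ρ₁ * deriv (fun ρ => u ρ / uInfty p ρ - 1) ρ₁ < alphaP p := by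
  
  obtain ⟨n, rfl⟩ : ∃ n, p = n + 1 := ⟨p - 1, by omega⟩
  have hn : 6 ≤ n := by omega
  have hnR : (6 : ℝ) ≤ n := by exact_mod_cast hn
  have hn0 : (0 : ℝ) < n := by linarith
  have hpc : ((n + 1 : ℕ) : ℝ) - 1 = n := by push_cast; ring
  have hα : alphaP (n + 1) = 2 / n := by rw [alphaP, hpc]
  have heq' : ∀ x ∈ Ioo (0 : ℝ) 1, (1 - x ^ 2) * deriv (deriv u) x
      + (2 / x - (2 + 2 * alphaP (n + 1)) * x) * deriv u x
      + (u x ^ (n + 1) - alphaP (n + 1) * (alphaP (n + 1) + 1) * u x) = 0 := by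
    intro x hx; have := heq x hx; rw [ProfileEq] at this; linarith
  have hb0n : bZero (n + 1) ^ n = alphaP (n + 1) * (alphaP (n + 1) + 1) := by
    rw [bZero, hα, hpc, one_div, rpow_inv_natCast_pow (by positivity) (by omega)]
    push_cast; field_simp; ring
  have hbbase : 0 < 2 * (((n + 1 : ℕ) : ℝ) - 3) / (n : ℝ) ^ 2 := by
    push_cast
    apply div_pos _ (by positivity)
    linarith
  have hbn : bInfty (n + 1) ^ n = alphaP (n + 1) * (1 - alphaP (n + 1)) := by
    rw [bInfty, hα, hpc, one_div, rpow_inv_natCast_pow hbbase.le (by omega)]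
    push_cast; field_simp; ring
  have hb : 0 < bInfty (n + 1) := by
    rw [bInfty, hpc]; exact rpow_pos_of_pos hbbase _
  have hb0 : 0 < bZero (n + 1) := by
    rw [bZero, hpc]; apply rpow_pos_of_pos; positivity
  have hU : ∀ x, uInfty (n + 1) x = bInfty (n + 1) * x ^ (-(alphaP (n + 1))) := fun x => rfl
  rw [hpc] at hc ⊢
  have hcast : ((n + 1 : ℕ) : ℝ) = n + 1 := by push_cast; ring
  rw [hcast] at hc ⊢
  simp only [hU]
  generalize alphaP (n + 1) = α at *
  generalize bInfty (n + 1) = b at *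
  generalize bZero (n + 1) = b0 at *
  have hα0 : 0 < α := by rw [hα]; positivity
  have hα1 : α < 1 := by rw [hα, div_lt_one hn0]; linarith
  have hαn : α * n = 2 := by rw [hα]; field_simp
  have hd : (0 : ℝ) < n / (n + 1) := by positivity
  have hc0 : 0 < c := lt_trans (by positivity) hc
  obtain ⟨e, he⟩ : ∃ e, e = (n : ℝ) / (n + 1) * c := ⟨_, rfl⟩
  rw [← he]
  have hb0e : b0 < e := by rw [div_lt_iff₀ hd] at hc; rw [he]; linarith
  have he0 : 0 < e := hb0.trans hb0e
  have hec : e < c := by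
    rw [he]
    have : (n : ℝ) / (n + 1) < 1 := by rw [div_lt_one (by linarith)]; linarith
    nlinarith
  have heB : α * (α + 1) < e ^ n := by
    rw [← hb0n]; exact pow_lt_pow_left₀ hb0e hb0.le (by omega)
  obtain ⟨R, hRdef⟩ : ∃ R, R = (b / e) ^ (1 / α) := ⟨_, rfl⟩
  rw [← hRdef]
  have hbe : 0 < b / e := div_pos hb he0
  have hR0 : 0 < R := by rw [hRdef]; exact rpow_pos_of_pos hbe _
  have hRα : R ^ α = b / e := by
    rw [hRdef, ← rpow_mul hbe.le, one_div, inv_mul_cancel₀ hα0.ne', rpow_one]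
  have hR2 : R ^ 2 = (b / e) ^ n := by
    rw [← hRα, ← rpow_mul_natCast hR0.le, hαn]; norm_cast
  have hX : R ^ 2 * e ^ n = α * (1 - α) := by
    rw [hR2, div_pow, hbn]; field_simp
  obtain ⟨F, hF⟩ : ∃ F : ℝ → ℝ, F = fun y => y ^ (n + 1) - α * (α + 1) * y := ⟨_, rfl⟩
  obtain ⟨k, M, hk, hM, hkX, hFpos, hchord, hin, hΨ⟩ :=
    fcx_num hn hα rfl rfl hc0 he heB hX hF
  have hR2' : (1 + α) * R ^ 2 < 1 - α := by
    have h1 : R ^ 2 * (α * (α + 1)) < R ^ 2 * e ^ n := mul_lt_mul_of_pos_left heB (by positivity)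
    rw [hX] at h1
    have h2 : α * ((1 + α) * R ^ 2) < α * (1 - α) := by linarith
    exact lt_of_mul_lt_mul_left h2 hα0.le
  have hR1 : R < 1 := by nlinarith
  have hFc : ContDiff ℝ 1 F := by rw [hF]; fun_prop
  have hdl : Tendsto (deriv u) (𝓝 0) (𝓝 0) := by
    have := hu.deriv.continuousAt.tendsto; rwa [hd0] at this
  -- the main step, on any interval where `u > e`
  have main : ∀ r, 0 < r → r ≤ R → (∀ x ∈ Ioo 0 r, e < u x) →
      (∀ x ∈ Ioo 0 r, DifferentiableAt ℝ u x ∧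
        HasDerivAt (fun x => x ^ 2 * (1 - x ^ 2) ^ α * deriv u x)
        (-(x ^ 2 * (1 - x ^ 2) ^ (α - 1) * F (u x))) x) ∧
      (∀ x ∈ Ioo 0 r, deriv u x < 0) ∧ c - k * r ^ 2 < u r := by
    intro r hr hrR hgt
    have hrR2 : ∀ x, 0 ≤ x → x ≤ r → x ^ 2 ≤ R ^ 2 := fun x h0 hx =>
      pow_le_pow_left₀ h0 (hx.trans hrR) 2
    have hr1 : r < 1 := hrR.trans_lt hR1
    have hs := fcx_sys hα0 hr (by nlinarith [hrR2 r hr.le le_rfl])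
      (hcont.mono fun x hx => ⟨hx.1.le, (hx.2.trans hr1).le⟩)
      (fun x hx => hFpos _ (hgt x hx).le) hFc (fun x hx => by
        have := heq' x ⟨hx.1, hx.2.trans hr1⟩
        rw [hF]; exact this)
    refine ⟨hs, fcx_above hr hr1 hk hM (hcont.mono fun x hx => ⟨hx.1, hx.2.trans hr1.le⟩) hu0 hdl
      hα0 hs hgt (fun y hy => hFpos y hy.le) hchord
      (fun x hx => hin _ (pow_pos hx.1 2) (hrR2 x hx.1.le hx.2.le))
      (fun x hx => hΨ _ (hrR2 x hx.1 hx.2))⟩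
  have hgtR : ∀ x ∈ Icc 0 R, e < u x := by
    intro x hx
    by_contra hcon
    obtain ⟨r, hr0, hrx, hre, hrlt⟩ := fcx_hit (f := fun x => - u x) (b := -e) hx.1
      (hcont.mono fun y hy => ⟨hy.1, (hy.2.trans hx.2).trans hR1.le⟩).neg
      (by simp only [hu0]; linarith) (by linarith [not_lt.1 hcon])
    have h1 := (main r hr0 (hrx.trans hx.2) fun y hy => by
      have := hrlt y ⟨hy.1.le, hy.2⟩; linarith).2.2
    have h2 : r ^ 2 ≤ R ^ 2 := pow_le_pow_left₀ hr0.le (hrx.trans hx.2) 2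
    have h3 : k * r ^ 2 ≤ k * R ^ 2 := mul_le_mul_of_nonneg_left h2 hk.le
    beta_reduce at hre
    linarith
  obtain ⟨hs, hneg, -⟩ := main R hR0 le_rfl fun x hx => hgtR x ⟨hx.1.le, hx.2.le⟩
  have hcR : ContinuousOn u (Icc 0 R) := hcont.mono fun x hx => ⟨hx.1, hx.2.trans hR1.le⟩
  have hfR : b < u R * R ^ α := by
    rw [hRα, ← mul_div_assoc, lt_div_iff₀ he0, mul_comm]
    exact mul_lt_mul_of_pos_right (hgtR R ⟨hR0.le, le_rfl⟩) hb
  obtain ⟨ρ, hρ0, hρR, hρb, hρlt⟩ := fcx_hit (f := fun x => u x * x ^ α) (b := b) hR0.le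
    (hcR.mul (continuousOn_id.rpow_const fun x _ => Or.inr hα0.le))
    (by simpa [zero_rpow hα0.ne'] using hb) hfR.le
  beta_reduce at hρb
  have hρR' : ρ < R := by
    rcases hρR.eq_or_lt with h | h
    · rw [h] at hρb; linarith
    · exact h
  have hρI : ρ ∈ Ioo 0 R := ⟨hρ0, hρR'⟩
  have huc : Tendsto u (𝓝[>] 0) (𝓝 (u 0)) := hu.continuousAt.tendsto.mono_left nhdsWithin_le_nhds
  have hcr := fcx_cross hα0 hα1 hαn rfl hb hbn hρ0 hρR' hR1
    (fun x hx => he0.trans (hgtR x ⟨hx.1.le, hx.2.le⟩)) huc hdl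
    (by rw [hF] at hs; exact hs) (fun x hx => hρlt x ⟨hx.1.le, hx.2⟩)
  have huρ : u ρ = b * ρ ^ (-α) := by
    rw [rpow_neg hρ0.le, ← hρb]
    have := (rpow_pos_of_pos hρ0 α).ne'
    field_simp
  have huρ0 : 0 < u ρ := he0.trans (hgtR ρ ⟨hρ0.le, hρR⟩)
  have hder : HasDerivAt (fun x => u x / (b * x ^ (-α)) - 1)
      ((ρ * deriv u ρ + α * u ρ) / (ρ * u ρ)) ρ := by
    have e1 := (hasDerivAt_rpow_const (x := ρ) (p := -α) (Or.inl hρ0.ne')).const_mul b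
    have e2 := ((hs ρ hρI).1.hasDerivAt.div e1 (by rw [← huρ]; exact huρ0.ne')).sub_const 1
    refine e2.congr_deriv ?_
    rw [rpow_sub_one hρ0.ne', show b * (-α * (ρ ^ (-α) / ρ)) = -α * (b * ρ ^ (-α)) / ρ by ring,
      ← huρ]
    field_simp
    ring
  refine ⟨ρ, hρ0, hρR', ?_, ?_, ?_⟩
  · rw [← huρ, div_self huρ0.ne', sub_self]
  · rw [hder.deriv]
    apply mul_pos hρ0 (div_pos hcr (mul_pos hρ0 huρ0))
  · rw [hder.deriv]
    have h1 : ρ * ((ρ * deriv u ρ + α * u ρ) / (ρ * u ρ)) = α + ρ * deriv u ρ / u ρ := by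
      field_simp; ring
    rw [h1]
    have h2 : ρ * deriv u ρ / u ρ < 0 :=
      div_neg_of_neg_of_pos (mul_neg_of_pos_of_neg hρ0 (hneg ρ hρI)) huρ0
    linarith
end

section
/- Let p ≥ 7 be an odd integer and let u satisfy the self-similar profile equation (1−ρ²)u''(ρ) + (2/ρ − (2+2α)ρ)u'(ρ) − α(α+1)u(ρ) + u(ρ)^p = 0 for all ρ ∈ (0,1), and set w(ρ) = u(ρ)/(b∞ ρ^{−α}) − 1. Suppose there exists ρ₁ ∈ (0,1) with w(ρ₁) = 0 and 0 ≤ ρ₁ · w'(ρ₁) ≤ α. Then w(ρ) > −2α for all ρ ∈ (ρ₁, 1). -/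
open Set Real Filter

lemma aux_U_pos (p : ℕ) (hp : 7 ≤ p) (x : ℝ) (hx : 0 < x) : 0 < uInfty p x := by
  have h7 : (7:ℝ) ≤ p := by exact_mod_cast hp
  unfold uInfty bInfty
  have h1 : 0 < 2 * ((p : ℝ) - 3) / ((p : ℝ) - 1) ^ 2 :=
    div_pos (by linarith) (by have : (0:ℝ) < (p:ℝ) - 1 := by linarith
                              positivity)
  exact mul_pos (rpow_pos_of_pos h1 _) (rpow_pos_of_pos hx _)

lemma aux_U_pow (p : ℕ) (hp : 7 ≤ p) (x : ℝ) (hx : 0 < x) :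
    x ^ 2 * uInfty p x ^ p = alphaP p * (1 - alphaP p) * uInfty p x := by
  have h7 : (7:ℝ) ≤ p := by exact_mod_cast hp
  have hp1 : (0:ℝ) < (p:ℝ) - 1 := by linarith
  obtain ⟨n, rfl⟩ : ∃ n, p = n + 1 := ⟨p - 1, by omega⟩
  have hn : ((n + 1 : ℕ) : ℝ) - 1 = n := by push_cast; ring
  have hn0 : (0:ℝ) < n := by rw [← hn]; exact hp1
  have hA : 0 ≤ 2 * (((n + 1 : ℕ) : ℝ) - 3) / (((n + 1 : ℕ) : ℝ) - 1) ^ 2 :=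
    div_nonneg (by linarith) (by positivity)
  have hb : bInfty (n + 1) ^ n = alphaP (n + 1) * (1 - alphaP (n + 1)) := by
    unfold bInfty
    rw [← rpow_natCast, ← rpow_mul hA, hn, one_div, inv_mul_cancel₀ hn0.ne', rpow_one]
    unfold alphaP
    rw [hn]
    push_cast
    field_simp
    ring
  have hr : (x ^ (-(alphaP (n + 1)))) ^ n = (x ^ 2)⁻¹ := by
    rw [← rpow_natCast, ← rpow_mul hx.le]
    have : -(alphaP (n + 1)) * (n : ℝ) = -((2 : ℕ) : ℝ) := by
      unfold alphaP
      rw [hn]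
      push_cast
      field_simp
    rw [this, rpow_neg hx.le, rpow_natCast]
  have hU : uInfty (n + 1) x ^ n = alphaP (n + 1) * (1 - alphaP (n + 1)) * (x ^ 2)⁻¹ := by
    unfold uInfty
    rw [mul_pow, hb, hr]
  rw [pow_succ (uInfty (n + 1) x) n, hU]
  field_simp

lemma aux_U_deriv (p : ℕ) (x : ℝ) (hx : 0 < x) :
    HasDerivAt (uInfty p) (-(alphaP p) * uInfty p x / x) x := by
  have h := (Real.hasDerivAt_rpow_const (x := x) (p := -(alphaP p)) (Or.inl hx.ne')).const_mul
    (bInfty p)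
  have e : uInfty p = fun y => bInfty p * y ^ (-(alphaP p)) := rfl
  rw [e]
  refine h.congr_deriv ?_
  rw [rpow_sub_one hx.ne']
  ring

lemma aux_v_deriv (p : ℕ) (hp : 7 ≤ p) (u : ℝ → ℝ) (x : ℝ) (hx : 0 < x)
    (hd : DifferentiableAt ℝ u x) :
    HasDerivAt (fun ρ => u ρ / uInfty p ρ) ((x * deriv u x + alphaP p * u x) / uInfty p x / x) x := by
  have hU := aux_U_pos p hp x hx
  have hUn := hU.ne'
  refine (hd.hasDerivAt.div (aux_U_deriv p x hx) hU.ne').congr_deriv ?_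
  field_simp
  ring

lemma aux_q_deriv (p : ℕ) (hp : 7 ≤ p) (u : ℝ → ℝ) (x : ℝ) (hx : 0 < x)
    (hd : DifferentiableAt ℝ u x) (hd2 : DifferentiableAt ℝ (deriv u) x) :
    HasDerivAt (fun ρ => (ρ * deriv u ρ + alphaP p * u ρ) / uInfty p ρ)
      ((x ^ 2 * deriv (deriv u) x + (1 + 2 * alphaP p) * x * deriv u x
        + alphaP p ^ 2 * u x) / uInfty p x / x) x := by
  have hU := aux_U_pos p hp x hx
  have h1 : HasDerivAt (fun ρ => ρ * deriv u ρ + alphaP p * u ρ)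
      (1 * deriv u x + x * deriv (deriv u) x + alphaP p * deriv u x) x :=
    ((hasDerivAt_id' x).mul hd2.hasDerivAt).add (hd.hasDerivAt.const_mul _)
  have hUn := hU.ne'
  refine (h1.div (aux_U_deriv p x hx) hU.ne').congr_deriv ?_
  field_simp
  ring

/-- The energy. -/
noncomputable def auxE (p : ℕ) (u : ℝ → ℝ) (ρ : ℝ) : ℝ :=
  (1 - ρ ^ 2) * ((ρ * deriv u ρ + alphaP p * u ρ) / uInfty p ρ) ^ 2 / 2
    + alphaP p * (1 - alphaP p) *
      ((u ρ / uInfty p ρ) ^ (p + 1) / ((p : ℝ) + 1) - (u ρ / uInfty p ρ) ^ 2 / 2)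

lemma aux_E_deriv (p : ℕ) (hp : 7 ≤ p) (u : ℝ → ℝ) (x : ℝ) (hx : 0 < x)
    (hd : DifferentiableAt ℝ u x) (hd2 : DifferentiableAt ℝ (deriv u) x)
    (heq : ProfileEq p u x) :
    HasDerivAt (auxE p u)
      (-(1 - 2 * alphaP p) * ((x * deriv u x + alphaP p * u x) / uInfty p x) ^ 2 / x) x := by
  have hU := aux_U_pos p hp x hx
  have hv := aux_v_deriv p hp u x hx hd
  have hq := aux_q_deriv p hp u x hx hd hd2
  have hg : HasDerivAt (fun ρ : ℝ => 1 - ρ ^ 2) (-(2 * x)) x := by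
    simpa using ((hasDerivAt_id' x).pow 2).const_sub 1
  have h := ((hg.mul (hq.pow 2)).div_const 2).add
    ((((hv.pow (p + 1)).div_const ((p : ℝ) + 1)).sub ((hv.pow 2).div_const 2)).const_mul
      (alphaP p * (1 - alphaP p)))
  have hvp : alphaP p * (1 - alphaP p) * (u x / uInfty p x) ^ p
      = x ^ 2 * u x ^ p / uInfty p x := by
    have := aux_U_pow p hp x hx
    rw [div_pow]
    have h2 : uInfty p x ^ p ≠ 0 := (pow_pos hU p).ne'
    field_simp
    linear_combination (-(u x ^ p)) * this
  refine (h.congr_deriv ?_).congr_of_eventuallyEq (Eventually.of_forall fun y => ?_)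
  swap
  · simp [auxE]
  have hup : u x ^ p = -((1 - x ^ 2) * deriv (deriv u) x
      + (2 / x - (2 + 2 * alphaP p) * x) * deriv u x - alphaP p * (alphaP p + 1) * u x) := by
    unfold ProfileEq at heq
    linarith
  rw [hup] at hvp
  have hp0 : (p : ℝ) + 1 ≠ 0 := by positivity
  simp only [Nat.add_sub_cancel, Nat.cast_add, Nat.cast_one, Nat.cast_ofNat, Pi.pow_apply, show (2 - 1 : ℕ) = 1 from rfl, pow_one]
  generalize (u x / uInfty p x) ^ p = Z at *
  generalize deriv (deriv u) x = c at *
  generalize deriv u x = b at *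
  generalize u x = a at *
  generalize uInfty p x = U at *
  generalize alphaP p = A at *
  have hsplit : ∀ Q : ℝ, A * (1 - A) * (((p : ℝ) + 1) * Z * Q / ((p : ℝ) + 1)) = (A * (1 - A) * Z) * Q := by
    intro Q
    field_simp
  rw [mul_sub, hsplit, hvp]
  have hUn := hU.ne'
  clear h hq hv heq
  field_simp
  ring

/-- **Corollary to Lemma 1.** If `w = u/u∞ - 1` vanishes at some
`ρ₁ ∈ (0,1)` with `0 ≤ ρ₁ w'(ρ₁) ≤ α`, then `w > -2α` on `(ρ₁, 1)`. -/
theorem w_lower_bound (p : ℕ) (hp_odd : Odd p) (hp : 7 ≤ p)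
    (u : ℝ → ℝ)
    (hdiff : ∀ ρ ∈ Ioo (0 : ℝ) 1, DifferentiableAt ℝ u ρ)
    (hdiff2 : ∀ ρ ∈ Ioo (0 : ℝ) 1, DifferentiableAt ℝ (deriv u) ρ)
    (heq : ∀ ρ ∈ Ioo (0 : ℝ) 1, ProfileEq p u ρ)
    (ρ₁ : ℝ) (hρ₁ : ρ₁ ∈ Ioo (0 : ℝ) 1)
    (hw0 : (fun ρ => u ρ / uInfty p ρ - 1) ρ₁ = 0)
    (hwd0 : 0 ≤ ρ₁ * deriv (fun ρ => u ρ / uInfty p ρ - 1) ρ₁)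
    (hwd1 : ρ₁ * deriv (fun ρ => u ρ / uInfty p ρ - 1) ρ₁ ≤ alphaP p) :
    ∀ ρ ∈ Ioo ρ₁ 1, -2 * alphaP p < u ρ / uInfty p ρ - 1 := by
  have h7 : (7:ℝ) ≤ p := by exact_mod_cast hp
  have hp1 : (0:ℝ) < (p:ℝ) - 1 := by linarith
  have ha0 : 0 < alphaP p := by unfold alphaP; positivity
  have ha1 : alphaP p ≤ 1 / 3 := by
    unfold alphaP
    rw [div_le_div_iff₀ hp1 (by norm_num)]
    linarith
  have hap : alphaP p * ((p : ℝ) + 1) = 2 * (1 + alphaP p) := by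
    unfold alphaP
    field_simp
    ring
  obtain ⟨h0, h1⟩ := hρ₁
  have hv1 : u ρ₁ / uInfty p ρ₁ = 1 := by
    simp only at hw0
    linarith
  have hderiv : ρ₁ * deriv (fun ρ => u ρ / uInfty p ρ - 1) ρ₁
      = (ρ₁ * deriv u ρ₁ + alphaP p * u ρ₁) / uInfty p ρ₁ := by
    rw [((aux_v_deriv p hp u ρ₁ h0 (hdiff _ ⟨h0, h1⟩)).sub_const 1).deriv]
    field_simp
  rw [hderiv] at hwd0 hwd1
  intro ρ hρ
  by_contra! hcon
  have hcont : ContinuousOn (fun ρ => u ρ / uInfty p ρ) (Icc ρ₁ ρ) := fun y hy =>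
    (aux_v_deriv p hp u y (by linarith [hy.1])
      (hdiff y ⟨by linarith [hy.1], by linarith [hy.2, hρ.2]⟩)).continuousAt.continuousWithinAt
  have hivt := intermediate_value_Icc' hρ.1.le hcont
  obtain ⟨r, hr, hvr⟩ := hivt (show 1 - 2 * alphaP p ∈ _ from
    ⟨by linarith, by simp only [hv1]; linarith⟩)
  simp only at hvr
  have hED : ∀ y ∈ Icc ρ₁ r, HasDerivAt (auxE p u)
      (-(1 - 2 * alphaP p) * ((y * deriv u y + alphaP p * u y) / uInfty p y) ^ 2 / y) y := by
    intro y hy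
    have hy' : y ∈ Ioo (0:ℝ) 1 := ⟨by linarith [hy.1], by linarith [hy.2, hr.2, hρ.2]⟩
    exact aux_E_deriv p hp u y hy'.1 (hdiff y hy') (hdiff2 y hy') (heq y hy')
  have hanti : AntitoneOn (auxE p u) (Icc ρ₁ r) := by
    apply antitoneOn_of_deriv_nonpos (convex_Icc _ _)
    · exact fun y hy => (hED y hy).continuousAt.continuousWithinAt
    · intro y hy
      exact (hED y (interior_subset hy)).differentiableAt.differentiableWithinAt
    · intro y hy
      have hy' := interior_subset hy
      rw [(hED y hy').deriv]
      have hy0 : 0 < y := by linarith [hy'.1]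
      apply div_nonpos_of_nonpos_of_nonneg _ hy0.le
      exact mul_nonpos_of_nonpos_of_nonneg (by linarith) (sq_nonneg _)
  have hE := hanti (left_mem_Icc.2 hr.1) (right_mem_Icc.2 hr.1) hr.1
  unfold auxE at hE
  rw [hvr, hv1] at hE
  generalize (ρ₁ * deriv u ρ₁ + alphaP p * u ρ₁) / uInfty p ρ₁ = q at *
  have hQ : 0 ≤ (1 - r ^ 2) * ((r * deriv u r + alphaP p * u r) / uInfty p r) ^ 2 := by
    apply mul_nonneg _ (sq_nonneg _)
    nlinarith [hr.1, hr.2, hρ.2]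
  have hqq : (1 - ρ₁ ^ 2) * q ^ 2 < alphaP p ^ 2 := by
    have : q ^ 2 ≤ alphaP p ^ 2 := by nlinarith
    have h3 : 0 < ρ₁ ^ 2 := by positivity
    have h4 : ρ₁ ^ 2 < 1 := by nlinarith
    nlinarith [mul_le_mul_of_nonneg_left this (by linarith : 0 ≤ 1 - ρ₁ ^ 2), mul_pos h3 (pow_pos ha0 2)]
  have hpw : 0 ≤ (1 - 2 * alphaP p) ^ (p + 1) / ((p : ℝ) + 1) :=
    div_nonneg (pow_nonneg (by linarith) _) (by linarith)
  have hpi : 1 / ((p : ℝ) + 1) = alphaP p / (2 * (1 + alphaP p)) := by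
    rw [div_eq_div_iff (by linarith) (by linarith)]
    linarith
  rw [one_pow, hpi] at hE
  generalize (1 - 2 * alphaP p) ^ (p + 1) / ((p : ℝ) + 1) = P at *
  generalize alphaP p = a at *
  have hB : 0 < a * (1 - a) := mul_pos ha0 (by linarith)
  have hBP := mul_nonneg hB.le hpw
  have hmain : a * (1 - a) * (a / (2 * (1 + a)) - 1 / 2) + a ^ 2 / 2
      ≤ a * (1 - a) * (-(1 - 2 * a) ^ 2 / 2) := by
    have e : a * (1 - a) * (-(1 - 2 * a) ^ 2 / 2)
        - (a * (1 - a) * (a / (2 * (1 + a)) - 1 / 2) + a ^ 2 / 2)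
        = a ^ 2 * (2 * (1 - a) ^ 2 * (1 + a) - 1) / (1 + a) := by
      field_simp
      ring
    have : 0 ≤ a ^ 2 * (2 * (1 - a) ^ 2 * (1 + a) - 1) / (1 + a) := by
      apply div_nonneg (mul_nonneg (sq_nonneg _) _) (by linarith)
      have : (4:ℝ) / 9 ≤ (1 - a) ^ 2 := by nlinarith
      have : (8:ℝ) / 9 ≤ (1 - a) * (1 + a) := by nlinarith
      nlinarith
    linarith
  linarith
end

section
/- Let p ≥ 7 be an odd integer. There exists ρ₂ ∈ (0,1) with the following property: for every natural number N there exists C > 0 such that, whenever c > C and u : [0,1] → ℝ is continuous, real-analytic at ρ = 0 with u(0) = c and u'(0) = 0, and satisfies the self-similar profile equation (1−ρ²)u''(ρ) + (2/ρ − (2+2α)ρ)u'(ρ) − α(α+1)u(ρ) + u(ρ)^p = 0 for all ρ ∈ (0,1), the set { ρ ∈ (0, ρ₂) : u(ρ) = b∞ ρ^{−α} } has at least N elements. -/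
open Set Real Filter

open Topology in
lemma core_const {D q a b : ℝ → ℝ} {A B : ℝ}
    (h1 : ∀ x ∈ Ioo A B, DifferentiableAt ℝ D x → HasDerivAt D 0 x)
    (h2 : ∀ x ∈ Ioo A B, ¬ DifferentiableAt ℝ D x → D x = q x)
    (h3 : ∀ x ∈ Ioo A B, ∀ y ∈ Ioo A B, x < y → ∀ d, (∀ z ∈ Ioo x y, D z = d) → D x = d ∧ D y = d)
    (hq : ∀ x ∈ Ioo A B, HasDerivAt q (a x + b x * D x) x)
    (ha : ContinuousOn a (Ioo A B)) (hb : ContinuousOn b (Ioo A B)) :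
    ∀ x ∈ Ioo A B, ∀ y ∈ Ioo A B, x ≤ y → D x = D y := by
  have c1 : ∀ x ∈ Ioo A B, ∀ y ∈ Ioo A B, x ≤ y → (∀ z ∈ Ioo x y, D z ≠ q z) → D x = D y := by
    intro x hx y hy hxy hz
    rcases hxy.eq_or_lt with rfl | hxy
    · rfl
    have hsub : ∀ z ∈ Ioo x y, z ∈ Ioo A B := fun z hz => ⟨hx.1.trans hz.1, hz.2.trans hy.2⟩
    have hd : ∀ z ∈ Ioo x y, HasDerivAt D 0 z := by
      intro z hz'
      apply h1 z (hsub z hz')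
      by_contra hn
      exact hz z hz' (h2 z (hsub z hz') hn)
    have hm : (x + y) / 2 ∈ Ioo x y := ⟨by linarith, by linarith⟩
    have := h3 x hx y hy hxy (D ((x + y) / 2)) (fun z hz' =>
      isOpen_Ioo.is_const_of_deriv_eq_zero isPreconnected_Ioo
        (fun w hw => (hd w hw).differentiableAt.differentiableWithinAt)
        (fun w hw => (hd w hw).deriv) hz' hm)
    rw [this.1, this.2]
  have c2 : ∀ x ∈ Ioo A B, ∀ y ∈ Ioo A B, x ≤ y → D x = D y ∨
      ∃ s ∈ Icc x y, ∃ t ∈ Icc x y, D x = q s ∧ D y = q t := by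
    intro x hx y hy hxy
    have hsub : ∀ z ∈ Icc x y, z ∈ Ioo A B := fun z hz => ⟨hx.1.trans_le hz.1, hz.2.trans_lt hy.2⟩
    set Z : Set ℝ := {z | z ∈ Icc x y ∧ D z = q z} with hZ
    have hcl : IsClosed Z := by
      rw [← isOpen_compl_iff, isOpen_iff_mem_nhds]
      intro z hz
      by_cases hzI : z ∈ Icc x y
      · have hne : D z ≠ q z := fun h => hz ⟨hzI, h⟩
        have hdz : DifferentiableAt ℝ D z := by
          by_contra hn
          exact hne (h2 z (hsub z hzI) hn)
        have := (hdz.continuousAt.ne_iff_eventually_ne (hq z (hsub z hzI)).continuousAt).1 hne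
        filter_upwards [this] with w hw hw'
        exact hw hw'.2
      · filter_upwards [isClosed_Icc.isOpen_compl.mem_nhds hzI] with w hw hw'
        exact hw hw'.1
    have hcomp : IsCompact Z := isCompact_Icc.of_isClosed_subset hcl (fun z hz => hz.1)
    rcases Z.eq_empty_or_nonempty with he | hne
    · left
      apply c1 x hx y hy hxy
      intro z hz h
      have : z ∈ Z := ⟨Ioo_subset_Icc_self hz, h⟩
      rw [he] at this
      exact this
    · right
      have hs := hcomp.sInf_mem hne
      have ht := hcomp.sSup_mem hne
      refine ⟨sInf Z, hs.1, sSup Z, ht.1, ?_, ?_⟩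
      · rw [← hs.2]
        apply c1 x hx _ (hsub _ hs.1) hs.1.1
        intro z hz h
        exact absurd (csInf_le hcomp.bddBelow (show z ∈ Z from ⟨⟨hz.1.le, hz.2.le.trans hs.1.2⟩, h⟩))
          (not_le.2 hz.2)
      · rw [← ht.2]
        symm
        apply c1 _ (hsub _ ht.1) y hy ht.1.2
        intro z hz h
        exact absurd (le_csSup hcomp.bddAbove (show z ∈ Z from ⟨⟨ht.1.1.trans hz.1.le, hz.2.le⟩, h⟩))
          (not_le.2 hz.1)
  intro x hx y hy hxy
  have hsub : Icc x y ⊆ Ioo A B := fun z hz => ⟨hx.1.trans_le hz.1, hz.2.trans_lt hy.2⟩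
  obtain ⟨K1, hK1⟩ := isCompact_Icc.exists_bound_of_continuousOn
    (f := q) (s := Icc x y) (fun z hz => (hq z (hsub hz)).continuousAt.continuousWithinAt)
  obtain ⟨Ka, hKa⟩ := isCompact_Icc.exists_bound_of_continuousOn (ha.mono hsub)
  obtain ⟨Kb, hKb⟩ := isCompact_Icc.exists_bound_of_continuousOn (hb.mono hsub)
  have hxI : x ∈ Icc x y := ⟨le_rfl, hxy⟩
  have hD : ∀ z ∈ Icc x y, ‖D z‖ ≤ ‖D x‖ + K1 := by
    intro z hz
    have hK10 := (norm_nonneg _).trans (hK1 x hxI)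
    rcases c2 x hx z (hsub hz) hz.1 with h | ⟨s, hs, t, ht, h1, h2⟩
    · rw [h]; linarith
    · rw [h2]
      have := hK1 t ⟨ht.1, ht.2.trans hz.2⟩
      linarith [norm_nonneg (D x)]
  have hKa0 := (norm_nonneg _).trans (hKa x hxI)
  have hKb0 := (norm_nonneg _).trans (hKb x hxI)
  have hD0 := (norm_nonneg _).trans (hD x hxI)
  set K : NNReal := ⟨Ka + Kb * (‖D x‖ + K1), by positivity⟩
  have hql : LipschitzOnWith K q (Icc x y) := by
    apply (convex_Icc x y).lipschitzOnWith_of_nnnorm_hasDerivWithin_le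
      (fun z hz => (hq z (hsub hz)).hasDerivWithinAt)
    intro z hz
    rw [← NNReal.coe_le_coe, coe_nnnorm]
    show _ ≤ Ka + Kb * (‖D x‖ + K1)
    refine (norm_add_le _ _).trans (add_le_add (hKa z hz) ?_)
    rw [norm_mul]
    exact mul_le_mul (hKb z hz) (hD z hz) (norm_nonneg _) hKb0
  have hDl : LipschitzOnWith K D (Icc x y) := by
    apply LipschitzOnWith.of_dist_le_mul
    have key : ∀ z ∈ Icc x y, ∀ w ∈ Icc x y, z ≤ w → dist (D z) (D w) ≤ K * dist z w := by
      intro z hz w hw hzw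
      rcases c2 z (hsub hz) w (hsub hw) hzw with h | ⟨s, hs, t, ht, h1, h2⟩
      · rw [h, dist_self]; positivity
      · rw [h1, h2]
        refine (hql.dist_le_mul s ⟨hz.1.trans hs.1, hs.2.trans hw.2⟩ t
          ⟨hz.1.trans ht.1, ht.2.trans hw.2⟩).trans ?_
        apply mul_le_mul_of_nonneg_left _ K.2
        exact Real.dist_le_of_mem_Icc hs ht |>.trans (by rw [dist_comm, Real.dist_eq]; exact le_abs_self _)
    intro z hz w hw
    rcases le_total z w with h | h
    · exact key z hz w hw h
    · rw [dist_comm, dist_comm z]; exact key w hw z hz h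
  have hac : AbsolutelyContinuousOnInterval D x y := by
    apply LipschitzOnWith.absolutelyContinuousOnInterval (K := K)
    rwa [uIcc_of_le hxy]
  have hae : ∀ᵐ z, z ∈ uIcc x y → HasDerivAt D 0 z := by
    filter_upwards [hac.ae_differentiableAt] with z hz hz'
    exact h1 z (hsub (by rwa [uIcc_of_le hxy] at hz')) (hz hz')
  obtain ⟨C, hC⟩ := hac.const_of_ae_hasDerivAt_zero hae
  rw [hC _ left_mem_uIcc, hC _ right_mem_uIcc]


open Topology in
lemma reg_diff {u : ℝ → ℝ} {α R : ℝ} {p : ℕ} (hR : R ≤ 1 / 2)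
    (hu : ContinuousOn u (Icc 0 1))
    (hneg : ∀ ρ ∈ Ioo (0 : ℝ) R, α * (α + 1) * u ρ - u ρ ^ p < 0)
    (heq : ∀ ρ ∈ Ioo (0 : ℝ) R, (1 - ρ ^ 2) * deriv (deriv u) ρ
      + (2 / ρ - (2 + 2 * α) * ρ) * deriv u ρ - α * (α + 1) * u ρ + u ρ ^ p = 0) :
    ∀ ρ ∈ Ioo (0 : ℝ) R, DifferentiableAt ℝ u ρ := by
  intro ρ hρ
  by_contra hn
  have hd0 : deriv u ρ = 0 := deriv_zero_of_not_differentiableAt hn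
  have h2 : deriv (deriv u) ρ ≠ 0 := by
    intro h
    have := heq ρ hρ
    rw [hd0, h] at this
    linarith [hneg ρ hρ]
  have hdd : DifferentiableAt ℝ (deriv u) ρ := by
    by_contra h
    exact h2 (deriv_zero_of_not_differentiableAt h)
  have hne := hdd.hasDerivAt.eventually_ne (c := 0) h2
  have hcont : ContinuousAt u ρ :=
    hu.continuousAt (Icc_mem_nhds hρ.1 (by linarith [hρ.2]))
  have hlim : Tendsto (deriv u) (𝓝 ρ) (𝓝 0) := by
    have := hdd.continuousAt.tendsto
    rwa [hd0] at this
  have hdiff : ∀ x ∈ {z | deriv u z ≠ 0}, DifferentiableAt ℝ u x := by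
    intro x hx
    by_contra h
    exact hx (deriv_zero_of_not_differentiableAt h)
  have hdo : DifferentiableOn ℝ u {z | deriv u z ≠ 0} :=
    fun x hx => (hdiff x hx).differentiableWithinAt
  have hr := hasDerivWithinAt_Ici_of_tendsto_deriv hdo hcont.continuousWithinAt
    (a := ρ) (nhdsWithin_mono _ (fun x hx => ne_of_gt hx) hne)
    (hlim.mono_left nhdsWithin_le_nhds)
  have hl := hasDerivWithinAt_Iic_of_tendsto_deriv hdo hcont.continuousWithinAt
    (a := ρ) (nhdsWithin_mono _ (fun x hx => ne_of_lt hx) hne)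
    (hlim.mono_left nhdsWithin_le_nhds)
  have := hl.union hr
  rw [Iic_union_Ici, hasDerivWithinAt_univ] at this
  exact hn this.differentiableAt

noncomputable def muF (α ρ : ℝ) : ℝ := ρ ^ 2 * (1 - ρ ^ 2) ^ α

lemma muF_pos {α ρ : ℝ} (h0 : 0 < ρ) (h1 : ρ < 1) : 0 < muF α ρ := by
  have : 0 < 1 - ρ ^ 2 := by nlinarith
  unfold muF; positivity

lemma muF_deriv {α ρ : ℝ} (h0 : 0 < ρ) (h1 : ρ < 1) :
    HasDerivAt (muF α) (muF α ρ * (2 / ρ - (2 + 2 * α) * ρ) / (1 - ρ ^ 2)) ρ := by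
  have h : 0 < 1 - ρ ^ 2 := by nlinarith
  have e1 : HasDerivAt (fun x : ℝ => 1 - x ^ 2) (-(2 * ρ)) ρ := by
    simpa using (hasDerivAt_pow 2 ρ).const_sub 1
  have e2 := e1.rpow_const (p := α) (Or.inl h.ne')
  have e3 := (hasDerivAt_pow 2 ρ).mul e2
  refine HasDerivAt.congr_deriv (show HasDerivAt _ _ _ from e3) ?_
  rw [Real.rpow_sub_one h.ne']
  unfold muF
  field_simp
  push_cast
  ring

open Topology in
lemma reg_diff2 {u : ℝ → ℝ} {α R : ℝ} {p : ℕ} (hα : 0 < α) (hα3 : α ≤ 1 / 3) (hR : R ≤ 1 / 2)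
    (hu : ContinuousOn u (Icc 0 1))
    (hneg : ∀ ρ ∈ Ioo (0 : ℝ) R, α * (α + 1) * u ρ - u ρ ^ p < 0)
    (heq : ∀ ρ ∈ Ioo (0 : ℝ) R, (1 - ρ ^ 2) * deriv (deriv u) ρ
      + (2 / ρ - (2 + 2 * α) * ρ) * deriv u ρ - α * (α + 1) * u ρ + u ρ ^ p = 0) :
    ∀ ρ ∈ Ioo (0 : ℝ) R, DifferentiableAt ℝ (deriv u) ρ := by
  intro ρ₀ hρ₀
  have hdu := reg_diff hR hu hneg heq
  have hR1 : ∀ x ∈ Ioo (0:ℝ) R, x < 1 := fun x hx => by linarith [hx.2]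
  have hμ0 : ∀ x ∈ Ioo (0:ℝ) R, muF α x ≠ 0 := fun x hx => (muF_pos hx.1 (hR1 x hx)).ne'
  have h1x : ∀ x ∈ Ioo (0:ℝ) R, 1 - x ^ 2 ≠ 0 := fun x hx => by
    have := hR1 x hx; have := hx.1; nlinarith
  have hk : ∀ x ∈ Ioo (0:ℝ) R, 2 / x - (2 + 2 * α) * x ≠ 0 := fun x hx => by
    have h1 := hx.1
    have h2 : x < 1 / 2 := by linarith [hx.2]
    have h3 : 4 < 2 / x := by rw [lt_div_iff₀ h1]; linarith
    have h4 : (2 + 2 * α) * x < 4 := by nlinarith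
    linarith
  have hx0 : ∀ x ∈ Ioo (0:ℝ) R, x ≠ 0 := fun x hx => hx.1.ne'
  have cu : ContinuousOn u (Ioo 0 R) := fun x hx => (hdu x hx).continuousAt.continuousWithinAt
  have cμ : ContinuousOn (muF α) (Ioo 0 R) :=
    fun x hx => (muF_deriv hx.1 (hR1 x hx)).continuousAt.continuousWithinAt
  set h : ℝ → ℝ := fun x => α * (α + 1) * u x - u x ^ p with hh
  set f : ℝ → ℝ := fun x => muF α x / (1 - x ^ 2) * h x with hf
  have ch : ContinuousOn h (Ioo 0 R) := by fun_prop
  have cf : ContinuousOn f (Ioo 0 R) :=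
    (cμ.div (by fun_prop) h1x).mul ch
  set ψ : ℝ → ℝ := fun x => ∫ t in ρ₀..x, f t with hψ
  have dψ : ∀ x ∈ Ioo (0:ℝ) R, HasDerivAt ψ (f x) x := by
    intro x hx
    apply intervalIntegral.integral_hasDerivAt_right
    · apply ContinuousOn.intervalIntegrable
      apply cf.mono
      intro z hz
      rw [uIcc, mem_Icc] at hz
      exact ⟨lt_of_lt_of_le (lt_min hρ₀.1 hx.1) hz.1, lt_of_le_of_lt hz.2 (max_lt hρ₀.2 hx.2)⟩
    · exact cf.stronglyMeasurableAtFilter isOpen_Ioo x hx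
    · exact cf.continuousAt (isOpen_Ioo.mem_nhds hx)
  have cψ : ContinuousOn ψ (Ioo 0 R) := fun x hx => (dψ x hx).continuousAt.continuousWithinAt
  set D : ℝ → ℝ := fun x => muF α x * deriv u x - ψ x with hD
  have hDu : ∀ x ∈ Ioo (0:ℝ) R, deriv u x = (D x + ψ x) / muF α x := by
    intro x hx
    have := hμ0 x hx
    simp only [hD]; field_simp; ring
  have hdu2 : ∀ x ∈ Ioo (0:ℝ) R, DifferentiableAt ℝ D x → DifferentiableAt ℝ (deriv u) x := by
    intro x hx hd
    have : DifferentiableAt ℝ (fun x => (D x + ψ x) / muF α x) x :=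
      (hd.add (dψ x hx).differentiableAt).div (muF_deriv hx.1 (hR1 x hx)).differentiableAt (hμ0 x hx)
    apply this.congr_of_eventuallyEq
    filter_upwards [isOpen_Ioo.mem_nhds hx] with y hy using hDu y hy
  set k : ℝ → ℝ := fun x => 2 / x - (2 + 2 * α) * x with hkdef
  set k' : ℝ → ℝ := fun x => -(2 / x ^ 2) - (2 + 2 * α) with hk'def
  have dk : ∀ x ∈ Ioo (0:ℝ) R, HasDerivAt k (k' x) x := by
    intro x hx
    have e1 := (hasDerivAt_inv (hx0 x hx)).const_mul 2
    have e2 := (hasDerivAt_id x).const_mul (2 + 2 * α)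
    refine HasDerivAt.congr_deriv (show HasDerivAt _ _ _ from e1.sub e2) ?_
    simp only [hk'def]
    field_simp
  have ck : ContinuousOn k (Ioo 0 R) := fun x hx => (dk x hx).continuousAt.continuousWithinAt
  have ck' : ContinuousOn k' (Ioo 0 R) := by
    apply ContinuousOn.sub _ continuousOn_const
    apply ContinuousOn.neg
    exact continuousOn_const.div (by fun_prop) (fun x hx => pow_ne_zero 2 (hx0 x hx))
  set m' : ℝ → ℝ := fun x => muF α x * k x / (1 - x ^ 2) with hm'
  have dμ : ∀ x ∈ Ioo (0:ℝ) R, HasDerivAt (muF α) (m' x) x := fun x hx => muF_deriv hx.1 (hR1 x hx)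
  have cm' : ContinuousOn m' (Ioo 0 R) := (cμ.mul ck).div (by fun_prop) h1x
  set M' : ℝ → ℝ := fun x => (m' x * k x - muF α x * k' x) / k x ^ 2 with hM'
  have cM' : ContinuousOn M' (Ioo 0 R) :=
    ((cm'.mul ck).sub (cμ.mul ck')).div (ck.pow 2) (fun x hx => pow_ne_zero 2 (hk x hx))
  set h' : ℝ → ℝ := fun x => α * (α + 1) - p * u x ^ (p - 1) with hh'
  have ch' : ContinuousOn h' (Ioo 0 R) := by fun_prop
  have dh : ∀ x ∈ Ioo (0:ℝ) R, HasDerivAt h (h' x * deriv u x) x := by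
    intro x hx
    have e := (hdu x hx).hasDerivAt
    refine HasDerivAt.congr_deriv (show HasDerivAt _ _ _ from (e.const_mul (α * (α + 1))).sub (e.pow p)) ?_
    simp only [hh']; ring
  set q : ℝ → ℝ := fun x => muF α x / k x * h x - ψ x with hqdef
  have key := core_const (D := D) (q := q) (A := 0) (B := R)
    (a := fun x => M' x * h x - f x + muF α x / k x * h' x * ψ x / muF α x)
    (b := fun x => muF α x / k x * h' x / muF α x) ?_ ?_ ?_ ?_ ?_ ?_
  · have hconst : ∀ x ∈ Ioo (0:ℝ) R, D x = D ρ₀ := by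
      intro x hx
      rcases le_total x ρ₀ with hle | hle
      · exact key x hx ρ₀ hρ₀ hle
      · exact (key ρ₀ hρ₀ x hx hle).symm
    apply hdu2 ρ₀ hρ₀
    apply (differentiableAt_const (D ρ₀)).congr_of_eventuallyEq
    filter_upwards [isOpen_Ioo.mem_nhds hρ₀] with y hy using hconst y hy
  · intro x hx hd
    have e := ((dμ x hx).mul (hdu2 x hx hd).hasDerivAt).sub (dψ x hx)
    refine HasDerivAt.congr_deriv (show HasDerivAt _ _ _ from e) ?_
    have h1 := h1x x hx
    have := heq x hx
    have e3 : m' x * deriv u x + muF α x * deriv (deriv u) x - f x =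
      muF α x / (1 - x ^ 2) * ((1 - x ^ 2) * deriv (deriv u) x
      + (2 / x - (2 + 2 * α) * x) * deriv u x - α * (α + 1) * u x + u x ^ p) := by
      simp only [hm', hf, hh, hkdef]
      have := hx0 x hx
      field_simp
      ring
    exact e3.trans (by rw [this, mul_zero])
  · intro x hx hd
    have hn : ¬ DifferentiableAt ℝ (deriv u) x := by
      intro hn
      exact hd (((dμ x hx).differentiableAt.mul hn).sub (dψ x hx).differentiableAt)
    have := heq x hx
    rw [deriv_zero_of_not_differentiableAt hn] at this
    have e : deriv u x = h x / k x := by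
      rw [eq_div_iff (hk x hx)]
      simp only [hh, hkdef]; linarith
    simp only [hD, hqdef]
    rw [e]; ring
  · intro x hx y hy hxy d hd
    have hsub : ∀ z ∈ Ioo x y, z ∈ Ioo 0 R := fun z hz => ⟨hx.1.trans hz.1, hz.2.trans hy.2⟩
    have hdo : DifferentiableOn ℝ u (Ioo x y) := fun z hz => (hdu z (hsub z hz)).differentiableWithinAt
    have hde : ∀ z ∈ Ioo x y, deriv u z = (d + ψ z) / muF α z := by
      intro z hz; rw [hDu z (hsub z hz), hd z hz]
    have hlim : ∀ z ∈ Ioo (0:ℝ) R, Tendsto (fun z => (d + ψ z) / muF α z) (𝓝 z) (𝓝 ((d + ψ z) / muF α z)) :=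
      fun z hz => ((continuousAt_const.add (dψ z hz).continuousAt).div (dμ z hz).continuousAt (hμ0 z hz))
    have fin : ∀ z ∈ Ioo (0:ℝ) R, deriv u z = (d + ψ z) / muF α z → D z = d := by
      intro z hz he
      have := hμ0 z hz
      simp only [hD]; rw [he]; field_simp; ring
    constructor
    · apply fin x hx
      have hm : Ioo x y ∈ 𝓝[>] x := Ioo_mem_nhdsGT hxy
      have := hasDerivWithinAt_Ici_of_tendsto_deriv hdo (hdu x hx).continuousAt.continuousWithinAt hm
        (e := (d + ψ x) / muF α x) (((hlim x hx).mono_left nhdsWithin_le_nhds).congr' (by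
          filter_upwards [hm] with z hz using (hde z hz).symm))
      exact (uniqueDiffOn_Ici x x self_mem_Ici).eq_deriv _ ((hdu x hx).hasDerivAt.hasDerivWithinAt) this
    · apply fin y hy
      have hm : Ioo x y ∈ 𝓝[<] y := Ioo_mem_nhdsLT hxy
      have := hasDerivWithinAt_Iic_of_tendsto_deriv hdo (hdu y hy).continuousAt.continuousWithinAt hm
        (e := (d + ψ y) / muF α y) (((hlim y hy).mono_left nhdsWithin_le_nhds).congr' (by
          filter_upwards [hm] with z hz using (hde z hz).symm))
      exact (uniqueDiffOn_Iic y y self_mem_Iic).eq_deriv _ ((hdu y hy).hasDerivAt.hasDerivWithinAt) this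
  · intro x hx
    have e := (((dμ x hx).div (dk x hx) (hk x hx)).mul (dh x hx)).sub (dψ x hx)
    refine HasDerivAt.congr_deriv (show HasDerivAt _ _ _ from e) ?_
    rw [hDu x hx]
    simp only [hM', Pi.div_apply]
    ring
  · exact ((cM'.mul ch).sub cf).add
      ((((cμ.div ck hk).mul ch').mul cψ).div cμ hμ0)
  · exact ((cμ.div ck hk).mul ch').div cμ hμ0


lemma arct_bound {q q' : ℝ → ℝ} {a b k : ℝ} (hab : a ≤ b)
    (hq : ∀ t ∈ Icc a b, HasDerivAt q (q' t) t)
    (hb : ∀ t ∈ Icc a b, q' t ≤ -(k * (1 + q t ^ 2))) : k * (b - a) < π := by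
  have hd : ∀ t ∈ Icc a b, HasDerivAt (fun t => arctan (q t) + k * t)
      (1 / (1 + q t ^ 2) * q' t + k * 1) t := fun t ht =>
    ((hq t ht).arctan).add ((hasDerivAt_id t).const_mul k)
  have hanti : AntitoneOn (fun t => arctan (q t) + k * t) (Icc a b) := by
    apply antitoneOn_of_hasDerivWithinAt_nonpos (convex_Icc a b)
      (fun t ht => (hd t ht).continuousAt.continuousWithinAt)
      (fun t ht => (hd t (interior_subset ht)).hasDerivWithinAt)
    intro t ht
    have h := hb t (interior_subset ht)
    have hpos : 0 < 1 + q t ^ 2 := by positivity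
    rw [one_div, inv_mul_eq_div]
    have : q' t / (1 + q t ^ 2) ≤ -k := by
      rw [div_le_iff₀ hpos]; linarith
    linarith
  have := hanti ⟨le_rfl, hab⟩ ⟨hab, le_rfl⟩ hab
  simp only at this
  have h1 := arctan_lt_pi_div_two (q a)
  have h2 := neg_pi_div_two_lt_arctan (q b)
  linarith

lemma pow_fac (y : ℝ) {p : ℕ} (hp : 1 ≤ p) :
    y ^ p - y = y * (∑ i ∈ Finset.range (p - 1), y ^ i) * (y - 1) := by
  obtain ⟨n, rfl⟩ := Nat.exists_eq_add_of_le hp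
  rw [mul_assoc, Nat.add_sub_cancel_left, geom_sum_mul]
  ring

lemma G_ge_one {y : ℝ} (hy : 1 ≤ y) {p : ℕ} (hp : 7 ≤ p) :
    (p : ℝ) - 1 ≤ y * (∑ i ∈ Finset.range (p - 1), y ^ i) := by
  have h1 : (p : ℝ) - 1 ≤ ∑ i ∈ Finset.range (p - 1), y ^ i := by
    have := Finset.card_nsmul_le_sum (Finset.range (p - 1)) (fun i => y ^ i) 1
      (fun i _ => one_le_pow₀ hy)
    simp only [Finset.card_range, nsmul_eq_mul, mul_one] at this
    rwa [Nat.cast_sub (by omega), Nat.cast_one] at this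
  have : (7 : ℝ) ≤ p := by exact_mod_cast hp
  nlinarith

lemma G_ge_y {y : ℝ} (hy : 0 ≤ y) {p : ℕ} (hp : 7 ≤ p) :
    y ≤ y * (∑ i ∈ Finset.range (p - 1), y ^ i) := by
  have h1 : (1:ℝ) ≤ ∑ i ∈ Finset.range (p - 1), y ^ i := by
    have := Finset.single_le_sum (f := fun i => y ^ i) (s := Finset.range (p - 1))
      (fun i _ => by positivity) (Finset.mem_range.2 (show 0 < p - 1 by omega))
    simpa using this
  nlinarith

lemma G_ge_near {y : ℝ} (hy0 : 0 ≤ y) (hy1 : y ≤ 1) {p : ℕ} (hp : 7 ≤ p)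
    (hy : 1 - 1 / (2 * ((p : ℝ) - 1)) ≤ y) :
    ((p : ℝ) - 1) / 2 ≤ y * (∑ i ∈ Finset.range (p - 1), y ^ i) := by
  have h7 : (7 : ℝ) ≤ p := by exact_mod_cast hp
  have hc : (((p - 1 : ℕ)) : ℝ) = (p : ℝ) - 1 := by rw [Nat.cast_sub (by omega), Nat.cast_one]
  have hb : 1 / 2 ≤ y ^ (p - 1) := by
    have := one_add_mul_le_pow (a := y - 1) (by linarith) (p - 1)
    rw [hc] at this
    have h2 : ((p : ℝ) - 1) * (1 / (2 * ((p : ℝ) - 1))) = 1 / 2 := by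
      have : (p : ℝ) - 1 ≠ 0 := by linarith
      field_simp
    have h3 : ((p : ℝ) - 1) * (1 - y) ≤ ((p : ℝ) - 1) * (1 / (2 * ((p : ℝ) - 1))) :=
      mul_le_mul_of_nonneg_left (by linarith) (by linarith)
    have h4 : 1 + (y - 1) = y := by ring
    rw [h4] at this
    linarith
  rw [Finset.mul_sum]
  have := Finset.card_nsmul_le_sum (Finset.range (p - 1)) (fun i => y * y ^ i) (y ^ (p - 1))
      (fun i hi => by
        rw [← pow_succ']
        exact pow_le_pow_of_le_one hy0 hy1 (by have := Finset.mem_range.1 hi; omega))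
  simp only [Finset.card_range, nsmul_eq_mul, hc] at this
  nlinarith

lemma ric_deriv {α κ : ℝ} {p : ℕ} (hp : 7 ≤ p) {Y V A : ℝ → ℝ} {t : ℝ}
    (hY : HasDerivAt Y (V t) t) (hV : HasDerivAt V (A t) t)
    (hx : exp (2 * t) ≤ 1 / 4)
    (he : (1 - exp (2 * t)) * A t + (1 - 2 * α - exp (2 * t)) * V t + κ * (Y t ^ p - Y t) = 0)
    (hne : Y t ≠ 1) :
    HasDerivAt (fun s => V s / (Y s - 1)) (-((V t / (Y t - 1)) ^ 2
      + (1 - 2 * α - exp (2 * t)) / (1 - exp (2 * t)) * (V t / (Y t - 1))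
      + κ * (Y t * (∑ i ∈ Finset.range (p - 1), Y t ^ i)) / (1 - exp (2 * t)))) t := by
  have hw : Y t - 1 ≠ 0 := sub_ne_zero.2 hne
  have hz : 1 - exp (2 * t) ≠ 0 := by linarith
  refine (hV.div (hY.sub_const 1) hw).congr_deriv ?_
  rw [pow_fac _ (by omega)] at he
  generalize (∑ i ∈ Finset.range (p - 1), Y t ^ i) = S at *
  have hA : A t = -((1 - 2 * α - exp (2 * t)) * V t + κ * (Y t * S * (Y t - 1))) / (1 - exp (2 * t)) := by
    rw [eq_div_iff hz]; linarith
  rw [hA]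
  field_simp
  ring

lemma alg_half {q a g : ℝ} (h0 : 0 ≤ a) (h1 : a ≤ 1) (hg : 1 / 2 ≤ g) :
    -(q ^ 2 + a * q + g) ≤ -(1 / 10 * (1 + q ^ 2)) := by
  rcases le_total 0 q with h | h
  · nlinarith [mul_nonneg h0 h, sq_nonneg q]
  · nlinarith [mul_nonneg (sub_nonneg.2 h1) (neg_nonneg.2 h), sq_nonneg (q + 5 / 9)]

lemma alg_gm {q a g gm : ℝ} (h0 : 0 ≤ a) (h1 : a ≤ 1) (hg : gm ≤ g) (hgm : 0 < gm) (hgm1 : gm ≤ 1)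
    (hq : -(gm / 2) ≤ q) :
    -(q ^ 2 + a * q + g) ≤ -(gm / 4 * (1 + q ^ 2)) := by
  rcases le_total 0 q with h | h
  · nlinarith [mul_nonneg h0 h, sq_nonneg q]
  · nlinarith [mul_nonneg (sub_nonneg.2 h1) (neg_nonneg.2 h), sq_nonneg q]

lemma alg_bar {a g gm : ℝ} (h1 : a ≤ 1) (hg : gm ≤ g) (hgm : 0 < gm) :
    -((-(gm / 2)) ^ 2 + a * (-(gm / 2)) + g) < 0 := by
  nlinarith [mul_nonneg (sub_nonneg.2 h1) hgm.le, sq_nonneg gm]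

lemma osc_window {α ym : ℝ} {p : ℕ} (hα : 0 < α) (hα3 : α ≤ 1 / 3) (hp : 7 ≤ p)
    (hαp : α * ((p : ℝ) - 1) = 2) (hym : 0 < ym) :
    ∃ τ : ℝ, 0 < τ ∧ ∀ (a : ℝ) (Y V A : ℝ → ℝ),
      (∀ t ∈ Icc a (a + τ), HasDerivAt Y (V t) t ∧ HasDerivAt V (A t) t ∧
        (1 - exp (2 * t)) * A t + (1 - 2 * α - exp (2 * t)) * V t
          + α * (1 - α) * (Y t ^ p - Y t) = 0 ∧ exp (2 * t) ≤ 1 / 4 ∧ ym ≤ Y t) →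
      ∃ t ∈ Icc a (a + τ), Y t = 1 := by
  have h7 : (7 : ℝ) ≤ p := by exact_mod_cast hp
  set κ := α * (1 - α) with hκ
  have hκ0 : 0 < κ := mul_pos hα (by linarith)
  have hκ1 : κ ≤ 1 := by nlinarith
  have hκp : κ * ((p : ℝ) - 1) = 2 * (1 - α) := by
    rw [hκ]; linear_combination (1 - α) * hαp
  set gm := κ * min ym 1 with hgm
  have hgm0 : 0 < gm := mul_pos hκ0 (lt_min hym one_pos)
  have hgm1 : gm ≤ 1 := by
    have := min_le_right ym 1
    have := lt_min hym one_pos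
    nlinarith
  set τ1 := 4 * π / gm with hτ1
  set τ2 := log (2 * ((p : ℝ) - 1)) / (gm / 2) with hτ2
  have hπ := pi_pos
  have hτ1p : 0 < τ1 := by positivity
  have hlog : 0 < log (2 * ((p : ℝ) - 1)) := log_pos (by linarith)
  have hτ2p : 0 < τ2 := by positivity
  refine ⟨τ1 + τ2 + 10 * π, by positivity, ?_⟩
  intro a Y V A H
  set b := a + (τ1 + τ2 + 10 * π) with hb
  have hab : a ≤ b := by linarith
  by_contra hcon
  push Not at hcon
  have hYc : ContinuousOn Y (Icc a b) := fun t ht => (H t ht).1.continuousAt.continuousWithinAt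
  -- coefficient facts
  have hx0 : ∀ t, 0 < exp (2 * t) := fun t => exp_pos _
  have ha0 : ∀ t ∈ Icc a b, 0 ≤ (1 - 2 * α - exp (2 * t)) / (1 - exp (2 * t)) := by
    intro t ht
    have := (H t ht).2.2.2.1
    apply div_nonneg <;> linarith
  have ha1 : ∀ t ∈ Icc a b, (1 - 2 * α - exp (2 * t)) / (1 - exp (2 * t)) ≤ 1 := by
    intro t ht
    have := (H t ht).2.2.2.1
    rw [div_le_one (by linarith)]; linarith
  have hg : ∀ t ∈ Icc a b, ∀ c, 0 ≤ c → c ≤ κ * (Y t * (∑ i ∈ Finset.range (p - 1), Y t ^ i)) →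
      c ≤ κ * (Y t * (∑ i ∈ Finset.range (p - 1), Y t ^ i)) / (1 - exp (2 * t)) := by
    intro t ht c hc0 hc
    have := (H t ht).2.2.2.1
    rw [le_div_iff₀ (by linarith)]
    nlinarith [hx0 t]
  have hq : ∀ t ∈ Icc a b, _ := fun t ht =>
    ric_deriv hp (H t ht).1 (H t ht).2.1 (H t ht).2.2.2.1 (H t ht).2.2.1 (hcon t ht)
  have haI : a ∈ Icc a b := ⟨le_rfl, hab⟩
  rcases lt_or_gt_of_ne (hcon a haI) with hlt | hgt
  · -- below one
    have hlt' : ∀ t ∈ Icc a b, Y t < 1 := by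
      intro t ht
      by_contra hge
      push Not at hge
      obtain ⟨s, hs, hs'⟩ := intermediate_value_Icc ht.1
        (hYc.mono (Icc_subset_Icc_right ht.2)) ⟨hlt.le, hge⟩
      exact hcon s ⟨hs.1, hs.2.trans ht.2⟩ hs'
    have hgY : ∀ t ∈ Icc a b,
        gm ≤ κ * (Y t * (∑ i ∈ Finset.range (p - 1), Y t ^ i)) / (1 - exp (2 * t)) := by
      intro t ht
      apply hg t ht _ hgm0.le
      apply mul_le_mul_of_nonneg_left _ hκ0.le
      exact (min_le_left _ _).trans ((H t ht).2.2.2.2.trans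
        (G_ge_y (hym.le.trans (H t ht).2.2.2.2) hp))
    obtain ⟨s, hs, hsq⟩ : ∃ s ∈ Icc a (a + τ1), V s / (Y s - 1) < -(gm / 2) := by
      by_contra hno
      push Not at hno
      have hsub : ∀ t ∈ Icc a (a + τ1), t ∈ Icc a b := fun t ht => ⟨ht.1, by linarith [ht.2]⟩
      have := arct_bound (k := gm / 4) (a := a) (b := a + τ1) (by linarith)
        (fun t ht => hq t (hsub t ht))
        (fun t ht => alg_gm (ha0 t (hsub t ht)) (ha1 t (hsub t ht)) (hgY t (hsub t ht)) hgm0 hgm1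
          (hno t ht))
      have e : gm / 4 * (a + τ1 - a) = π := by
        rw [hτ1]; field_simp; ring
      linarith
    have hsub : ∀ t ∈ Icc s b, t ∈ Icc a b := fun t ht => ⟨hs.1.trans ht.1, ht.2⟩
    have hbar : ∀ t ∈ Icc s b, V t / (Y t - 1) ≤ -(gm / 2) := by
      intro t ht
      refine image_le_of_deriv_right_lt_deriv_boundary (f := fun t => V t / (Y t - 1))
        (B := fun _ => -(gm / 2)) (B' := fun _ => 0) (a := s) (b := b)
        (fun t ht => (hq t (hsub t ht)).continuousAt.continuousWithinAt)
        (fun t ht => (hq t (hsub t ⟨ht.1, ht.2.le⟩)).hasDerivWithinAt) hsq.le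
        (fun x => hasDerivAt_const x _) ?_ ht
      intro x hx hxe
      have hx' := hsub x ⟨hx.1, hx.2.le⟩
      simp only [hxe]
      exact alg_bar (ha1 x hx') (hgY x hx') hgm0
    have hsb : s ≤ b := by linarith [hs.2]
    have hmono : MonotoneOn (fun t => (Y t - 1) * exp (gm / 2 * t)) (Icc s b) := by
      have hd : ∀ t ∈ Icc s b, HasDerivAt (fun t => (Y t - 1) * exp (gm / 2 * t))
          (V t * exp (gm / 2 * t) + (Y t - 1) * (exp (gm / 2 * t) * (gm / 2 * 1))) t :=
        fun t ht => ((H t (hsub t ht)).1.sub_const 1).mul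
          (((hasDerivAt_id t).const_mul (gm / 2)).exp)
      apply monotoneOn_of_hasDerivWithinAt_nonneg (convex_Icc s b)
        (fun t ht => (hd t ht).continuousAt.continuousWithinAt)
        (fun t ht => (hd t (interior_subset ht)).hasDerivWithinAt)
      intro t ht
      have ht' := interior_subset ht
      have h1 := hbar t ht'
      have h2 := hlt' t (hsub t ht')
      rw [div_le_iff_of_neg (by linarith)] at h1
      have h3 := exp_pos (gm / 2 * t)
      have : V t * exp (gm / 2 * t) + (Y t - 1) * (exp (gm / 2 * t) * (gm / 2 * 1))
        = exp (gm / 2 * t) * (V t + (gm / 2) * (Y t - 1)) := by ring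
      rw [this]
      apply mul_nonneg h3.le
      linarith
    have hnear : ∀ t ∈ Icc (s + τ2) b, 1 - 1 / (2 * ((p : ℝ) - 1)) ≤ Y t := by
      intro t ht
      have hts : t ∈ Icc s b := ⟨by linarith [ht.1], ht.2⟩
      have h1 := hmono ⟨le_rfl, hsb⟩ hts hts.1
      simp only at h1
      have h2 : -1 ≤ Y s - 1 := by linarith [(H s (hsub s ⟨le_rfl, hsb⟩)).2.2.2.2]
      have h3 : -exp (gm / 2 * s) ≤ (Y t - 1) * exp (gm / 2 * t) := by
        nlinarith [exp_pos (gm / 2 * s)]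
      have h4 : exp (gm / 2 * s) = exp (-(gm / 2 * (t - s))) * exp (gm / 2 * t) := by
        rw [← exp_add]; congr 1; ring
      have h5 : -exp (-(gm / 2 * (t - s))) ≤ Y t - 1 := by
        rw [h4, ← neg_mul] at h3
        exact le_of_mul_le_mul_right h3 (exp_pos _)
      have h6 : exp (-(gm / 2 * (t - s))) ≤ 1 / (2 * ((p : ℝ) - 1)) := by
        rw [exp_neg, one_div]
        apply inv_anti₀ (by linarith)
        rw [← log_le_iff_le_exp (by linarith)]
        have : log (2 * ((p : ℝ) - 1)) = gm / 2 * τ2 := by rw [hτ2]; field_simp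
        rw [this]
        apply mul_le_mul_of_nonneg_left _ (by positivity)
        linarith [ht.1]
      linarith
    have hs2 : s + τ2 ≤ b := by linarith [hs.2]
    have hsub2 : ∀ t ∈ Icc (s + τ2) b, t ∈ Icc a b := fun t ht =>
      ⟨by linarith [ht.1, hs.1], ht.2⟩
    have := arct_bound (k := 1 / 10) (a := s + τ2) (b := b) hs2
        (fun t ht => hq t (hsub2 t ht))
        (fun t ht => alg_half (ha0 t (hsub2 t ht)) (ha1 t (hsub2 t ht)) (hg t (hsub2 t ht) _ (by norm_num) (by
          have := G_ge_near (hym.le.trans (H t (hsub2 t ht)).2.2.2.2) (hlt' t (hsub2 t ht)).le hp (hnear t ht)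
          have := mul_le_mul_of_nonneg_left this hκ0.le
          linarith)))
    linarith [hs.2]
  · have hgt' : ∀ t ∈ Icc a b, 1 < Y t := by
      intro t ht
      by_contra hge
      push Not at hge
      obtain ⟨s, hs, hs'⟩ := intermediate_value_Icc' ht.1
        (hYc.mono (Icc_subset_Icc_right ht.2)) ⟨hge, hgt.le⟩
      exact hcon s ⟨hs.1, hs.2.trans ht.2⟩ hs'
    have := arct_bound (k := 1 / 10) (a := a) (b := b) hab hq
        (fun t ht => alg_half (ha0 t ht) (ha1 t ht) (hg t ht _ (by norm_num) (by
          have := G_ge_one (hgt' t ht).le hp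
          have := mul_le_mul_of_nonneg_left this hκ0.le
          linarith)))
    linarith


lemma hneg_of {α : ℝ} (hα : 0 < α) (hα3 : α ≤ 1 / 3) {p : ℕ} (hp : 7 ≤ p) {x : ℝ} (hx : 1 < x) :
    α * (α + 1) * x - x ^ p < 0 := by
  have h1 : x ≤ x ^ p := le_self_pow₀ hx.le (by omega)
  have h2 : α * (α + 1) ≤ 4 / 9 := by nlinarith
  nlinarith

open Topology in
lemma phase1 {u : ℝ → ℝ} {α R c : ℝ} {p : ℕ} (hα : 0 < α) (hα3 : α ≤ 1 / 3) (hp : 7 ≤ p)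
    (hR : R ≤ 1 / 2) (hu : ContinuousOn u (Icc 0 1)) (han : AnalyticAt ℝ u 0) (h0 : u 0 = c)
    (hc : 1 < c)
    (hu1 : ∀ ρ ∈ Ioo (0 : ℝ) R, 1 < u ρ)
    (heq : ∀ ρ ∈ Ioo (0 : ℝ) R, (1 - ρ ^ 2) * deriv (deriv u) ρ
      + (2 / ρ - (2 + 2 * α) * ρ) * deriv u ρ - α * (α + 1) * u ρ + u ρ ^ p = 0) :
    ∀ ρ ∈ Ioo (0 : ℝ) R, u ρ ≤ c ∧ deriv u ρ ≤ 0 ∧ -(c ^ p * ρ) ≤ deriv u ρ ∧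
      c - c ^ p * ρ ^ 2 / 2 ≤ u ρ := by
  have hneg : ∀ ρ ∈ Ioo (0 : ℝ) R, α * (α + 1) * u ρ - u ρ ^ p < 0 :=
    fun ρ hρ => hneg_of hα hα3 hp (hu1 ρ hρ)
  have d1 := reg_diff hR hu hneg heq
  have d2 := reg_diff2 hα hα3 hR hu hneg heq
  have hR1 : ∀ x ∈ Ioo (0:ℝ) R, x < 1 := fun x hx => by linarith [hx.2]
  have hint : interior (Ico (0:ℝ) R) = Ioo 0 R := interior_Ico
  have hcu : ContinuousOn u (Ico 0 R) := hu.mono (fun x hx => ⟨hx.1, by linarith [hx.2]⟩)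
  have hq1 : ∀ x ∈ Ioo (0:ℝ) R, 3 / 4 ≤ 1 - x ^ 2 := fun x hx => by
    have h1 := hx.1; have h2 : x < 1 / 2 := by linarith [hx.2]
    nlinarith
  set W : ℝ → ℝ := fun x => muF α x * deriv u x with hW
  have hWd : ∀ x ∈ Ioo (0:ℝ) R, HasDerivAt W
      (muF α x / (1 - x ^ 2) * (α * (α + 1) * u x - u x ^ p)) x := by
    intro x hx
    refine ((muF_deriv (α := α) hx.1 (hR1 x hx)).mul (d2 x hx).hasDerivAt).congr_deriv ?_
    have h1 : 1 - x ^ 2 ≠ 0 := by linarith [hq1 x hx]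
    have h2 : x ≠ 0 := hx.1.ne'
    have e3 : muF α x * (2 / x - (2 + 2 * α) * x) / (1 - x ^ 2) * deriv u x
        + muF α x * deriv (deriv u) x - muF α x / (1 - x ^ 2) * (α * (α + 1) * u x - u x ^ p) =
      muF α x / (1 - x ^ 2) * ((1 - x ^ 2) * deriv (deriv u) x
      + (2 / x - (2 + 2 * α) * x) * deriv u x - α * (α + 1) * u x + u x ^ p) := by
      field_simp
      ring
    rw [heq x hx, mul_zero] at e3
    linarith
  have hWc : ContinuousOn W (Ico 0 R) := by
    intro x hx
    rcases hx.1.eq_or_lt with rfl | hx0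
    · have e1 : ContinuousAt (deriv u) 0 := han.deriv.continuousAt
      have e2 : ContinuousAt (muF α) 0 := by
        unfold muF
        apply ContinuousAt.mul (by fun_prop)
        apply ContinuousAt.rpow_const (by fun_prop)
        left; norm_num
      exact (e2.mul e1).continuousWithinAt
    · exact (hWd x ⟨hx0, hx.2⟩).continuousAt.continuousWithinAt
  have hW0 : W 0 = 0 := by simp [hW, muF]
  have hWanti : AntitoneOn W (Ico 0 R) := by
    apply antitoneOn_of_hasDerivWithinAt_nonpos (convex_Ico 0 R) hWc
      (fun x hx => (hWd x (hint ▸ hx)).hasDerivWithinAt)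
    intro x hx
    rw [hint] at hx
    have := muF_pos (α := α) hx.1 (hR1 x hx)
    have h1 := hq1 x hx
    exact mul_nonpos_of_nonneg_of_nonpos (div_nonneg this.le (by linarith)) (hneg x hx).le
  have hdneg : ∀ x ∈ Ioo (0:ℝ) R, deriv u x ≤ 0 := by
    intro x hx
    have h1 := hWanti ⟨le_rfl, hx.1.trans hx.2⟩ ⟨hx.1.le, hx.2⟩ hx.1.le
    rw [hW0] at h1
    have := muF_pos (α := α) hx.1 (hR1 x hx)
    by_contra hcon
    push Not at hcon
    have := mul_pos this hcon
    simp only [hW] at h1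
    linarith
  have huanti : AntitoneOn u (Ico 0 R) := by
    apply antitoneOn_of_hasDerivWithinAt_nonpos (convex_Ico 0 R) hcu
      (fun x hx => (d1 x (hint ▸ hx)).hasDerivAt.hasDerivWithinAt)
    intro x hx
    exact hdneg x (hint ▸ hx)
  have hule : ∀ x ∈ Ioo (0:ℝ) R, u x ≤ c := by
    intro x hx
    rw [← h0]
    exact huanti ⟨le_rfl, hx.1.trans hx.2⟩ ⟨hx.1.le, hx.2⟩ hx.1.le
  have hcp : 0 < c ^ p := by positivity
  have hWmono : MonotoneOn (fun x => W x + 4 / 9 * c ^ p * x ^ 3) (Ico 0 R) := by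
    apply monotoneOn_of_hasDerivWithinAt_nonneg (convex_Ico 0 R) (hWc.add (by fun_prop))
      (fun x hx => ((hWd x (hint ▸ hx)).add
        ((hasDerivAt_pow 3 x).const_mul (4 / 9 * c ^ p))).hasDerivWithinAt)
    intro x hx
    rw [hint] at hx
    have h1 := hq1 x hx
    have hr : (1 - x ^ 2) ^ α ≤ 1 := rpow_le_one (by linarith) (by nlinarith [hx.1]) hα.le
    have hr0 : 0 ≤ (1 - x ^ 2) ^ α := rpow_nonneg (by linarith) _
    have hm : muF α x / (1 - x ^ 2) ≤ 4 / 3 * x ^ 2 := by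
      rw [div_le_iff₀ (by linarith)]
      unfold muF
      have hx2 : 0 ≤ x ^ 2 := by positivity
      nlinarith
    have hm0 : 0 ≤ muF α x / (1 - x ^ 2) :=
      div_nonneg (muF_pos hx.1 (hR1 x hx)).le (by linarith)
    have hup : u x ^ p ≤ c ^ p := pow_le_pow_left₀ (by linarith [hu1 x hx]) (hule x hx) p
    have hh : -c ^ p ≤ α * (α + 1) * u x - u x ^ p := by
      have : 0 < α * (α + 1) * u x := by
        have := hu1 x hx
        positivity
      linarith
    have : muF α x / (1 - x ^ 2) * (-c ^ p) ≤
      muF α x / (1 - x ^ 2) * (α * (α + 1) * u x - u x ^ p) := mul_le_mul_of_nonneg_left hh hm0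
    have h3 := mul_le_mul_of_nonneg_right hm hcp.le
    push_cast
    norm_num
    linarith
  have hdge : ∀ x ∈ Ioo (0:ℝ) R, -(c ^ p * x) ≤ deriv u x := by
    intro x hx
    have h1 := hWmono ⟨le_rfl, hx.1.trans hx.2⟩ ⟨hx.1.le, hx.2⟩ hx.1.le
    simp only [hW0] at h1
    norm_num at h1
    have hq := hq1 x hx
    have hr : 1 - x ^ 2 ≤ (1 - x ^ 2) ^ α := by
      have := rpow_le_rpow_of_exponent_ge (x := 1 - x ^ 2) (y := 1) (z := α) (by linarith)
        (by nlinarith [hx.1]) (by linarith)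
      rwa [rpow_one] at this
    have hm : 3 / 4 * x ^ 2 ≤ muF α x := by
      unfold muF
      have hx2 : 0 ≤ x ^ 2 := by positivity
      nlinarith
    by_contra hcon
    push Not at hcon
    simp only [hW] at h1
    have hx0 := hx.1
    have hcx : 0 < c ^ p * x := by positivity
    have hmp := muF_pos (α := α) hx.1 (hR1 x hx)
    have h2 : muF α x * deriv u x < muF α x * -(c ^ p * x) := mul_lt_mul_of_pos_left hcon hmp
    have h3 := mul_le_mul_of_nonneg_right hm hcx.le
    have h4 : 0 < c ^ p * x ^ 3 := by positivity
    nlinarith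
  have hub : MonotoneOn (fun x => u x + c ^ p / 2 * x ^ 2) (Ico 0 R) := by
    apply monotoneOn_of_hasDerivWithinAt_nonneg (convex_Ico 0 R) (hcu.add (by fun_prop))
      (fun x hx => ((d1 x (hint ▸ hx)).hasDerivAt.add
        ((hasDerivAt_pow 2 x).const_mul (c ^ p / 2))).hasDerivWithinAt)
    intro x hx
    rw [hint] at hx
    have := hdge x hx
    push_cast
    norm_num
    linarith
  intro ρ hρ
  refine ⟨hule ρ hρ, hdneg ρ hρ, hdge ρ hρ, ?_⟩
  have := hub ⟨le_rfl, hρ.1.trans hρ.2⟩ ⟨hρ.1.le, hρ.2⟩ hρ.1.le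
  simp only [h0] at this
  norm_num at this
  linarith

noncomputable def Yf (α b : ℝ) (u : ℝ → ℝ) (t : ℝ) : ℝ := exp (α * t) * u (exp t) / b
noncomputable def Vf (α b : ℝ) (u : ℝ → ℝ) (t : ℝ) : ℝ :=
  (α * exp (α * t) * u (exp t) + exp (α * t) * (exp t * deriv u (exp t))) / b
noncomputable def Af (α b : ℝ) (u : ℝ → ℝ) (t : ℝ) : ℝ :=
  (α * (α * exp (α * t)) * u (exp t) + (2 * α + 1) * exp (α * t) * (exp t * deriv u (exp t))
    + exp (α * t) * (exp t * exp t * deriv (deriv u) (exp t))) / b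

lemma tr_Y {α b : ℝ} {u : ℝ → ℝ} {t : ℝ} (h : DifferentiableAt ℝ u (exp t)) :
    HasDerivAt (Yf α b u) (Vf α b u t) t := by
  have e1 : HasDerivAt (fun t => exp (α * t)) (exp (α * t) * (α * 1)) t :=
    ((hasDerivAt_id t).const_mul α).exp
  have e2 : HasDerivAt (fun t => u (exp t)) (deriv u (exp t) * exp t) t :=
    h.hasDerivAt.comp t (Real.hasDerivAt_exp t)
  refine ((e1.mul e2).div_const b).congr_deriv ?_
  unfold Vf; ring

lemma tr_V {α b : ℝ} {u : ℝ → ℝ} {t : ℝ} (h : DifferentiableAt ℝ u (exp t))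
    (h2 : DifferentiableAt ℝ (deriv u) (exp t)) :
    HasDerivAt (Vf α b u) (Af α b u t) t := by
  have e1 : HasDerivAt (fun t => exp (α * t)) (exp (α * t) * (α * 1)) t :=
    ((hasDerivAt_id t).const_mul α).exp
  have e2 : HasDerivAt (fun t => u (exp t)) (deriv u (exp t) * exp t) t :=
    h.hasDerivAt.comp t (Real.hasDerivAt_exp t)
  have e3 : HasDerivAt (fun t => deriv u (exp t)) (deriv (deriv u) (exp t) * exp t) t :=
    h2.hasDerivAt.comp t (Real.hasDerivAt_exp t)
  refine ((((e1.const_mul α).mul e2).add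
    (e1.mul ((Real.hasDerivAt_exp t).mul e3))).div_const b).congr_deriv ?_
  unfold Af; simp only [Pi.mul_apply]; ring

lemma tr_ode {α b : ℝ} {p : ℕ} {u : ℝ → ℝ} {t : ℝ} (hp : 7 ≤ p) (hb : 0 < b)
    (hαp : α * ((p : ℝ) - 1) = 2) (hbp : b ^ (p - 1) = α * (1 - α))
    (heq : (1 - exp t ^ 2) * deriv (deriv u) (exp t)
      + (2 / exp t - (2 + 2 * α) * exp t) * deriv u (exp t) - α * (α + 1) * u (exp t)
      + u (exp t) ^ p = 0) :
    (1 - exp (2 * t)) * Af α b u t + (1 - 2 * α - exp (2 * t)) * Vf α b u t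
      + α * (1 - α) * (Yf α b u t ^ p - Yf α b u t) = 0 := by
  have hX : exp (α * t) ^ (p - 1) = exp t ^ 2 := by
    rw [← exp_nat_mul, ← exp_nat_mul, Nat.cast_sub (by omega)]
    congr 1
    push_cast
    linear_combination t * hαp
  have h2 : exp (2 * t) = exp t ^ 2 := by rw [← exp_nat_mul]; norm_num
  obtain ⟨n, rfl⟩ : ∃ n, p = n + 1 := ⟨p - 1, by omega⟩
  rw [Nat.add_sub_cancel] at hX hbp
  have hY : α * (1 - α) * Yf α b u t ^ (n + 1) = exp (α * t) * exp t ^ 2 * u (exp t) ^ (n + 1) / b := by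
    rw [← hbp, ← hX]
    unfold Yf
    rw [div_pow, mul_pow, pow_succ b]
    field_simp
    ring
  rw [mul_sub, hY, h2]
  unfold Yf Vf Af
  have hr := exp_pos t
  generalize exp t = r at *
  generalize exp (α * t) = X at *
  generalize u r ^ (n + 1) = U at *
  have e : r * ((1 - r ^ 2) * deriv (deriv u) r) + (2 - (2 + 2 * α) * r ^ 2) * deriv u r
      - r * (α * (α + 1) * u r) + r * U = 0 := by
    have : r * (2 / r) = 2 := by field_simp
    linear_combination r * heq - deriv u r * this
  field_simp
  linear_combination (X * r) * e

lemma energy {α κ T t0 : ℝ} {p : ℕ} (hα3 : α ≤ 1 / 3) {Y V A : ℝ → ℝ}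
    (H : ∀ t ∈ Ico t0 T, HasDerivAt Y (V t) t ∧ HasDerivAt V (A t) t ∧
        (1 - exp (2 * t)) * A t + (1 - 2 * α - exp (2 * t)) * V t
          + κ * (Y t ^ p - Y t) = 0) :
    AntitoneOn (fun t => (1 - exp (2 * t)) * V t ^ 2 / 2
      + κ * (Y t ^ (p + 1) / (p + 1) - Y t ^ 2 / 2)) (Ico t0 T) := by
  have hd : ∀ t ∈ Ico t0 T, HasDerivAt (fun t => (1 - exp (2 * t)) * V t ^ 2 / 2
      + κ * (Y t ^ (p + 1) / (p + 1) - Y t ^ 2 / 2)) (-(1 - 2 * α) * V t ^ 2) t := by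
    intro t ht
    obtain ⟨h1, h2, h3⟩ := H t ht
    have e1 : HasDerivAt (fun t : ℝ => 1 - exp (2 * t)) (-(exp (2 * t) * (2 * 1))) t :=
      (((hasDerivAt_id t).const_mul 2).exp).const_sub 1
    refine (((e1.mul (h2.pow 2)).div_const 2).add
      ((((h1.pow (p + 1)).div_const ((p : ℝ) + 1)).sub ((h1.pow 2).div_const 2)).const_mul κ)).congr_deriv ?_
    have hp : (p : ℝ) + 1 ≠ 0 := by positivity
    simp only [Pi.pow_apply]
    push_cast
    have : ((p : ℝ) + 1) * Y t ^ p * V t / ((p : ℝ) + 1) = Y t ^ p * V t := by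
      field_simp
    rw [this]
    norm_num
    linear_combination V t * h3
  apply antitoneOn_of_hasDerivWithinAt_nonpos (convex_Ico t0 T)
    (fun t ht => (hd t ht).continuousAt.continuousWithinAt)
    (fun t ht => (hd t (interior_subset ht)).hasDerivWithinAt)
  intro t ht
  nlinarith [sq_nonneg (V t)]

lemma exp_scale {α η c : ℝ} {m : ℕ} (hαm : α * m = 1) (hη : 0 < η) (hc : 0 < c) :
    exp (α * log (η / c ^ m)) = exp (α * log η) / c := by
  rw [log_div hη.ne' (by positivity), log_pow, mul_sub, ← mul_assoc, hαm, one_mul, exp_sub,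
    exp_log hc]

lemma sys {u : ℝ → ℝ} {α R b : ℝ} {p : ℕ} (hα : 0 < α) (hα3 : α ≤ 1 / 3) (hp : 7 ≤ p)
    (hαp : α * ((p : ℝ) - 1) = 2) (hb : 0 < b) (hbp : b ^ (p - 1) = α * (1 - α))
    (hR : R ≤ 1 / 2) (hu : ContinuousOn u (Icc 0 1))
    (hu1 : ∀ ρ ∈ Ioo (0 : ℝ) R, 1 < u ρ)
    (heq : ∀ ρ ∈ Ioo (0 : ℝ) R, (1 - ρ ^ 2) * deriv (deriv u) ρ
      + (2 / ρ - (2 + 2 * α) * ρ) * deriv u ρ - α * (α + 1) * u ρ + u ρ ^ p = 0)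
    {t : ℝ} (ht : exp t < R) :
    HasDerivAt (Yf α b u) (Vf α b u t) t ∧ HasDerivAt (Vf α b u) (Af α b u t) t ∧
      (1 - exp (2 * t)) * Af α b u t + (1 - 2 * α - exp (2 * t)) * Vf α b u t
      + α * (1 - α) * (Yf α b u t ^ p - Yf α b u t) = 0 := by
  have hneg : ∀ ρ ∈ Ioo (0 : ℝ) R, α * (α + 1) * u ρ - u ρ ^ p < 0 :=
    fun ρ hρ => hneg_of hα hα3 hp (hu1 ρ hρ)
  have d1 := reg_diff hR hu hneg heq
  have d2 := reg_diff2 hα hα3 hR hu hneg heq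
  have hm : exp t ∈ Ioo (0:ℝ) R := ⟨exp_pos t, ht⟩
  exact ⟨tr_Y (d1 _ hm), tr_V (d1 _ hm) (d2 _ hm), tr_ode hp hb hαp hbp (heq _ hm)⟩

set_option maxHeartbeats 1600000 in
lemma lemA {u : ℝ → ℝ} {α R b c : ℝ} {p m : ℕ} (hα : 0 < α) (hα3 : α ≤ 1 / 3) (hp : 7 ≤ p)
    (hpm : p = 2 * m + 1) (hαm : α * m = 1)
    (hb : 0 < b) (hbp : b ^ (p - 1) = α * (1 - α))
    (hR : R ≤ α / 2 / 7 ^ m) (hu : ContinuousOn u (Icc 0 1)) (han : AnalyticAt ℝ u 0)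
    (h0 : u 0 = c) (hc : 7 ≤ c)
    (hu1 : ∀ ρ ∈ Ioo (0 : ℝ) R, 1 < u ρ)
    (heq : ∀ ρ ∈ Ioo (0 : ℝ) R, (1 - ρ ^ 2) * deriv (deriv u) ρ
      + (2 / ρ - (2 + 2 * α) * ρ) * deriv u ρ - α * (α + 1) * u ρ + u ρ ^ p = 0) :
    ∀ ρ ∈ Ioo (0 : ℝ) R, 7 / 6 ≤ u ρ ∧ (α / 2 / c ^ m ≤ ρ →
      exp (α * log (α / 2)) / (6 * b) ≤ Yf α b u (log ρ)) := by
  have h7 : (1:ℝ) ≤ 7 ^ m := one_le_pow₀ (by norm_num)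
  have hR2 : R ≤ 1 / 2 := by
    refine hR.trans ?_
    rw [div_le_iff₀ (by positivity)]
    nlinarith
  have hαp : α * ((p : ℝ) - 1) = 2 := by
    rw [hpm]; push_cast; linear_combination 2 * hαm
  have hc0 : 0 < c := by linarith
  have P := phase1 hα hα3 hp hR2 hu han h0 (by linarith) hu1 heq
  set ρ0 := α / 2 / c ^ m with hρ0
  have hρ0p : 0 < ρ0 := by positivity
  have hcρ : c ^ m * ρ0 = α / 2 := by rw [hρ0]; field_simp
  have hcρ2 : c ^ p * ρ0 ^ 2 = (α / 2) ^ 2 * c := by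
    rw [← hcρ, hpm]; ring
  have hsmall : ∀ ρ ∈ Ioo (0:ℝ) R, ρ ≤ ρ0 → c / 2 ≤ u ρ := by
    intro ρ hρ hle
    have h1 := (P ρ hρ).2.2.2
    have h2 : c ^ p * ρ ^ 2 ≤ c ^ p * ρ0 ^ 2 := by
      have := hρ.1.le
      gcongr
    rw [hcρ2] at h2
    have h3 : (α / 2) ^ 2 * c ≤ 1 * c := by
      gcongr
      nlinarith
    linarith
  have hbig : ∀ ρ ∈ Ioo (0:ℝ) R, ρ0 ≤ ρ →
      exp (α * log (α / 2)) / (6 * b) ≤ Yf α b u (log ρ) := by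
    intro ρ hρ hle
    have hm0 : ρ0 ∈ Ioo (0:ℝ) R := ⟨hρ0p, hle.trans_lt hρ.2⟩
    have hRp : 0 < R := hρ.1.trans hρ.2
    have En := energy (κ := α * (1 - α)) (T := log R) (t0 := log ρ0) (p := p) hα3
      (Y := Yf α b u) (V := Vf α b u) (A := Af α b u)
      (fun t ht => sys hα hα3 hp hαp hb hbp hR2 hu hu1 heq
        (by rw [← lt_log_iff_exp_lt hRp]; exact ht.2))
    have hE := En ⟨le_rfl, log_lt_log hρ0p hm0.2⟩
      ⟨log_le_log hρ0p hle, log_lt_log hρ.1 hρ.2⟩ (log_le_log hρ0p hle)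
    simp only at hE
    have hX0 := exp_scale (α := α) (η := α / 2) (c := c) (m := m) hαm (by positivity) hc0
    rw [← hρ0] at hX0
    set H := exp (α * log (α / 2)) with hH
    have hHp : 0 < H := exp_pos _
    have hX0p := exp_pos (α * log ρ0)
    set X0 := exp (α * log ρ0) with hX0d
    have hu0 := hsmall ρ0 hm0 le_rfl
    obtain ⟨P1, P2, P3, -⟩ := P ρ0 hm0
    have hu0p : 0 < u ρ0 := by linarith
    set Y0 := Yf α b u (log ρ0) with hY0
    set V0 := Vf α b u (log ρ0) with hV0
    have eY0 : Y0 = X0 * u ρ0 / b := by rw [hY0, Yf, exp_log hρ0p]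
    have eV0 : V0 = X0 * (α * u ρ0 + ρ0 * deriv u ρ0) / b := by
      rw [hV0, Vf, exp_log hρ0p]; ring
    have hY0p : 0 < Y0 := by rw [eY0]; positivity
    have hVsq : V0 ^ 2 ≤ α ^ 2 * Y0 ^ 2 := by
      have hs1 : ρ0 * deriv u ρ0 ≤ 0 := mul_nonpos_of_nonneg_of_nonpos hρ0p.le P2
      have hs2 : -((α / 2) ^ 2 * c) ≤ ρ0 * deriv u ρ0 := by
        rw [← hcρ2]
        have := mul_le_mul_of_nonneg_left P3 hρ0p.le
        linarith
      have hs3 : -(2 * α * u ρ0) ≤ ρ0 * deriv u ρ0 := by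
        have q1 : α * (c / 2) ≤ α * u ρ0 := mul_le_mul_of_nonneg_left hu0 hα.le
        have q2 : α * α * c ≤ α * (1/3) * c := by gcongr
        have q3 : 0 < α * c := by positivity
        linarith
      have : (α * u ρ0 + ρ0 * deriv u ρ0) ^ 2 ≤ (α * u ρ0) ^ 2 := by
        have := mul_nonneg (neg_nonneg.2 hs1) (neg_le_iff_add_nonneg.1 hs3)
        linarith
      rw [eV0, eY0]
      have e1 : (X0 * (α * u ρ0 + ρ0 * deriv u ρ0) / b) ^ 2
        = (X0 / b) ^ 2 * (α * u ρ0 + ρ0 * deriv u ρ0) ^ 2 := by ring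
      have e2 : α ^ 2 * (X0 * u ρ0 / b) ^ 2 = (X0 / b) ^ 2 * (α * u ρ0) ^ 2 := by ring
      rw [e1, e2]
      gcongr
    have hpow : α * (1 - α) * Y0 ^ (p - 1) ≤ (α / 2) ^ 2 := by
      have e0 : p - 1 = 2 * m := by omega
      have eX : X0 ^ (2 * m) = ρ0 ^ 2 := by
        rw [hX0d, ← exp_nat_mul]
        push_cast
        rw [show (2 * (m:ℝ) * (α * log ρ0)) = log ρ0 + log ρ0 by
          linear_combination 2 * log ρ0 * hαm, exp_add, exp_log hρ0p]
        ring
      rw [← hbp, eY0, div_pow, mul_pow, e0, eX, mul_div_cancel₀ _ (by positivity), ← hcρ, mul_pow]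
      have : u ρ0 ^ (2 * m) ≤ c ^ (2 * m) := pow_le_pow_left₀ hu0p.le P1 _
      calc ρ0 ^ 2 * u ρ0 ^ (2 * m) ≤ ρ0 ^ 2 * c ^ (2 * m) := by gcongr
        _ = _ := by ring
    have hY0big : H / (2 * b) ≤ Y0 := by
      rw [eY0, hX0, div_le_div_iff₀ (by positivity) hb]
      have : H / c * u ρ0 * 2 ≥ H := by
        rw [div_mul_eq_mul_div, div_mul_eq_mul_div, ge_iff_le, le_div_iff₀ hc0]
        have := mul_le_mul_of_nonneg_left hu0 hHp.le
        linarith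
      have := mul_le_mul_of_nonneg_right this hb.le
      linarith
    have hE0 : (1 - exp (2 * log ρ0)) * V0 ^ 2 / 2 + α * (1 - α) * (Y0 ^ (p + 1) / (p + 1) - Y0 ^ 2 / 2)
        ≤ -(α / 12) * Y0 ^ 2 := by
      have q1 : (1 - exp (2 * log ρ0)) * V0 ^ 2 ≤ V0 ^ 2 := by
        nlinarith [exp_pos (2 * log ρ0), sq_nonneg V0]
      have q2 : α * (1 - α) * Y0 ^ (p + 1) ≤ (α / 2) ^ 2 * Y0 ^ 2 := by
        have : p + 1 = (p - 1) + 2 := by omega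
        rw [this, pow_add, ← mul_assoc]
        gcongr
      have q3 : α * (1 - α) * Y0 ^ (p + 1) / (p + 1) ≤ (α / 2) ^ 2 * Y0 ^ 2 * (α / 2) := by
        rw [div_le_iff₀ (by positivity)]
        have : 1 ≤ α / 2 * ((p:ℝ) + 1) := by nlinarith
        calc _ ≤ (α / 2) ^ 2 * Y0 ^ 2 * 1 := by linarith
          _ ≤ (α / 2) ^ 2 * Y0 ^ 2 * (α / 2 * ((p:ℝ) + 1)) := by gcongr
          _ = _ := by ring
      have q4 : α * (1 - α) * (Y0 ^ (p + 1) / (p + 1) - Y0 ^ 2 / 2) =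
        α * (1 - α) * Y0 ^ (p + 1) / (p + 1) - α * (1 - α) * Y0 ^ 2 / 2 := by ring
      rw [q4]
      have q5 : α ^ 2 / 2 + (α / 2) ^ 2 * (α / 2) - α * (1 - α) / 2 ≤ -(α / 12) := by
        have z1 : α * α ≤ α * (1/3) := by gcongr
        have z2 : α * α * α ≤ α * (1/3) * (1/3) := by gcongr
        nlinarith
      have q6 := mul_le_mul_of_nonneg_right q5 (sq_nonneg Y0)
      linarith
    have hYp : 0 < Yf α b u (log ρ) := by
      rw [Yf, exp_log hρ.1]
      have := hu1 ρ hρ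
      positivity
    set Y1 := Yf α b u (log ρ)
    set V1 := Vf α b u (log ρ)
    have hE1 : -(α * (1 - α) * Y1 ^ 2 / 2) ≤
        (1 - exp (2 * log ρ)) * V1 ^ 2 / 2 + α * (1 - α) * (Y1 ^ (p + 1) / (p + 1) - Y1 ^ 2 / 2) := by
      have z1 : exp (2 * log ρ) ≤ 1 := by
        rw [exp_le_one_iff]
        have := log_nonpos hρ.1.le (by linarith [hρ.2])
        linarith
      have z2 : 0 ≤ (1 - exp (2 * log ρ)) * V1 ^ 2 := mul_nonneg (by linarith) (sq_nonneg _)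
      have z3 : 0 ≤ α * (1 - α) * (Y1 ^ (p + 1) / (p + 1)) :=
        mul_nonneg (mul_nonneg hα.le (by linarith)) (by positivity)
      linarith
    have hfin : α / 12 * Y0 ^ 2 ≤ α * Y1 ^ 2 / 2 := by
      have : 0 ≤ α * α * Y1 ^ 2 := by positivity
      linarith
    have hfin2 : Y0 ^ 2 ≤ 6 * Y1 ^ 2 := by
      have : α * Y0 ^ 2 ≤ α * (6 * Y1 ^ 2) := by linarith
      exact le_of_mul_le_mul_left this hα
    have hh : H / (6 * b) ≤ Y0 / 3 := by
      have : H / (6 * b) = H / (2 * b) / 3 := by field_simp; norm_num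
      rw [this]; linarith
    refine hh.trans ?_
    nlinarith
  intro ρ hρ
  refine ⟨?_, hbig ρ hρ⟩
  rcases le_total ρ ρ0 with h | h
  · have := hsmall ρ hρ h
    linarith
  · have h1 := hbig ρ hρ h
    have h2 : exp (α * log ρ) ≤ exp (α * log (α / 2)) / 7 := by
      rw [← exp_scale hαm (by positivity) (by norm_num)]
      have : log ρ ≤ log (α / 2 / 7 ^ m) := log_le_log hρ.1 (hρ.2.le.trans hR)
      gcongr
    rw [Yf, exp_log hρ.1, div_le_div_iff₀ (by positivity) hb] at h1
    have hHp := exp_pos (α * log (α / 2))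
    set H := exp (α * log (α / 2))
    have h3 : H ≤ 6 * (exp (α * log ρ) * u ρ) := by
      have : b * H ≤ b * (6 * (exp (α * log ρ) * u ρ)) := by linarith
      exact le_of_mul_le_mul_left this hb
    have hu1' := hu1 ρ hρ
    have h4 : exp (α * log ρ) * u ρ ≤ H / 7 * u ρ := by gcongr
    have : H * (7 / 6) ≤ H * u ρ := by linarith
    exact le_of_mul_le_mul_left this hHp

lemma boot {u : ℝ → ℝ} {α b c : ℝ} {p m : ℕ} (hα : 0 < α) (hα3 : α ≤ 1 / 3) (hp : 7 ≤ p)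
    (hpm : p = 2 * m + 1) (hαm : α * m = 1)
    (hb : 0 < b) (hbp : b ^ (p - 1) = α * (1 - α))
    (hu : ContinuousOn u (Icc 0 1)) (han : AnalyticAt ℝ u 0)
    (h0 : u 0 = c) (hc : 7 ≤ c)
    (heq : ∀ ρ ∈ Ioo (0 : ℝ) 1, (1 - ρ ^ 2) * deriv (deriv u) ρ
      + (2 / ρ - (2 + 2 * α) * ρ) * deriv u ρ - α * (α + 1) * u ρ + u ρ ^ p = 0)
    (hρ2 : α / 2 / 7 ^ m < 1) :
    ∀ ρ ∈ Ioo (0 : ℝ) (α / 2 / 7 ^ m), 1 < u ρ := by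
  by_contra! hcon
  obtain ⟨r, hr, hur⟩ := hcon
  have hr1 : r < 1 := hr.2.trans hρ2
  set S := Icc 0 r ∩ u ⁻¹' Iic 1 with hS
  have hSc : IsClosed S :=
    (hu.mono (Icc_subset_Icc_right hr1.le)).preimage_isClosed_of_isClosed isClosed_Icc isClosed_Iic
  have hSn : S.Nonempty := ⟨r, ⟨hr.1.le, le_rfl⟩, hur⟩
  have hSb : BddBelow S := ⟨0, fun x hx => hx.1.1⟩
  have hs := hSc.csInf_mem hSn hSb
  set s := sInf S with hsd
  have hs0 : 0 < s := by
    rcases hs.1.1.eq_or_lt with h | h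
    · have := hs.2
      rw [mem_preimage, ← h, h0, mem_Iic] at this
      linarith
    · exact h
  have hsr : s ≤ r := hs.1.2
  have hlt : ∀ ρ ∈ Ioo (0:ℝ) s, 1 < u ρ := by
    intro ρ hρ
    by_contra! hle
    have : s ≤ ρ := csInf_le hSb ⟨⟨hρ.1.le, hρ.2.le.trans hsr⟩, hle⟩
    linarith [hρ.2]
  have A := lemA hα hα3 hp hpm hαm hb hbp (hsr.trans hr.2.le) hu han h0 hc hlt
    (fun ρ hρ => heq ρ ⟨hρ.1, by linarith [hρ.2]⟩)
  have hcs : ContinuousWithinAt u (Ioo 0 s) s :=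
    (hu s ⟨hs0.le, by linarith⟩).mono (fun x hx => ⟨hx.1.le, by linarith [hx.2]⟩)
  have hcl : s ∈ closure (Ioo (0:ℝ) s) := by
    rw [closure_Ioo hs0.ne]; exact ⟨hs0.le, le_rfl⟩
  have : u s ∈ closure (Ici (7/6:ℝ)) :=
    hcs.mem_closure hcl (fun x hx => (A x hx).1)
  rw [isClosed_Ici.closure_eq, mem_Ici] at this
  have h2 : u s ≤ 1 := hs.2
  linarith

set_option maxHeartbeats 1600000 in
/-- **Lemma 2, zero-counting form.** There is `ρ₂ ∈ (0,1)` such that for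
every `N` there is `C > 0` such that every solution regular at `ρ = 0` with
`u(0) = c > C`, `u'(0) = 0` crosses the singular solution `u∞` at least `N` times
in `(0, ρ₂)`. -/
theorem many_crossings_for_large_c (p : ℕ) (hp_odd : Odd p) (hp : 7 ≤ p) :
    ∃ ρ₂ ∈ Ioo (0 : ℝ) 1, ∀ N : ℕ, ∃ C : ℝ, 0 < C ∧
      ∀ c : ℝ, C < c → ∀ u : ℝ → ℝ,
        ContinuousOn u (Icc 0 1) →
        AnalyticAt ℝ u 0 → u 0 = c → deriv u 0 = 0 →
        (∀ ρ ∈ Ioo (0 : ℝ) 1, ProfileEq p u ρ) →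
        (N : ℕ∞) ≤ {ρ ∈ Ioo (0 : ℝ) ρ₂ | u ρ = uInfty p ρ}.encard := by
  obtain ⟨m, hpm⟩ := hp_odd
  have hm : 3 ≤ m := by omega
  have hmR : (3:ℝ) ≤ m := by exact_mod_cast hm
  have hpR : (p:ℝ) = 2 * m + 1 := by rw [hpm]; push_cast; ring
  set α := alphaP p with hαd
  have hαe : α = 1 / m := by
    rw [hαd, alphaP, hpR]
    field_simp
    ring
  have hαm : α * m = 1 := by rw [hαe]; field_simp
  have hα : 0 < α := by rw [hαe]; positivity
  have hα3 : α ≤ 1 / 3 := by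
    rw [hαe]; exact one_div_le_one_div_of_le (by norm_num) hmR
  have hαp : α * ((p : ℝ) - 1) = 2 := by rw [hpR]; linear_combination 2 * hαm
  have hbase : 2 * ((p : ℝ) - 3) / ((p : ℝ) - 1) ^ 2 = α * (1 - α) := by
    rw [hpR, hαe]
    field_simp
    ring
  have hκ : 0 < α * (1 - α) := mul_pos hα (by linarith)
  set b := bInfty p with hbd
  have hb : 0 < b := by rw [hbd, bInfty, hbase]; positivity
  have hbp : b ^ (p - 1) = α * (1 - α) := by
    rw [hbd, bInfty, hbase, ← rpow_natCast, ← rpow_mul hκ.le, Nat.cast_sub (by omega),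
      Nat.cast_one, one_div_mul_cancel (by rw [hpR]; linarith), rpow_one]
  have h7 : (1:ℝ) ≤ 7 ^ m := one_le_pow₀ (by norm_num)
  have hρ2p : 0 < α / 2 / 7 ^ m := by positivity
  have hρ2h : α / 2 / 7 ^ m ≤ 1 / 2 := by
    rw [div_le_iff₀ (by positivity)]
    linarith
  refine ⟨α / 2 / 7 ^ m, ⟨hρ2p, by linarith⟩, ?_⟩
  set ym := exp (α * log (α / 2)) / (6 * b) with hym
  have hymp : 0 < ym := by positivity
  obtain ⟨τ, hτ, hwin⟩ := osc_window (p := p) hα hα3 hp hαp hymp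
  intro N
  refine ⟨7 * exp (2 * N * τ + 1), by positivity, ?_⟩
  intro c hC u hu han h0 _ hpe
  have heq : ∀ ρ ∈ Ioo (0 : ℝ) 1, (1 - ρ ^ 2) * deriv (deriv u) ρ
      + (2 / ρ - (2 + 2 * α) * ρ) * deriv u ρ - α * (α + 1) * u ρ + u ρ ^ p = 0 := hpe
  have hNτ : 0 ≤ 2 * N * τ := by positivity
  have hc7 : 7 ≤ c := by
    have := one_le_exp (x := 2 * N * τ + 1) (by linarith)
    linarith
  have hc0 : 0 < c := by linarith
  have hu1 := boot hα hα3 hp hpm hαm hb hbp hu han h0 hc7 heq (by linarith)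
  have heq2 : ∀ ρ ∈ Ioo (0 : ℝ) (α / 2 / 7 ^ m), (1 - ρ ^ 2) * deriv (deriv u) ρ
      + (2 / ρ - (2 + 2 * α) * ρ) * deriv u ρ - α * (α + 1) * u ρ + u ρ ^ p = 0 :=
    fun ρ hρ => heq ρ ⟨hρ.1, by linarith [hρ.2]⟩
  have A := lemA hα hα3 hp hpm hαm hb hbp le_rfl hu han h0 hc7 hu1 heq2
  set t0 := log (α / 2 / c ^ m) with ht0
  have hlen : t0 + 2 * N * τ + 1 < log (α / 2 / 7 ^ m) := by
    have e1 : log (α / 2 / c ^ m) = log (α / 2) - m * log c := by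
      rw [log_div (by positivity) (by positivity), log_pow]
    have e2 : log (α / 2 / 7 ^ m) = log (α / 2) - m * log 7 := by
      rw [log_div (by positivity) (by positivity), log_pow]
    rw [ht0, e1, e2]
    have h1 : log 7 + (2 * N * τ + 1) < log c := by
      rw [← log_exp (2 * N * τ + 1), ← log_mul (by norm_num) (exp_pos _).ne']
      exact log_lt_log (by positivity) hC
    nlinarith
  have W : ∀ i : Fin N, ∃ t ∈ Icc (t0 + 2 * i * τ) (t0 + 2 * i * τ + τ), Yf α b u t = 1 := by
    intro i
    apply hwin _ _ (Vf α b u) (Af α b u)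
    intro t ht
    have hi : ((i:ℕ):ℝ) + 1 ≤ N := by exact_mod_cast i.2
    have hi0 : (0:ℝ) ≤ ((i:ℕ):ℝ) := by positivity
    have hi1 : 0 ≤ 2 * ((i:ℕ):ℝ) * τ := by positivity
    have hi2 : (((i:ℕ):ℝ) + 1) * τ ≤ N * τ := by gcongr
    have htT : t < log (α / 2 / 7 ^ m) := by linarith [ht.2]
    have hte : exp t < α / 2 / 7 ^ m := by rwa [← lt_log_iff_exp_lt hρ2p]
    obtain ⟨s1, s2, s3⟩ := sys hα hα3 hp hαp hb hbp hρ2h hu hu1 heq2 hte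
    refine ⟨s1, s2, s3, ?_, ?_⟩
    · have : exp (2 * t) = exp t * exp t := by rw [← exp_add]; ring_nf
      rw [this]
      nlinarith [exp_pos t]
    · have := (A (exp t) ⟨exp_pos t, hte⟩).2 (by
        rw [← log_le_iff_le_exp (by positivity)]
        linarith [ht.1])
      rwa [log_exp] at this
  choose T hT hTY using W
  have hmem : ∀ i, exp (T i) ∈ {ρ ∈ Ioo (0 : ℝ) (α / 2 / 7 ^ m) | u ρ = uInfty p ρ} := by
    intro i
    have hi : ((i:ℕ):ℝ) + 1 ≤ N := by exact_mod_cast i.2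
    have hi2 : (((i:ℕ):ℝ) + 1) * τ ≤ N * τ := by gcongr
    have htT : T i < log (α / 2 / 7 ^ m) := by linarith [(hT i).2]
    refine ⟨⟨exp_pos _, by rwa [← lt_log_iff_exp_lt hρ2p]⟩, ?_⟩
    have h := hTY i
    rw [Yf, div_eq_one_iff_eq hb.ne'] at h
    rw [uInfty, ← hαd, ← hbd, ← h, ← exp_mul]
    have : exp (T i * -α) = (exp (α * T i))⁻¹ := by rw [← exp_neg]; ring_nf
    rw [this]
    have := exp_pos (α * T i)
    field_simp
  have hmono : StrictMono T := by
    intro i j hij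
    have hij' : ((i:ℕ):ℝ) + 1 ≤ ((j:ℕ):ℝ) := by exact_mod_cast hij
    have h2 : (((i:ℕ):ℝ) + 1) * τ ≤ ((j:ℕ):ℝ) * τ := by gcongr
    have h3 := (hT i).2
    have h4 := (hT j).1
    linarith
  have hinj : Function.Injective (fun i => exp (T i)) := exp_injective.comp hmono.injective
  have hsub : range (fun i => exp (T i)) ⊆
      {ρ ∈ Ioo (0 : ℝ) (α / 2 / 7 ^ m) | u ρ = uInfty p ρ} := by
    rintro _ ⟨i, rfl⟩
    exact hmem i
  refine le_trans ?_ (encard_le_encard hsub)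
  rw [← image_univ, hinj.encard_image, encard_univ]
  simp
end

section
/- For every integer p ≥ 7 and every real number v with v ≥ (p−5)/(p−1), one has (p−5)² < 8(p−3) · ∑_{k=1}^{p−1} v^k; equivalently, the discriminant ((p−5)/(p−1))² − (8(p−3)/(p−1)²)·(v + v² + ⋯ + v^{p−1}) is strictly negative. -/
open Set Real Filter

/-- The discriminant estimate: for `p ≥ 7` and `v ≥ (p-5)/(p-1)`,
`(p-5)² < 8(p-3) (v + v² + ⋯ + v^(p-1))`. -/
theorem discriminant_negative (p : ℕ) (hp : 7 ≤ p) (v : ℝ)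
    (hv : ((p : ℝ) - 5) / ((p : ℝ) - 1) ≤ v) :
    ((p : ℝ) - 5) ^ 2 < 8 * ((p : ℝ) - 3) * ∑ k ∈ Finset.Icc 1 (p - 1), v ^ k := by
  obtain ⟨n, rfl⟩ : ∃ n, p = n + 1 := ⟨p - 1, by omega⟩
  have hn : (6 : ℝ) ≤ n := by
    have : 6 ≤ n := by omega
    exact_mod_cast this
  have hn0 : (0 : ℝ) < n := by linarith
  simp only [Nat.add_sub_cancel]
  push_cast at hv ⊢
  have e1 : (n : ℝ) + 1 - 1 = n := by ring
  rw [e1] at hv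
  set w : ℝ := ((n : ℝ) + 1 - 5) / n with hw
  have hwn : w * n = n - 4 := by rw [hw]; field_simp; ring
  have hw0 : 0 ≤ w := by rw [hw]; apply div_nonneg <;> linarith
  have hmono : ∑ k ∈ Finset.Icc 1 n, w ^ k ≤ ∑ k ∈ Finset.Icc 1 n, v ^ k :=
    Finset.sum_le_sum fun k _ => pow_le_pow_left₀ hw0 hv k
  have hgeom : ∀ m : ℕ, (∑ k ∈ Finset.Icc 1 m, w ^ k) * (1 - w) = w * (1 - w ^ m) := by
    intro m
    induction m with
    | zero => simp
    | succ m ih =>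
      rw [Finset.sum_Icc_succ_top (by omega), add_mul, ih]
      ring
  have hpow : w ^ n ≤ 1 / 2 := by
    have h1 := Real.one_sub_div_pow_le_exp_neg (n := n) (t := 4) (by linarith)
    have h2 : 1 - 4 / (n : ℝ) = w := by rw [hw]; field_simp; ring
    rw [h2] at h1
    refine h1.trans ?_
    rw [Real.exp_neg, one_div]
    apply inv_anti₀ (by norm_num)
    have := Real.add_one_le_exp (4 : ℝ)
    linarith
  have hg := hgeom n
  set S := ∑ k ∈ Finset.Icc 1 n, w ^ k
  have hS : 4 * S = (n - 4) * (1 - w ^ n) := by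
    have : S * (n - w * n) = w * n * (1 - w ^ n) := by linear_combination (n : ℝ) * hg
    rw [hwn] at this
    linarith
  have hS2 : (n - 4) * (1 / 2) ≤ 4 * S := by
    rw [hS]
    apply mul_le_mul_of_nonneg_left <;> linarith
  have hSv : (n - 4) * (1 / 2) ≤ 4 * ∑ k ∈ Finset.Icc 1 n, v ^ k := by linarith
  nlinarith
end
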